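/- Suppose (r−1)(n−1) ≥ 2. Then the inclusion X_r(U(n))^{irr} ↪ X_r(U(n)) is a 2-connected map: it induces a bijection on path components, an isomorphism on fundamental groups at every basepoint in the irreducible locus, and a surjection on second homotopy groups at every such basepoint. -/

import Mathlib

/-!
The proof is a general position argument that avoids triangulations and slices.

*Topology.* Let `X` be the character variety, a compact metrizable space, and `Y` its irreducible
locus. Say that `Z ⊆ X` has local fillings in dimension `k` (`LF`) if every neighbourhood of any point
of `X` contains a smaller one in which maps `∂I^k → Z` extend to maps from `I^k` to the part of `Z` in
the larger one. If `X` has local fillings in dimensions at most three and `Y` in dimensions at most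
two, the inclusion of `Y` is 2-connected (`two_connected`): cutting a cube into thin slabs, and
extending first over the cutting hyperplanes and then over the slabs (`Mixed.step`), any map of `I^d`,
`d ≤ 2`, with boundary in `Y` is approximated rel boundary by a map into `Y`, and approximations are
homotopic to the original map (`LF.deform`).

*Charts.* The Cayley transform, twisted by scalars, gives continuous open maps `qc c` from the
Euclidean space `Tu n r` of tuples of skew-Hermitian matrices to `X`. Their images cover `X`, their
fibres are the orbits of simultaneous conjugation (`qc_eq`), and reducible tuples correspond to
reducible classes (`qc_mem`).

*Local fillings of `X`.* The character variety is locally contractible (`charVar_lc`): a tuple near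
`A` has a unique nearest point on the orbit of `A` (`nearest`), and the straight-line homotopy to it
descends to the quotient. Uniqueness holds because orbits are tangent to their infinitesimal
directions to second order (`tangentCond`).

*Local fillings of `Y`.* A reducible tuple commutes with a nontrivial projection, whose range is a
graph over a coordinate subspace, of dimension `a` say. With `b = n - a`, reducible tuples are thus
covered by finitely many smooth images of spaces of dimension `2ab + r(a² + b²)`
(`red_subset`), hence of codimension `2(r - 1)ab ≥ 2(r - 1)(n - 1) ≥ 4` (`par_finrank`). So the
irreducible tuples are dense, and those in a ball form a simply connected set: a loop is coned off from
a generic apex (`simplyConnected_of_bad`). In dimensions zero and one fillings are pushed down along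
the charts. In dimension two, paths in `Y` near `qc c A` are lifted piece by piece up to homotopy
(`lf2_at`), the pieces being joined along orbits: two points near `A` on the same orbit are joined
within that orbit and near `A` (`orbCond`).
-/

/-- The unitary group `U(n)` of `n × n` complex unitary matrices. -/
abbrev Un (n : ℕ) : Type := ↥(Matrix.unitaryGroup (Fin n) ℂ)

/-- The character variety `X_r(U(n))`: the quotient topological space of `U(n)^r`
by the diagonal conjugation action `g • (A₁, …, A_r) = (g A₁ g⁻¹, …, g A_r g⁻¹)`. -/
abbrev CharVarU (n r : ℕ) : Type :=
  Quotient (MulAction.orbitRel (ConjAct (Un n)) (Fin r → Un n))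

/-- A tuple `(A₁, …, A_r)` of `n × n` unitary matrices is irreducible if no subspace of `ℂⁿ`
other than `{0}` and `ℂⁿ` is invariant under all the `Aᵢ`. -/
def IsIrreducibleTupleU {n r : ℕ} (A : Fin r → Un n) : Prop :=
  ∀ p : Submodule ℂ (Fin n → ℂ),
    (∀ i, ∀ v ∈ p, (A i : Matrix (Fin n) (Fin n) ℂ).mulVec v ∈ p) → p = ⊥ ∨ p = ⊤

/-- The irreducible locus `X_r(U(n))^{irr}`: the subspace of classes of irreducible tuples. -/
def irrLocusU (n r : ℕ) : Set (CharVarU n r) :=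
  {x | ∃ A : Fin r → Un n, IsIrreducibleTupleU A ∧
    Quotient.mk (MulAction.orbitRel (ConjAct (Un n)) (Fin r → Un n)) A = x}

/-- The map induced by a continuous map on homotopy groups (for any cube-indexing type `N`). -/
noncomputable def HomotopyGroup.map {X Y : Type*} [TopologicalSpace X] [TopologicalSpace Y]
    (N : Type*) (f : C(X, Y)) (x : X) :
    HomotopyGroup N X x → HomotopyGroup N Y (f x) :=
  Quotient.map
    (fun g => (⟨f.comp g.1, fun y hy => by
        simp only [ContinuousMap.comp_apply]
        rw [g.2 y hy]⟩ : GenLoop N Y (f x)))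
    (fun _ _ hgh => hgh.map fun H => H.compContinuousMap f)

/-- The map induced by a continuous map on path components. -/
noncomputable def ZerothHomotopy.map {X Y : Type*} [TopologicalSpace X] [TopologicalSpace Y]
    (f : C(X, Y)) : ZerothHomotopy X → ZerothHomotopy Y :=
  Quotient.map f (fun _ _ h => h.elim fun p => ⟨p.map f.continuous⟩)

/-- The inclusion of the irreducible locus into the character variety, as a continuous map. -/
noncomputable def irrInclusionU (n r : ℕ) : C(↥(irrLocusU n r), CharVarU n r) :=
  ⟨Subtype.val, continuous_subtype_val⟩

namespace UCV

open Topology unitInterval Set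

/-! ### Extending maps over products of cubes -/

/-- The boundary of the cube `I^a × I^b`. -/
def bd (a b : ℕ) : Set ((Fin a → I) × (Fin b → I)) :=
  {p | p.1 ∈ Cube.boundary (Fin a) ∨ p.2 ∈ Cube.boundary (Fin b)}

/-- Controlled extension over `I^a × I^b`: for every `ε` there is `δ` such that any map of the
boundary into `Z` that is `δ`-close to `(x, y) ↦ ψ x`, for `ψ` an arbitrary map from `I^a` to `X`,
extends to a map of the whole product into `Z` that is `ε`-close to it. Note that `δ` does not depend
on `ψ`. Maps of the boundary are total functions that are continuous on `bd a b`. -/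
def Mixed {X : Type*} [MetricSpace X] (Z : Set X) (a b : ℕ) : Prop :=
  ∀ ε > 0, ∃ δ > 0, ∀ ψ : C(Fin a → I, X), ∀ g : (Fin a → I) × (Fin b → I) → X,
    ContinuousOn g (bd a b) → (∀ p ∈ bd a b, g p ∈ Z ∧ dist (g p) (ψ p.1) < δ) →
    ∃ g' : (Fin a → I) × (Fin b → I) → X, Continuous g' ∧ EqOn g' g (bd a b) ∧
      ∀ p, g' p ∈ Z ∧ dist (g' p) (ψ p.1) < ε

theorem isClosed_boundary (k : ℕ) : IsClosed (Cube.boundary (Fin k)) := by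
  have : Cube.boundary (Fin k) = ⋃ i : Fin k, {y | y i = 0 ∨ y i = 1} := by
    ext y; simp [Cube.boundary]
  rw [this]
  refine isClosed_iUnion_of_finite fun i => ?_
  exact (isClosed_eq (continuous_apply i) continuous_const).union
    (isClosed_eq (continuous_apply i) continuous_const)

theorem isClosed_bd (a b : ℕ) : IsClosed (bd a b) :=
  ((isClosed_boundary a).preimage continuous_fst).union
    ((isClosed_boundary b).preimage continuous_snd)

theorem cons_mem_boundary {a : ℕ} (t : I) (x : Fin a → I) :
    (Fin.cons t x : Fin (a + 1) → I) ∈ Cube.boundary (Fin (a + 1)) ↔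
      t = 0 ∨ t = 1 ∨ x ∈ Cube.boundary (Fin a) := by
  simp [Cube.boundary, Fin.exists_fin_succ, or_assoc]

theorem continuous_cons {T : Type*} [TopologicalSpace T] {a : ℕ} {f : T → I}
    {g : T → Fin a → I} (hf : Continuous f) (hg : Continuous g) :
    Continuous fun s => (Fin.cons (f s) (g s) : Fin (a + 1) → I) := by
  refine continuous_pi fun i => ?_
  refine Fin.cases ?_ (fun j => ?_) i
  · simpa using hf
  · simpa [Function.comp_def] using (continuous_apply j).comp hg

/-- Maps on `N + 1` slabs `I × K` that agree on consecutive ends glue to a map on `ℝ × K`, the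
`i`-th slab being placed over `[i, i + 1]`. -/
theorem glue_slabs {K X : Type*} [TopologicalSpace K] [TopologicalSpace X] (N : ℕ)
    (G : ℕ → I → K → X) (hG : ∀ i ≤ N, Continuous fun p : I × K => G i p.1 p.2)
    (hc : ∀ i < N, ∀ k, G i 1 k = G (i + 1) 0 k) :
    ∃ F : ℝ → K → X, (Continuous fun p : ℝ × K => F p.1 p.2) ∧
      ∀ i ≤ N, ∀ s : I, ∀ k, F (i + s) k = G i s k := by
  induction N with
  | zero =>
    refine ⟨fun t k => G 0 (projIcc 0 1 (zero_le_one' ℝ) t) k, ?_, ?_⟩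
    · exact (hG 0 le_rfl).comp
        (((continuous_projIcc (h := zero_le_one' ℝ)).comp continuous_fst).prodMk continuous_snd)
    · intro i hi s k
      obtain rfl : i = 0 := by omega
      simp
  | succ N ih =>
    obtain ⟨F, hF, hFe⟩ := ih (fun i hi => hG i (by omega)) (fun i hi => hc i (by omega))
    refine ⟨fun t k => if t ≤ (N + 1 : ℝ) then F t k
      else G (N + 1) (projIcc 0 1 (zero_le_one' ℝ) (t - (N + 1))) k, ?_, ?_⟩
    · refine Continuous.if_le hF ?_ continuous_fst continuous_const ?_
      · exact (hG (N + 1) le_rfl).comp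
          (((continuous_projIcc (h := zero_le_one' ℝ)).comp (continuous_fst.sub continuous_const)).prodMk continuous_snd)
      · rintro ⟨t, k⟩ (h : t = _)
        subst h
        have := hFe N le_rfl 1 k
        simp only [Icc.coe_one] at this
        simp only [sub_self, projIcc_left]
        rw [this, hc N (by omega)]
        rfl
    · intro i hi s k
      by_cases h : (i : ℝ) + s ≤ N + 1
      · simp only [h, if_true]
        rcases Nat.lt_or_ge i (N + 1) with h' | h'
        · exact hFe i (by omega) s k
        · obtain rfl : i = N + 1 := by omega
          have hs : s = 0 := by
            have := s.2.1
            apply Subtype.ext; push_cast at h ⊢; linarith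
          subst hs
          have := hFe N le_rfl 1 k
          rw [← hc N (by omega), ← this]
          congr 1; simp
      · simp only [h, if_false]
        have h' : i = N + 1 := by
          by_contra h'
          have : i ≤ N := by omega
          have : (i : ℝ) ≤ N := by exact_mod_cast this
          have := s.2.2
          apply h; linarith
        subst h'
        congr 1
        push_cast
        simp

theorem exists_slab {N : ℕ} (t : I) : ∃ i ≤ N, ∃ s : I, ((N + 1 : ℕ) : ℝ) * t = i + s := by
  rcases eq_or_lt_of_le t.2.2 with h | h
  · exact ⟨N, le_rfl, 1, by rw [h]; push_cast; simp⟩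
  · have h0 : (0 : ℝ) ≤ ((N + 1 : ℕ) : ℝ) * t := mul_nonneg (by positivity) t.2.1
    refine ⟨⌊((N + 1 : ℕ) : ℝ) * t⌋₊, ?_, ⟨_ - ⌊((N + 1 : ℕ) : ℝ) * t⌋₊,
      sub_nonneg.2 (Nat.floor_le h0), ?_⟩, ?_⟩
    rotate_left
    · have := (Nat.lt_floor_add_one (((N + 1 : ℕ) : ℝ) * t)).le
      linarith
    · simp
    · rw [← Nat.lt_succ_iff, Nat.floor_lt h0]
      have : (0 : ℝ) < ((N + 1 : ℕ) : ℝ) := by positivity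
      simpa using mul_lt_mul_of_pos_left h this

/-- The first coordinate is cut into slabs on which `ψ` is nearly constant in that coordinate. `h1`
extends the map over the cutting hyperplanes, and `h2` over the slabs: there the first coordinate
joins the factor on which the reference map does not depend. -/
theorem Mixed.step {X : Type*} [MetricSpace X] {Z : Set X} {a b : ℕ}
    (h1 : Mixed Z a b) (h2 : Mixed Z a (b + 1)) : Mixed Z (a + 1) b := by
  intro ε hε
  obtain ⟨δ1, hδ1, H1⟩ := h2 (ε / 2) (by positivity)
  obtain ⟨δ2, hδ2, H2⟩ := h1 (δ1 / 2) (by positivity)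
  refine ⟨min (δ1 / 2) δ2, by positivity, ?_⟩
  intro ψ g hg hgZ
  -- the number of slabs comes from uniform continuity of `ψ`
  obtain ⟨η, hη, Hη⟩ := Metric.uniformContinuous_iff.1
    (CompactSpace.uniformContinuous_of_continuous ψ.continuous) (min (δ1 / 2) (ε / 2))
    (by positivity)
  obtain ⟨N, hN⟩ := exists_nat_one_div_lt hη
  have hN0 : (0 : ℝ) < ((N + 1 : ℕ) : ℝ) := by positivity
  set τ : ℕ → I := fun i => projIcc 0 1 (zero_le_one' ℝ) (i / ((N + 1 : ℕ) : ℝ)) with hτ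
  have τ0 : τ 0 = 0 := by simp [hτ]
  have τN : τ (N + 1) = 1 := by simp only [hτ]; rw [div_self hN0.ne']; simp
  -- the coordinate of a point of the `i`-th slab
  set κ : ℕ → I → I := fun i s => projIcc 0 1 (zero_le_one' ℝ) ((i + s) / ((N + 1 : ℕ) : ℝ)) with hκ
  have κc : ∀ i, Continuous (κ i) := fun i => by
    refine continuous_projIcc.comp ?_
    exact (continuous_const.add continuous_subtype_val).div_const _
  have κ0 : ∀ i, κ i 0 = τ i := by intro i; simp [hκ, hτ]
  have κ1 : ∀ i, κ i 1 = τ (i + 1) := by intro i; simp [hκ, hτ]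
  have κd : ∀ i s, dist (κ i s) (τ i) < η := by
    intro i s
    have h1 : dist (κ i s) (τ i) ≤ dist ((i + s : ℝ) / ((N + 1 : ℕ) : ℝ)) (i / ((N + 1 : ℕ) : ℝ)) := by
      have := (LipschitzWith.projIcc (zero_le_one' ℝ)).dist_le_mul
        ((i + s : ℝ) / ((N + 1 : ℕ) : ℝ)) (i / ((N + 1 : ℕ) : ℝ))
      rwa [NNReal.coe_one, one_mul] at this
    refine h1.trans_lt (lt_of_le_of_lt ?_ hN)
    rw [Real.dist_eq, ← sub_div, add_sub_cancel_left, abs_div, abs_of_pos hN0,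
      abs_of_nonneg s.2.1]
    push_cast
    gcongr
    exact s.2.2
  have hψ : ∀ i s x, dist (ψ (Fin.cons (κ i s) x)) (ψ (Fin.cons (τ i) x)) <
      min (δ1 / 2) (ε / 2) := by
    intro i s x
    apply Hη
    rw [dist_pi_lt_iff hη]
    intro j
    refine Fin.cases ?_ (fun j => ?_) j
    · simpa using κd i s
    · simpa using hη
  -- maps on the cutting hyperplanes
  have hlev : ∀ i, ∃ h : (Fin a → I) × (Fin b → I) → X, Continuous h ∧
      EqOn h (fun p => g (Fin.cons (τ i) p.1, p.2)) (bd a b) ∧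
      ((i = 0 ∨ i = N + 1) → h = fun p => g (Fin.cons (τ i) p.1, p.2)) ∧
      ∀ p, h p ∈ Z ∧ dist (h p) (ψ (Fin.cons (τ i) p.1)) < δ1 / 2 := by
    intro i
    have cc : Continuous fun p : (Fin a → I) × (Fin b → I) =>
        ((Fin.cons (τ i) p.1 : Fin (a + 1) → I), p.2) :=
      (continuous_cons continuous_const continuous_fst).prodMk continuous_snd
    by_cases hi : i = 0 ∨ i = N + 1
    · have hm : ∀ p : (Fin a → I) × (Fin b → I),
          ((Fin.cons (τ i) p.1 : Fin (a + 1) → I), p.2) ∈ bd (a + 1) b := by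
        intro p
        left
        rw [cons_mem_boundary]
        rcases hi with rfl | rfl
        · left; exact τ0
        · right; left; exact τN
      refine ⟨fun p => g (Fin.cons (τ i) p.1, p.2), ?_, fun _ _ => rfl, fun _ => rfl, fun p => ?_⟩
      · exact hg.comp_continuous cc hm
      · exact ⟨(hgZ _ (hm p)).1, (hgZ _ (hm p)).2.trans_le (min_le_left _ _)⟩
    · have hm : ∀ p ∈ bd a b,
          ((Fin.cons (τ i) p.1 : Fin (a + 1) → I), p.2) ∈ bd (a + 1) b := by
        intro p hp
        rcases hp with hp | hp
        · left
          rw [cons_mem_boundary]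
          exact Or.inr (Or.inr hp)
        · exact Or.inr hp
      obtain ⟨h, hc, he, hZ⟩ := H2 ⟨fun x => ψ (Fin.cons (τ i) x),
          ψ.continuous.comp (continuous_cons continuous_const continuous_id)⟩
        (fun p => g (Fin.cons (τ i) p.1, p.2)) (hg.comp cc.continuousOn hm)
        (fun p hp => ⟨(hgZ _ (hm p hp)).1, (hgZ _ (hm p hp)).2.trans_le (min_le_right _ _)⟩)
      exact ⟨h, hc, he, fun h' => absurd h' hi, hZ⟩
  choose h hc he hee hZ using hlev
  -- maps on the slabs
  have hslab : ∀ i, ∃ G : (Fin a → I) × (Fin (b + 1) → I) → X, Continuous G ∧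
      (∀ p s, (s = 0 → G (p.1, Fin.cons s p.2) = h i p) ∧
        (s = 1 → G (p.1, Fin.cons s p.2) = h (i + 1) p) ∧
        (p ∈ bd a b → G (p.1, Fin.cons s p.2) = g (Fin.cons (κ i s) p.1, p.2))) ∧
      ∀ p, G p ∈ Z ∧ dist (G p) (ψ (Fin.cons (τ i) p.1)) < ε / 2 := by
    intro i
    set f : (Fin a → I) × (Fin (b + 1) → I) → X := fun p =>
      if p.2 0 = 0 then h i (p.1, Fin.tail p.2) else
      if p.2 0 = 1 then h (i + 1) (p.1, Fin.tail p.2) else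
        g (Fin.cons (κ i (p.2 0)) p.1, Fin.tail p.2) with hf
    have ct : Continuous fun p : (Fin a → I) × (Fin (b + 1) → I) =>
        (p.1, (Fin.tail p.2 : Fin b → I)) :=
      continuous_fst.prodMk (continuous_pi fun j => (continuous_apply j.succ).comp continuous_snd)
    have f0 : ∀ p, p.2 0 = 0 → f p = h i (p.1, Fin.tail p.2) := fun p hp => by
      simp only [hf, hp, if_true]
    have f1 : ∀ p, p.2 0 = 1 → f p = h (i + 1) (p.1, Fin.tail p.2) := fun p hp => by
      simp [hf, hp]
    have fb : ∀ p, (p.1, (Fin.tail p.2 : Fin b → I)) ∈ bd a b →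
        f p = g (Fin.cons (κ i (p.2 0)) p.1, Fin.tail p.2) := by
      intro p hp
      simp only [hf]
      split_ifs with h0 h1
      · rw [he i hp, h0, κ0]
      · rw [he (i + 1) hp, h1, κ1]
      · rfl
    have hmem : ∀ p ∈ bd a (b + 1), p.2 0 = 0 ∨ p.2 0 = 1 ∨
        (p.1, (Fin.tail p.2 : Fin b → I)) ∈ bd a b := by
      rintro p (hp | hp)
      · exact Or.inr (Or.inr (Or.inl hp))
      · rw [← Fin.cons_self_tail p.2, cons_mem_boundary] at hp
        rcases hp with hp | hp | hp
        · exact Or.inl hp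
        · exact Or.inr (Or.inl hp)
        · exact Or.inr (Or.inr (Or.inr hp))
    have hbm : ∀ (p : (Fin a → I) × (Fin b → I)) (t : I), p ∈ bd a b →
        ((Fin.cons t p.1 : Fin (a + 1) → I), p.2) ∈ bd (a + 1) b := by
      intro p t hp
      rcases hp with hp | hp
      · left
        rw [cons_mem_boundary]
        exact Or.inr (Or.inr hp)
      · exact Or.inr hp
    have c0 : Continuous fun p : (Fin a → I) × (Fin (b + 1) → I) => p.2 0 :=
      (continuous_apply 0).comp continuous_snd
    obtain ⟨G, Gc, Ge, GZ⟩ := H1 ⟨fun x => ψ (Fin.cons (τ i) x),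
        ψ.continuous.comp (continuous_cons continuous_const continuous_id)⟩ f (by
      have h3 : IsClosed {p : (Fin a → I) × (Fin (b + 1) → I) |
          (p.1, (Fin.tail p.2 : Fin b → I)) ∈ bd a b} := (isClosed_bd a b).preimage ct
      have : ContinuousOn f ({p | p.2 0 = 0} ∪ ({p | p.2 0 = 1} ∪
          {p | (p.1, (Fin.tail p.2 : Fin b → I)) ∈ bd a b})) := by
        refine ContinuousOn.union_of_isClosed ?_ (ContinuousOn.union_of_isClosed ?_ ?_
          (isClosed_eq c0 continuous_const) h3) (isClosed_eq c0 continuous_const)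
          ((isClosed_eq c0 continuous_const).union h3)
        · exact ((hc i).comp ct).continuousOn.congr f0
        · exact ((hc (i + 1)).comp ct).continuousOn.congr f1
        · refine ContinuousOn.congr ?_ fb
          refine hg.comp (Continuous.continuousOn ?_) fun p hp => hbm _ (κ i (p.2 0)) hp
          exact (continuous_cons ((κc i).comp c0) continuous_fst).prodMk
            (continuous_snd.comp ct)
      exact this.mono hmem) (by
      intro p hp
      have hd : ∀ {y : X} {s : I}, dist y (ψ (Fin.cons (κ i s) p.1)) < δ1 / 2 →
          dist y (ψ (Fin.cons (τ i) p.1)) < δ1 := by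
        intro y s hy
        have h1 := dist_triangle y (ψ (Fin.cons (κ i s) p.1)) (ψ (Fin.cons (τ i) p.1))
        have h2 := (hψ i s p.1).trans_le (min_le_left _ _)
        linarith
      rcases hmem p hp with h' | h' | h'
      · rw [f0 p h']
        have := hZ i (p.1, Fin.tail p.2)
        exact ⟨this.1, hd (s := 0) (by rw [κ0]; exact this.2)⟩
      · rw [f1 p h']
        have := hZ (i + 1) (p.1, Fin.tail p.2)
        exact ⟨this.1, hd (s := 1) (by rw [κ1]; exact this.2)⟩
      · rw [fb p h']
        have := hgZ _ (hbm _ (κ i (p.2 0)) h')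
        exact ⟨this.1, hd (this.2.trans_le (min_le_left _ _))⟩)
    have hmem' : ∀ (p : (Fin a → I) × (Fin b → I)) (s : I), (s = 0 ∨ s = 1 ∨ p ∈ bd a b) →
        (p.1, (Fin.cons s p.2 : Fin (b + 1) → I)) ∈ bd a (b + 1) := by
      rintro p s (hs | hs | hs | hs)
      · right; rw [cons_mem_boundary]; exact Or.inl hs
      · right; rw [cons_mem_boundary]; exact Or.inr (Or.inl hs)
      · left; exact hs
      · right; rw [cons_mem_boundary]; exact Or.inr (Or.inr hs)
    refine ⟨G, Gc, fun p s => ⟨fun hs => ?_, fun hs => ?_, fun hp => ?_⟩, GZ⟩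
    · rw [Ge (hmem' p s (Or.inl hs)), f0 _ (by simpa using hs)]; simp
    · rw [Ge (hmem' p s (Or.inr (Or.inl hs))), f1 _ (by simpa using hs)]; simp
    · rw [Ge (hmem' p s (Or.inr (Or.inr hp))), fb _ (by simpa using hp)]; simp
  choose G Gc Ge GZ using hslab
  obtain ⟨F, Fc, Fe⟩ := glue_slabs N
    (fun i s (p : (Fin a → I) × (Fin b → I)) => G i (p.1, Fin.cons s p.2))
    (fun i _ => (Gc i).comp ((continuous_fst.comp continuous_snd).prodMk
      (continuous_cons continuous_fst (continuous_snd.comp continuous_snd))))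
    (fun i _ p => by rw [(Ge i p 1).2.1 rfl, (Ge (i + 1) p 0).1 rfl])
  refine ⟨fun p => F (((N + 1 : ℕ) : ℝ) * (p.1 0 : ℝ)) (Fin.tail p.1, p.2), ?_, ?_, ?_⟩
  · refine Fc.comp (Continuous.prodMk ?_ (Continuous.prodMk ?_ continuous_snd))
    · exact continuous_const.mul (continuous_subtype_val.comp
        ((continuous_apply 0).comp continuous_fst))
    · exact continuous_pi fun j => (continuous_apply j.succ).comp continuous_fst
  · rintro ⟨x, y⟩ hp
    obtain ⟨i, hi, s, hs⟩ := exists_slab (N := N) (x 0)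
    have hx : κ i s = x 0 := by
      simp only [hκ]
      rw [← hs, mul_div_cancel_left₀ _ hN0.ne']
      simp
    simp only
    rw [hs, Fe i hi]
    simp only
    have hgx : g (x, y) = g (Fin.cons (κ i s) (Fin.tail x), y) := by
      rw [hx, Fin.cons_self_tail]
    rw [hgx]
    by_cases hb : (Fin.tail x, y) ∈ bd a b
    · exact ((Ge i (Fin.tail x, y) s).2.2 hb)
    · have : x 0 = 0 ∨ x 0 = 1 := by
        rcases hp with hp | hp
        · rw [← Fin.cons_self_tail x, cons_mem_boundary] at hp
          rcases hp with hp | hp | hp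
          · exact Or.inl hp
          · exact Or.inr hp
          · exact absurd (Or.inl hp) hb
        · exact absurd (Or.inr hp) hb
      rcases this with h0 | h0
      · have h2 : (i : ℝ) + s = 0 := by rw [← hs, h0]; simp
        have hi0 : i = 0 := by
          have := s.2.1
          have : (i : ℝ) ≤ 0 := by linarith
          exact_mod_cast le_antisymm this (by positivity)
        have hs0 : s = 0 := by
          apply Subtype.ext
          rw [hi0] at h2; simpa using h2
        rw [(Ge i (Fin.tail x, y) s).1 hs0, hee i (Or.inl hi0), hs0, κ0]
      · have h2 : (i : ℝ) + s = N + 1 := by rw [← hs, h0]; simp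
        have hiN : i = N := by
          have := s.2.2
          have h3 : (N : ℝ) ≤ i := by linarith
          exact le_antisymm hi (by exact_mod_cast h3)
        have hs1 : s = 1 := by
          apply Subtype.ext
          rw [hiN] at h2; simpa using h2
        rw [(Ge i (Fin.tail x, y) s).2.1 hs1, hee (i + 1) (Or.inr (by rw [hiN])), hs1, κ1]
  · rintro ⟨x, y⟩
    obtain ⟨i, hi, s, hs⟩ := exists_slab (N := N) (x 0)
    have hx : κ i s = x 0 := by
      simp only [hκ]
      rw [← hs, mul_div_cancel_left₀ _ hN0.ne']
      simp
    simp only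
    rw [hs, Fe i hi]
    refine ⟨(GZ i _).1, ?_⟩
    have h1 := (GZ i (Fin.tail x, Fin.cons s y)).2
    have h2 := (hψ i s (Fin.tail x)).trans_le (min_le_right _ _)
    rw [hx, Fin.cons_self_tail] at h2
    have h3 := dist_triangle_right (G i (Fin.tail x, Fin.cons s y)) (ψ x)
      (ψ (Fin.cons (τ i) (Fin.tail x)))
    linarith

theorem Mixed.all {X : Type*} [MetricSpace X] {Z : Set X} (m : ℕ)
    (h : ∀ b ≤ m, Mixed Z 0 b) : ∀ a b, a + b ≤ m → Mixed Z a b := by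
  intro a
  induction a with
  | zero => intro b hb; exact h b (by omega)
  | succ a ih => intro b hb; exact (ih b (by omega)).step (ih (b + 1) (by omega))

/-! ### Local filling and 2-connectedness -/

/-- `Z` has local fillings in dimension `k`: every neighbourhood `V` of any point of `X` contains
a neighbourhood `U` such that maps of `∂I^k` into `U ∩ Z` extend to maps of `I^k` into `V ∩ Z`. The
point itself need not lie in `Z`. For `k = 0` this says that `Z` is dense. -/
def LF {X : Type*} [TopologicalSpace X] (Z : Set X) (k : ℕ) : Prop :=
  ∀ x : X, ∀ V ∈ 𝓝 x, ∃ U ∈ 𝓝 x, ∀ g : (Fin k → I) → X,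
    ContinuousOn g (Cube.boundary (Fin k)) → MapsTo g (Cube.boundary (Fin k)) (U ∩ Z) →
    ∃ g' : (Fin k → I) → X, Continuous g' ∧ EqOn g' g (Cube.boundary (Fin k)) ∧
      ∀ p, g' p ∈ V ∩ Z

/-- By compactness local fillings are uniform: `δ` is a Lebesgue number of the cover by the sets `U`. -/
theorem LF.mixed {X : Type*} [MetricSpace X] [CompactSpace X] {Z : Set X} {k : ℕ}
    (h : LF Z k) : Mixed Z 0 k := by
  intro ε hε
  choose U hU HU using fun x => h x (Metric.ball x (ε / 2)) (Metric.ball_mem_nhds x (by positivity))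
  obtain ⟨δ, hδ, H⟩ := lebesgue_number_lemma_of_metric (c := fun x => interior (U x) ∩ Metric.ball x (ε / 2))
    (isCompact_univ (X := X)) (fun x => isOpen_interior.inter Metric.isOpen_ball)
    (fun x _ => mem_iUnion.2 ⟨x, mem_interior_iff_mem_nhds.2 (hU x),
      Metric.mem_ball_self (by positivity)⟩)
  refine ⟨δ, hδ, fun ψ g hg hgZ => ?_⟩
  obtain ⟨i, hi⟩ := H (ψ default) (mem_univ _)
  have hm : ∀ y ∈ Cube.boundary (Fin k), ((default : Fin 0 → I), y) ∈ bd 0 k := fun y hy => Or.inr hy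
  obtain ⟨g', gc, ge, gV⟩ := HU i (fun y => g (default, y))
    (hg.comp (Continuous.prodMk continuous_const continuous_id).continuousOn hm)
    (fun y hy => ⟨interior_subset (hi (hgZ _ (hm y hy)).2).1, (hgZ _ (hm y hy)).1⟩)
  refine ⟨fun p => g' p.2, gc.comp continuous_snd, ?_, ?_⟩
  · rintro ⟨x, y⟩ hp
    obtain rfl : x = default := Subsingleton.elim _ _
    refine ge ?_
    rcases hp with ⟨j, _⟩ | hp
    · exact j.elim0
    · exact hp
  · rintro ⟨x, y⟩
    obtain rfl : x = default := Subsingleton.elim _ _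
    refine ⟨(gV y).2, ?_⟩
    have h1 := (gV y).1
    have h2 := (hi (Metric.mem_ball_self hδ)).2
    have := dist_triangle_right (g' y) (ψ default) i
    rw [Metric.mem_ball] at h1 h2
    simp only
    linarith

/-- The map `f` is replaced by a nearby map into `Y` with the same boundary values. Nearby maps
are homotopic because `X` has local fillings in one dimension more. -/
theorem LF.deform {X : Type*} [MetricSpace X] [CompactSpace X] {Y : Set X} {d : ℕ}
    (hX : ∀ k ≤ d + 1, LF (univ : Set X) k) (hY : ∀ k ≤ d, LF Y k)
    (f : C(Fin d → I, X)) (hf : ∀ x ∈ Cube.boundary (Fin d), f x ∈ Y) :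
    ∃ f' : C(Fin d → I, X), (∀ x, f' x ∈ Y) ∧
      f.HomotopicRel f' (Cube.boundary (Fin d)) := by
  obtain ⟨δ, hδ, H1⟩ := Mixed.all (Z := (univ : Set X)) (d + 1) (fun b hb => (hX b hb).mixed)
    (d + 1) 0 le_rfl 1 one_pos
  obtain ⟨δ', hδ', H2⟩ := Mixed.all (Z := Y) d (fun b hb => (hY b hb).mixed) d 0 le_rfl δ hδ
  have hb0 : ∀ {a : ℕ} {p : (Fin a → I) × (Fin 0 → I)}, p ∈ bd a 0 → p.1 ∈ Cube.boundary (Fin a) := by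
    rintro a p (h | ⟨j, _⟩)
    · exact h
    · exact j.elim0
  obtain ⟨g, gc, ge, gY⟩ := H2 f (fun p => f p.1) (f.continuous.comp continuous_fst).continuousOn
    (fun p hp => ⟨hf _ (hb0 hp), by simpa using hδ'⟩)
  let f' : C(Fin d → I, X) := ⟨fun x => g (x, default), gc.comp (by fun_prop)⟩
  have f'e : ∀ x ∈ Cube.boundary (Fin d), f' x = f x := fun x hx =>
    ge (show (x, default) ∈ bd d 0 from Or.inl hx)
  refine ⟨f', fun x => (gY _).1, ?_⟩
  have ct : Continuous fun x : Fin (d + 1) → I => (Fin.tail x : Fin d → I) :=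
    continuous_pi fun j => continuous_apply j.succ
  let G : (Fin (d + 1) → I) × (Fin 0 → I) → X := fun p =>
    if p.1 0 = 1 then f' (Fin.tail p.1) else f (Fin.tail p.1)
  have G1 : ∀ p, p.1 0 = 1 → G p = f' (Fin.tail p.1) := fun p hp => by simp [G, hp]
  have G0 : ∀ p, (p.1 0 = 0 ∨ (Fin.tail p.1 : Fin d → I) ∈ Cube.boundary (Fin d)) →
      G p = f (Fin.tail p.1) := by
    rintro p (hp | hp)
    · simp [G, hp]
    · simp only [G]
      split_ifs
      · exact f'e _ hp
      · rfl
  have hmem : ∀ p ∈ bd (d + 1) 0, p.1 0 = 1 ∨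
      (p.1 0 = 0 ∨ (Fin.tail p.1 : Fin d → I) ∈ Cube.boundary (Fin d)) := by
    intro p hp
    have := hb0 hp
    rw [← Fin.cons_self_tail p.1, cons_mem_boundary] at this
    tauto
  obtain ⟨K, Kc, Ke, -⟩ := H1 ⟨fun x => f (Fin.tail x), f.continuous.comp ct⟩ G (by
      refine ContinuousOn.mono ?_ hmem
      have c0 : Continuous fun p : (Fin (d + 1) → I) × (Fin 0 → I) => p.1 0 :=
        (continuous_apply 0).comp continuous_fst
      refine ContinuousOn.union_of_isClosed ?_ ?_ (isClosed_eq c0 continuous_const)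
        ((isClosed_eq c0 continuous_const).union
          ((isClosed_boundary d).preimage (ct.comp continuous_fst)))
      · exact (f'.continuous.comp (ct.comp continuous_fst)).continuousOn.congr G1
      · exact (f.continuous.comp (ct.comp continuous_fst)).continuousOn.congr G0)
    (by
      intro p hp
      refine ⟨mem_univ _, ?_⟩
      rcases hmem p hp with h | h
      · rw [G1 p h]; exact (gY (Fin.tail p.1, default)).2
      · rw [G0 p h]; simpa using hδ)
  have hb : ∀ (t : I) (x : Fin d → I), (t = 0 ∨ t = 1 ∨ x ∈ Cube.boundary (Fin d)) →
      ((Fin.cons t x : Fin (d + 1) → I), (default : Fin 0 → I)) ∈ bd (d + 1) 0 := fun t x h =>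
    Or.inl ((cons_mem_boundary t x).2 h)
  refine ⟨⟨⟨⟨fun p => K (Fin.cons p.1 p.2, default), Kc.comp (Continuous.prodMk
    (continuous_cons continuous_fst continuous_snd) continuous_const)⟩, ?_, ?_⟩, ?_⟩⟩
  · intro x
    exact (Ke (hb 0 x (Or.inl rfl))).trans ((G0 _ (Or.inl (by simp))).trans (by simp))
  · intro x
    exact (Ke (hb 1 x (Or.inr (Or.inl rfl)))).trans ((G1 _ (by simp)).trans (by simp))
  · intro t x hx
    exact (Ke (hb t x (Or.inr (Or.inr hx)))).trans
      ((G0 _ (Or.inr (by simpa using hx))).trans (by simp))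

theorem deform_pi_surj {X : Type*} [TopologicalSpace X] {Y : Set X} {d : ℕ}
    (H : ∀ f : C(Fin d → I, X), (∀ x ∈ Cube.boundary (Fin d), f x ∈ Y) →
      ∃ f' : C(Fin d → I, X), (∀ x, f' x ∈ Y) ∧ f.HomotopicRel f' (Cube.boundary (Fin d)))
    (a : Y) : Function.Surjective
      (HomotopyGroup.map (Fin d) (⟨Subtype.val, continuous_subtype_val⟩ : C(Y, X)) a) := by
  intro q
  obtain ⟨g, rfl⟩ := Quotient.exists_rep q
  obtain ⟨f', hY, hh⟩ := H g.1 (fun x hx => by rw [g.2 x hx]; exact a.2)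
  have he : ∀ x ∈ Cube.boundary (Fin d), f' x = a := by
    intro x hx
    obtain ⟨K⟩ := hh
    rw [← K.fst_eq_snd hx]
    exact g.2 x hx
  refine ⟨Quotient.mk _ ⟨⟨fun x => ⟨f' x, hY x⟩, by fun_prop⟩, fun x hx => Subtype.ext (he x hx)⟩,
    Quotient.sound ?_⟩
  exact hh.symm

/-- A homotopy in `X` between two loops in `Y` is a map of the square sending the boundary to `Y`;
deforming it rel boundary into `Y` gives a homotopy in `Y`. -/
theorem deform_pi_one_inj {X : Type*} [TopologicalSpace X] {Y : Set X}
    (H : ∀ f : C(Fin 2 → I, X), (∀ x ∈ Cube.boundary (Fin 2), f x ∈ Y) →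
      ∃ f' : C(Fin 2 → I, X), (∀ x, f' x ∈ Y) ∧ f.HomotopicRel f' (Cube.boundary (Fin 2)))
    (a : Y) : Function.Injective
      (HomotopyGroup.map (Fin 1) (⟨Subtype.val, continuous_subtype_val⟩ : C(Y, X)) a) := by
  intro p q hpq
  obtain ⟨g, rfl⟩ := Quotient.exists_rep p
  obtain ⟨h, rfl⟩ := Quotient.exists_rep q
  obtain ⟨K⟩ := Quotient.exact hpq
  have K0 : ∀ x, K (0, x) = g x := fun x => K.apply_zero x
  have K1 : ∀ x, K (1, x) = h x := fun x => K.apply_one x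
  have Kb : ∀ t, ∀ x ∈ Cube.boundary (Fin 1), K (t, x) = a := fun t x hx =>
    (K.eq_fst t hx).trans (congrArg Subtype.val (g.2 x hx))
  have hb : ∀ s : I, (s = 0 ∨ s = 1) → (fun _ : Fin 1 => s) ∈ Cube.boundary (Fin 1) :=
    fun s hs => ⟨0, hs⟩
  let f : C(Fin 2 → I, X) := ⟨fun x => K (x 0, fun _ => x 1), by fun_prop⟩
  obtain ⟨f', hY, hh⟩ := H f (by
    rintro x ⟨j, hj⟩
    fin_cases j
    · rcases hj with hj | hj
      · have : f x = g (fun _ => x 1) := by rw [← K0]; simp only [f, ContinuousMap.coe_mk]; congr 2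
        rw [this]; exact Subtype.coe_prop _
      · have : f x = h (fun _ => x 1) := by rw [← K1]; simp only [f, ContinuousMap.coe_mk]; congr 2
        rw [this]; exact Subtype.coe_prop _
    · have : f x = a := Kb _ _ (hb _ hj)
      rw [this]; exact a.2)
  have he : ∀ x ∈ Cube.boundary (Fin 2), f' x = K (x 0, fun _ => x 1) := by
    intro x hx
    obtain ⟨M⟩ := hh
    exact (M.fst_eq_snd hx).symm
  have hx1 : ∀ x : Fin 1 → I, (fun _ => x 0) = x := fun x => by
    ext i; obtain rfl : i = 0 := Subsingleton.elim _ _; rfl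
  refine Quotient.sound ⟨⟨⟨⟨fun p => ⟨f' ![p.1, p.2 0], hY _⟩, ?_⟩, ?_, ?_⟩, ?_⟩⟩
  · refine Continuous.subtype_mk (f'.continuous.comp ?_) _
    refine continuous_pi fun j => ?_
    fin_cases j
    · exact continuous_fst
    · exact (continuous_apply 0).comp continuous_snd
  · intro x
    refine Subtype.ext ?_
    refine (he _ ⟨0, Or.inl rfl⟩).trans ?_
    exact (congrArg (fun y => K (0, y)) (hx1 x)).trans (K0 x)
  · intro x
    refine Subtype.ext ?_
    refine (he _ ⟨0, Or.inr rfl⟩).trans ?_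
    exact (congrArg (fun y => K (1, y)) (hx1 x)).trans (K1 x)
  · intro t x hx
    refine Subtype.ext ?_
    have hx0 : x 0 = 0 ∨ x 0 = 1 := by
      obtain ⟨j, hj⟩ := hx
      obtain rfl : j = 0 := Subsingleton.elim _ _
      exact hj
    refine (he _ ⟨1, hx0⟩).trans ?_
    refine (Kb _ _ (hb _ hx0)).trans ?_
    exact (congrArg Subtype.val (g.2 x hx)).symm

theorem two_connected {X : Type*} [TopologicalSpace X] [CompactSpace X] [T2Space X]
    [SecondCountableTopology X] {Y : Set X}
    (hX : ∀ k ≤ 3, LF (univ : Set X) k) (hY : ∀ k ≤ 2, LF Y k) :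
    Function.Bijective (ZerothHomotopy.map (⟨Subtype.val, continuous_subtype_val⟩ : C(Y, X))) ∧
    (∀ a : Y, Function.Bijective (HomotopyGroup.map (Fin 1)
      (⟨Subtype.val, continuous_subtype_val⟩ : C(Y, X)) a)) ∧
    (∀ a : Y, Function.Surjective (HomotopyGroup.map (Fin 2)
      (⟨Subtype.val, continuous_subtype_val⟩ : C(Y, X)) a)) := by
  letI := TopologicalSpace.metrizableSpaceMetric X
  have D1 : ∀ f : C(Fin 1 → I, X), _ := LF.deform (d := 1) (fun k hk => hX k (by omega))
    (fun k hk => hY k (by omega))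
  have D2 : ∀ f : C(Fin 2 → I, X), _ := LF.deform (d := 2) (fun k hk => hX k (by omega))
    (fun k hk => hY k (by omega))
  refine ⟨⟨?_, ?_⟩, fun a => ⟨deform_pi_one_inj D2 a, deform_pi_surj D1 a⟩,
    fun a => deform_pi_surj D2 a⟩
  · intro p q hpq
    obtain ⟨x, rfl⟩ := Quotient.exists_rep p
    obtain ⟨y, rfl⟩ := Quotient.exists_rep q
    obtain ⟨γ⟩ : Joined (x : X) (y : X) := Quotient.exact hpq
    obtain ⟨f', hf, ⟨M⟩⟩ := D1 ⟨fun s => γ (s 0), by fun_prop⟩ (by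
      rintro s ⟨j, hj⟩
      obtain rfl : j = 0 := Subsingleton.elim _ _
      rcases hj with hj | hj <;> simp [hj])
    have he : ∀ t : I, (t = 0 ∨ t = 1) → f' (fun _ => t) = γ t := fun t ht =>
      (M.fst_eq_snd (x := fun _ => t) ⟨0, ht⟩).symm
    refine Quotient.sound ⟨⟨⟨fun t => ⟨f' (fun _ => t), hf _⟩, by fun_prop⟩, ?_, ?_⟩⟩
    · exact Subtype.ext ((he 0 (Or.inl rfl)).trans γ.source)
    · exact Subtype.ext ((he 1 (Or.inr rfl)).trans γ.target)
  · intro q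
    obtain ⟨x, rfl⟩ := Quotient.exists_rep q
    obtain ⟨U, hU, HU⟩ := hX 1 (by norm_num) x univ Filter.univ_mem
    obtain ⟨U', hU', HU'⟩ := hY 0 (by norm_num) x U hU
    obtain ⟨g, -, -, gU⟩ := HU' (fun _ => x) continuousOn_const (by rintro y ⟨j, _⟩; exact j.elim0)
    obtain ⟨y, hyU, hyY⟩ : ∃ y, y ∈ U ∧ y ∈ Y := ⟨g default, gU default⟩
    obtain ⟨G, Gc, Ge, -⟩ := HU (fun t => if t 0 = 0 then y else x) (by
        have h0 : IsClosed {t : Fin 1 → I | t 0 = 0} := isClosed_eq (by fun_prop) continuous_const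
        have h1 : IsClosed {t : Fin 1 → I | t 0 = 1} := isClosed_eq (by fun_prop) continuous_const
        refine ContinuousOn.mono (s := {t | t 0 = 0} ∪ {t | t 0 = 1})
          (ContinuousOn.union_of_isClosed ?_ ?_ h0 h1) ?_
        · exact continuousOn_const.congr fun t (ht : t 0 = 0) => if_pos ht
        · exact continuousOn_const.congr fun t (ht : t 0 = 1) => if_neg (by simp [ht])
        · rintro t ⟨j, hj⟩
          obtain rfl : j = 0 := Subsingleton.elim _ _
          exact hj)
      (by
        intro t _
        refine ⟨?_, mem_univ _⟩
        simp only
        split_ifs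
        · exact hyU
        · exact mem_of_mem_nhds hU)
    refine ⟨Quotient.mk _ ⟨y, hyY⟩, Quotient.sound ⟨⟨⟨fun t => G (fun _ => t), by fun_prop⟩, ?_, ?_⟩⟩⟩
    · exact (Ge ⟨0, Or.inl rfl⟩).trans (if_pos rfl)
    · exact (Ge ⟨0, Or.inr rfl⟩).trans (if_neg (by simp))

/-! ### Local contractibility, and local fillings in dimension two -/

/-- Local contractibility: every neighbourhood `V` of a point `x` contains a neighbourhood that can
be deformed inside `V` to `x`. The deformation is a total function, of which only the values at times
in `[0, 1]` matter. -/
def LC (X : Type*) [TopologicalSpace X] : Prop :=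
  ∀ x : X, ∀ V ∈ 𝓝 x, ∃ U ∈ 𝓝 x, ∃ c : X × ℝ → X, ContinuousOn c (U ×ˢ Icc 0 1) ∧
    ∀ u ∈ U, c (u, 0) = u ∧ c (u, 1) = x ∧ ∀ t ∈ Icc (0 : ℝ) 1, c (u, t) ∈ V

/-- The map on `∂I^k` is extended radially over the cube, contracting it to a point towards the
centre. -/
theorem LC.lf {X : Type*} [TopologicalSpace X] (h : LC X) (k : ℕ) : LF (univ : Set X) k := by
  intro x V hV
  obtain ⟨U, hU, c, hc, H⟩ := h x V hV
  refine ⟨U, hU, fun g hg hgU => ?_⟩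
  let ρ : (Fin k → I) → ℝ := fun p => 2 * ‖fun i => (p i : ℝ) - 1 / 2‖
  have hρc : Continuous ρ := by fun_prop
  have hpi : ∀ p i, 2 * |(p i : ℝ) - 1 / 2| ≤ ρ p := fun p i =>
    mul_le_mul_of_nonneg_left (norm_le_pi_norm (fun i => (p i : ℝ) - 1 / 2) i) two_pos.le
  have hρ1 : ∀ p, ρ p ≤ 1 := fun p => by
    have : ‖fun i => (p i : ℝ) - 1 / 2‖ ≤ 1 / 2 := by
      refine (pi_norm_le_iff_of_nonneg (by norm_num)).2 fun i => ?_
      rw [Real.norm_eq_abs, abs_le]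
      constructor <;> linarith [(p i).2.1, (p i).2.2]
    simp only [ρ]; linarith
  have hex : ∀ p, 1 / 2 ≤ ρ p → ∃ i, 2 * |(p i : ℝ) - 1 / 2| = ρ p := by
    intro p hp
    by_contra! hne
    have : ‖fun i => (p i : ℝ) - 1 / 2‖ < ρ p / 2 := by
      refine (pi_norm_lt_iff (by linarith)).2 fun i => ?_
      have := lt_of_le_of_ne (hpi p i) (hne i)
      rw [Real.norm_eq_abs]; linarith
    simp only [ρ] at this; linarith
  let r : (Fin k → I) → Fin k → I := fun p i =>
    projIcc 0 1 zero_le_one (1 / 2 + ((p i : ℝ) - 1 / 2) / max (ρ p) (1 / 2))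
  have hrc : Continuous r := by
    refine continuous_pi fun i => continuous_projIcc.comp ?_
    refine continuous_const.add (Continuous.div (by fun_prop) (by fun_prop) fun p => ?_)
    have := le_max_right (ρ p) (1 / 2)
    linarith
  have hrb : ∀ p, 1 / 2 ≤ ρ p → r p ∈ Cube.boundary (Fin k) := by
    intro p hp
    obtain ⟨i, hi⟩ := hex p hp
    refine ⟨i, ?_⟩
    simp only [r, max_eq_left hp]
    rcases abs_cases ((p i : ℝ) - 1 / 2) with ⟨h1, _⟩ | ⟨h1, _⟩
    · right
      have : ((p i : ℝ) - 1 / 2) / ρ p = 1 / 2 := by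
        rw [div_eq_iff (by linarith)]; linarith
      rw [this]; norm_num
    · left
      have : ((p i : ℝ) - 1 / 2) / ρ p = - (1 / 2) := by
        rw [div_eq_iff (by linarith)]; linarith
      rw [this]; norm_num
  have hr1 : ∀ p ∈ Cube.boundary (Fin k), ρ p = 1 ∧ r p = p := by
    rintro p ⟨i, hi⟩
    have h1 : ρ p = 1 := by
      refine le_antisymm (hρ1 p) ((le_of_eq ?_).trans (hpi p i))
      rcases hi with hi | hi <;> rw [hi] <;> norm_num
    refine ⟨h1, ?_⟩
    funext j
    simp only [r, h1]
    rw [max_eq_left (by norm_num), div_one, add_sub_cancel, projIcc_val]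
  let g' : (Fin k → I) → X := fun p =>
    if ρ p ≤ 1 / 2 then x else c (g (r p), 2 - 2 * ρ p)
  have hg' : Continuous g' := by
    refine continuous_if_le hρc continuous_const continuousOn_const ?_ ?_
    · refine hc.comp (ContinuousOn.prodMk (hg.comp hrc.continuousOn fun p hp => hrb p hp)
        (by fun_prop)) fun p hp => ⟨(hgU (hrb p hp)).1, ?_⟩
      have := hρ1 p
      have hp : 1 / 2 ≤ ρ p := hp
      constructor <;> simp only <;> linarith
    · intro p hp
      rw [show 2 - 2 * ρ p = 1 by rw [hp]; norm_num]
      exact (H _ (hgU (hrb p hp.ge)).1).2.1.symm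
  refine ⟨g', hg', ?_, fun p => ⟨?_, mem_univ _⟩⟩
  · intro p hp
    obtain ⟨h1, h2⟩ := hr1 p hp
    simp only [g', h1, h2]
    norm_num
    exact (H _ (hgU hp).1).1
  · simp only [g']
    split_ifs with hp
    · exact mem_of_mem_nhds hV
    · have := hρ1 p
      push Not at hp
      exact (H _ (hgU (hrb p hp.le)).1).2.2 _ ⟨by linarith, by linarith⟩

/-- The paths `p` and `q` are homotopic inside `W`, the endpoints being those of `p` throughout. -/
def HIn {X : Type*} [TopologicalSpace X] (W : Set X) (p q : I → X) : Prop :=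
  ∃ F : I × I → X, Continuous F ∧ (∀ t, F (0, t) = p t) ∧ (∀ t, F (1, t) = q t) ∧
    (∀ s, F (s, 0) = p 0) ∧ (∀ s, F (s, 1) = p 1) ∧ ∀ z, F z ∈ W

/-- The two paths are put on opposite sides of a square, the other two sides being constant. -/
theorem LF.hin {X : Type*} [TopologicalSpace X] (h : LF (univ : Set X) 2) (x : X) (V : Set X)
    (hV : V ∈ 𝓝 x) : ∃ U ∈ 𝓝 x, ∀ p q : I → X, Continuous p → Continuous q → p 0 = q 0 →
      p 1 = q 1 → (∀ t, p t ∈ U) → (∀ t, q t ∈ U) → HIn V p q := by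
  obtain ⟨U, hU, H⟩ := h x V hV
  refine ⟨U, hU, fun p q hp hq h0 h1 hpU hqU => ?_⟩
  let G : (Fin 2 → I) → X := fun z => if (z 0 : ℝ) ≤ 1 / 2 then p (z 1) else q (z 1)
  have c1 : ContinuousOn G (Cube.boundary (Fin 2)) := by
    rw [continuousOn_iff_continuous_domRestrict]
    refine Continuous.if_le ?_ ?_ ?_ continuous_const ?_
    · exact hp.comp ((continuous_apply 1).comp continuous_subtype_val)
    · exact hq.comp ((continuous_apply 1).comp continuous_subtype_val)
    · exact continuous_subtype_val.comp ((continuous_apply 0).comp continuous_subtype_val)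
    · rintro ⟨z, i, hi⟩ hz
      fin_cases i
      · rcases hi with hi | hi <;> simp at hi <;> simp [hi] at hz
      · rcases hi with hi | hi <;> simp at hi <;> simp [hi, h0, h1]
  have c2 : MapsTo G (Cube.boundary (Fin 2)) (U ∩ univ) := by
    intro z _
    refine ⟨?_, mem_univ _⟩
    simp only [G]
    split_ifs
    exacts [hpU _, hqU _]
  obtain ⟨g', hg', he, hV⟩ := H G c1 c2
  refine ⟨fun z => g' ![z.1, z.2], hg'.comp ?_, ?_, ?_, ?_, ?_, fun z => (hV _).1⟩
  · refine continuous_pi fun i => ?_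
    fin_cases i <;> simp <;> fun_prop
  · intro t
    refine (he ⟨0, by simp⟩).trans (by simp [G])
  · intro t
    refine (he ⟨0, by simp⟩).trans (by simp [G]; norm_num)
  · intro t
    refine (he ⟨1, by simp⟩).trans (by simp [G, h0])
  · intro t
    refine (he ⟨1, by simp⟩).trans (by simp [G, h1])

/-- A map of `∂I²` is a pair of paths `br` (bottom, then right) and `lt` (left, then top) from one
corner to the opposite one. The square is the quotient by `m` of a square in which two opposite sides
are collapsed to these corners, and a homotopy between the two paths descends to a filling. -/
theorem LF.of_hin {X : Type*} [TopologicalSpace X] {Y : Set X}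
    (h : ∀ x, ∀ V ∈ 𝓝 x, ∃ U ∈ 𝓝 x, ∀ p q : I → X, Continuous p → Continuous q → p 0 = q 0 →
      p 1 = q 1 → (∀ t, p t ∈ U ∩ Y) → (∀ t, q t ∈ U ∩ Y) → HIn (V ∩ Y) p q) : LF Y 2 := by
  intro x V hV
  obtain ⟨U, hU, H⟩ := h x V hV
  refine ⟨U, hU, fun g hg hgU => ?_⟩
  let P : ℝ → I := projIcc 0 1 zero_le_one
  have hP : Continuous P := continuous_projIcc
  have P0 : ∀ t : ℝ, t ≤ 0 → P t = 0 := fun t ht => projIcc_of_le_left _ ht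
  have P1 : ∀ t : ℝ, 1 ≤ t → P t = 1 := fun t ht => projIcc_of_right_le _ ht
  have Pv : ∀ t : ℝ, 0 ≤ t → t ≤ 1 → (P t : ℝ) = t := fun t h0 h1 => by
    simp [P, projIcc_of_mem _ (show t ∈ Icc (0 : ℝ) 1 from ⟨h0, h1⟩)]
  let br : I → Fin 2 → I := fun t => ![P (2 * t), P (2 * t - 1)]
  let lt : I → Fin 2 → I := fun t => ![P (2 * t - 1), P (2 * t)]
  have brc : Continuous br := by
    refine continuous_pi fun i => ?_
    fin_cases i <;> simp [br] <;> fun_prop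
  have ltc : Continuous lt := by
    refine continuous_pi fun i => ?_
    fin_cases i <;> simp [lt] <;> fun_prop
  have brb : ∀ t, br t ∈ Cube.boundary (Fin 2) := by
    intro t
    rcases le_total (t : ℝ) (1 / 2) with h | h
    · exact ⟨1, Or.inl (P0 _ (by linarith))⟩
    · exact ⟨0, Or.inr (P1 _ (by linarith))⟩
  have ltb : ∀ t, lt t ∈ Cube.boundary (Fin 2) := by
    intro t
    rcases le_total (t : ℝ) (1 / 2) with h | h
    · exact ⟨0, Or.inl (P0 _ (by linarith))⟩
    · exact ⟨1, Or.inr (P1 _ (by linarith))⟩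
  have e0 : br 0 = lt 0 := by
    simp only [br, lt]; rw [P0 (2 * ((0 : I) : ℝ)) (by simp), P0 (2 * ((0 : I) : ℝ) - 1) (by simp)]
  have e1 : br 1 = lt 1 := by
    simp only [br, lt]; rw [P1 (2 * ((1 : I) : ℝ)) (by simp), P1 (2 * ((1 : I) : ℝ) - 1) (by norm_num)]
  obtain ⟨F, hF, F0, F1, Fa, Fb, FV⟩ := H (fun t => g (br t)) (fun t => g (lt t))
    (hg.comp_continuous brc brb) (hg.comp_continuous ltc ltb) (by simp [e0]) (by simp [e1])
    (fun t => hgU (brb t)) (fun t => hgU (ltb t))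
  let m : I × I → Fin 2 → I := fun z =>
    ![P ((1 - z.1) * (br z.2 0) + z.1 * (lt z.2 0)), P ((1 - z.1) * (br z.2 1) + z.1 * (lt z.2 1))]
  have mc : Continuous m := by
    have : ∀ i, Continuous fun t => br t i := fun i => (continuous_apply i).comp brc
    have : ∀ i, Continuous fun t => lt t i := fun i => (continuous_apply i).comp ltc
    refine continuous_pi fun i => ?_
    fin_cases i <;> simp [m] <;> fun_prop
  -- `m` sweeps the square by segments of constant coordinate sum, from `br` to `lt`
  have mval : ∀ z : I × I, ((m z 0 : ℝ) + m z 1 = 2 * z.2) ∧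
      ((m z 0 : ℝ) - m z 1 = (1 - 2 * z.1) * min (2 * (z.2 : ℝ)) (2 - 2 * (z.2 : ℝ))) := by
    rintro ⟨s, t⟩
    have hs0 := s.2.1
    have hs1 := s.2.2
    have ht0 := t.2.1
    have ht1 := t.2.2
    rcases le_total (t : ℝ) (1 / 2) with h | h
    · have b0 : (br t 0 : ℝ) = 2 * t := Pv _ (by linarith) (by linarith)
      have b1 : (br t 1 : ℝ) = 0 := by simp [br, P0 (2 * t - 1) (by linarith)]
      have l1 : (lt t 1 : ℝ) = 2 * t := Pv _ (by linarith) (by linarith)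
      have l0 : (lt t 0 : ℝ) = 0 := by simp [lt, P0 (2 * t - 1) (by linarith)]
      have v0 : (m (s, t) 0 : ℝ) = (1 - s) * (2 * t) := by
        refine (Pv _ ?_ ?_).trans ?_ <;> simp only [b0, l0]
        · nlinarith
        · nlinarith
        · ring
      have v1 : (m (s, t) 1 : ℝ) = s * (2 * t) := by
        refine (Pv _ ?_ ?_).trans ?_ <;> simp only [b1, l1]
        · nlinarith
        · nlinarith
        · ring
      rw [v0, v1, min_eq_left (by simp only; linarith)]
      constructor <;> ring
    · have b0 : (br t 0 : ℝ) = 1 := by simp [br, P1 (2 * t) (by linarith)]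
      have b1 : (br t 1 : ℝ) = 2 * t - 1 := Pv _ (by linarith) (by linarith)
      have l1 : (lt t 1 : ℝ) = 1 := by simp [lt, P1 (2 * t) (by linarith)]
      have l0 : (lt t 0 : ℝ) = 2 * t - 1 := Pv _ (by linarith) (by linarith)
      have v0 : (m (s, t) 0 : ℝ) = (1 - s) + s * (2 * t - 1) := by
        refine (Pv _ ?_ ?_).trans ?_ <;> simp only [b0, l0]
        · nlinarith
        · nlinarith
        · ring
      have v1 : (m (s, t) 1 : ℝ) = (1 - s) * (2 * t - 1) + s := by
        refine (Pv _ ?_ ?_).trans ?_ <;> simp only [b1, l1]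
        · nlinarith
        · nlinarith
        · ring
      rw [v0, v1, min_eq_right (by simp only; linarith)]
      constructor <;> ring
  have meq : ∀ (z : I × I) (p : Fin 2 → I), (p 0 : ℝ) + p 1 = 2 * z.2 →
      (p 0 : ℝ) - p 1 = (1 - 2 * z.1) * min (2 * (z.2 : ℝ)) (2 - 2 * (z.2 : ℝ)) → m z = p := by
    intro z p h1 h2
    obtain ⟨h3, h4⟩ := mval z
    funext i
    apply Subtype.ext
    fin_cases i <;> simp <;> linarith
  have msurj : Function.Surjective m := by
    intro p
    have h00 := (p 0).2.1
    have h01 := (p 0).2.2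
    have h10 := (p 1).2.1
    have h11 := (p 1).2.2
    let t : I := ⟨((p 0 : ℝ) + p 1) / 2, by linarith, by linarith⟩
    let μ : ℝ := min (2 * (t : ℝ)) (2 - 2 * (t : ℝ))
    have ht : (2 * t : ℝ) = p 0 + p 1 := by simp only [t]; ring
    have hμ : |(p 0 : ℝ) - p 1| ≤ μ := by
      simp only [μ, ht, le_min_iff, abs_le]
      constructor <;> constructor <;> linarith
    rcases (abs_nonneg ((p 0 : ℝ) - p 1)).trans hμ |>.eq_or_lt with h0 | h0
    · refine ⟨(0, t), meq _ _ ht.symm ?_⟩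
      rw [← h0] at hμ
      rw [abs_nonpos_iff.1 hμ]
      change 0 = _ * μ
      rw [← h0]; ring
    · rw [abs_le] at hμ
      let s : I := ⟨(1 - ((p 0 : ℝ) - p 1) / μ) / 2, by
        have : ((p 0 : ℝ) - p 1) / μ ≤ 1 := (div_le_one h0).2 hμ.2
        linarith, by
        have : -1 ≤ ((p 0 : ℝ) - p 1) / μ := by rw [le_div_iff₀ h0]; linarith
        linarith⟩
      refine ⟨(s, t), meq _ _ ht.symm ?_⟩
      change _ = (1 - 2 * ((1 - ((p 0 : ℝ) - p 1) / μ) / 2)) * μ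
      field_simp
      ring
  have mq : IsQuotientMap m := (mc.isClosedMap).isQuotientMap mc msurj
  have hfib : ∀ z z', m z = m z' → F z = F z' := by
    rintro ⟨s, t⟩ ⟨s', t'⟩ he
    obtain ⟨h1, h2⟩ := mval (s, t)
    obtain ⟨h3, h4⟩ := mval (s', t')
    rw [he] at h1 h2
    have htt : t = t' := Subtype.ext (by simp only at h1 h3; linarith)
    subst htt
    by_cases ht0 : t = 0
    · rw [ht0, Fa, Fa]
    by_cases ht1 : t = 1
    · rw [ht1, Fb, Fb]
    have : s = s' := by
      have hpos : (0 : ℝ) < min (2 * (t : ℝ)) (2 - 2 * (t : ℝ)) := by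
        have := unitInterval.pos_iff_ne_zero.2 ht0
        have h5 : (0 : ℝ) < t := this
        have := unitInterval.lt_one_iff_ne_one.2 ht1
        have h6 : (t : ℝ) < 1 := this
        rw [lt_min_iff]; constructor <;> linarith
      have := mul_right_cancel₀ hpos.ne' (h2.symm.trans h4)
      exact Subtype.ext (by simp only at this; linarith)
    rw [this]
  let g' : (Fin 2 → I) → X := fun p => F (Function.surjInv msurj p)
  have hg' : ∀ z, g' (m z) = F z := fun z => hfib _ _ (Function.surjInv_eq msurj (m z))
  refine ⟨g', ?_, ?_, fun p => FV _⟩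
  · rw [mq.continuous_iff]
    exact hF.congr fun z => (hg' z).symm
  · have hbr : ∀ t, m (0, t) = br t := by
      intro t; funext i
      fin_cases i <;> simp [m] <;> exact projIcc_val _ _
    have hlt : ∀ t, m (1, t) = lt t := by
      intro t; funext i
      fin_cases i <;> simp [m] <;> exact projIcc_val _ _
    have key : ∀ p ∈ Cube.boundary (Fin 2), (∃ t, br t = p) ∨ ∃ t, lt t = p := by
      intro p hp
      have h00 := (p 0).2.1
      have h01 := (p 0).2.2
      have h10 := (p 1).2.1
      have h11 := (p 1).2.2
      have Pm : ∀ x : I, P x = x := fun x => projIcc_val _ _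
      obtain ⟨i, hi⟩ := hp
      fin_cases i <;> rcases hi with hi | hi <;> simp at hi
      · right
        refine ⟨⟨p 1 / 2, by linarith, by linarith⟩, ?_⟩
        simp only [lt]
        rw [show 2 * ((p 1 : ℝ) / 2) = p 1 by ring, Pm, P0 ((p 1 : ℝ) - 1) (by linarith)]
        funext j; fin_cases j <;> simp [hi]
      · left
        refine ⟨⟨(1 + p 1) / 2, by linarith, by linarith⟩, ?_⟩
        simp only [br]
        rw [P1 (2 * ((1 + (p 1 : ℝ)) / 2)) (by linarith), show 2 * ((1 + (p 1 : ℝ)) / 2) - 1 = p 1 by ring, Pm]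
        funext j; fin_cases j <;> simp [hi]
      · left
        refine ⟨⟨p 0 / 2, by linarith, by linarith⟩, ?_⟩
        simp only [br]
        rw [show 2 * ((p 0 : ℝ) / 2) = p 0 by ring, Pm, P0 ((p 0 : ℝ) - 1) (by linarith)]
        funext j; fin_cases j <;> simp [hi]
      · right
        refine ⟨⟨(1 + p 0) / 2, by linarith, by linarith⟩, ?_⟩
        simp only [lt]
        rw [P1 (2 * ((1 + (p 0 : ℝ)) / 2)) (by linarith), show 2 * ((1 + (p 0 : ℝ)) / 2) - 1 = p 0 by ring, Pm]
        funext j; fin_cases j <;> simp [hi]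
    intro p hp
    rcases key p hp with ⟨t, rfl⟩ | ⟨t, rfl⟩
    · rw [← hbr, hg', F0, hbr]
    · rw [← hlt, hg', F1, hlt]

/-! ### Simple connectivity of complements of small sets -/

/-- A homotopy-invariant property of paths that is stable under concatenation at points of `S` and
holds for the short paths in `S` holds for all paths in `S`. -/
theorem path_induction {Z : Type*} [TopologicalSpace Z] (S : Set Z)
    (P : ∀ {a b : Z}, Path a b → Prop)
    (hh : ∀ {a b : Z} (p q : Path a b), p.Homotopic q → P p → P q)
    (ht : ∀ {a b c : Z} (p : Path a b) (q : Path b c), b ∈ S → P p → P q → P (p.trans q))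
    (hl : ∀ z ∈ S, ∃ U ∈ 𝓝 z, ∀ {a b : Z} (p : Path a b), (∀ t, p t ∈ S) → (∀ t, p t ∈ U) → P p)
    {a b : Z} (γ : Path a b) (hγ : ∀ t, γ t ∈ S) : P γ := by
  choose! U hU HU using hl
  obtain ⟨t, t0, tm, ⟨N, hN⟩, hc⟩ := exists_monotone_Icc_subset_open_cover_unitInterval
    (c := fun i : I => γ ⁻¹' interior (U (γ i)))
    (fun i => isOpen_interior.preimage γ.continuous)
    (fun i _ => mem_iUnion.2 ⟨i, mem_interior_iff_mem_nhds.2 (hU _ (hγ i))⟩)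
  have small : ∀ n, P (γ.subpath (t n) (t (n + 1))) := by
    intro n
    obtain ⟨i, hi⟩ := hc n
    refine HU (γ i) (hγ i) _ (fun s => hγ _) fun s => ?_
    have : γ.subpath (t n) (t (n + 1)) s ∈ range (γ.subpath (t n) (t (n + 1))) := ⟨s, rfl⟩
    rw [Path.range_subpath_of_le _ _ _ (tm (Nat.le_succ n))] at this
    obtain ⟨u, hu, e⟩ := this
    rw [← e]
    exact interior_subset (hi hu)
  have key : ∀ n, P (γ.subpath (t 0) (t (n + 1))) := by
    intro n
    induction n with
    | zero => exact small 0
    | succ n ih =>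
      exact hh _ _ ⟨Path.Homotopy.subpathTransSubpath γ _ _ _⟩ (ht _ _ (hγ _) ih (small (n + 1)))
  have h := key N
  rw [t0, hN (N + 1) (Nat.le_succ N), Path.subpath_zero_one] at h
  have cast : ∀ {a' b' : Z} (ha : a' = a) (hb : b' = b), P (γ.cast ha hb) → P γ := by
    rintro _ _ rfl rfl h
    exact h
  exact cast _ _ h

theorem homotopic_of_convex {W : Type*} [AddCommGroup W] [Module ℝ W] [TopologicalSpace W]
    [ContinuousAdd W] [ContinuousSMul ℝ W] {S K : Set W} (hK : Convex ℝ K) (hKS : K ⊆ S) {a b : S}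
    (p q : Path a b) (hp : ∀ t, (p t : W) ∈ K) (hq : ∀ t, (q t : W) ∈ K) : p.Homotopic q := by
  refine ⟨⟨⟨⟨fun z => ⟨(1 - (z.1 : ℝ)) • (p z.2 : W) + (z.1 : ℝ) • (q z.2 : W),
    hKS (hK (hp _) (hq _) (by linarith [z.1.2.2]) z.1.2.1 (by ring))⟩, ?_⟩, ?_, ?_⟩, ?_⟩⟩
  · fun_prop
  · intro t; apply Subtype.ext; simp
  · intro t; apply Subtype.ext; simp
  · rintro s t (rfl | rfl) <;> apply Subtype.ext <;> simp [← add_smul]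

theorem cancel_middle {Z : Type*} [TopologicalSpace Z] {a b c d : Z} (α : Path a c) (β : Path b c)
    (δ : Path d c) : ((α.trans β.symm).trans (β.trans δ.symm)).Homotopic (α.trans δ.symm) := by
  rw [← Path.Homotopic.Quotient.eq]
  simp only [Path.Homotopic.Quotient.mk_trans, Path.Homotopic.Quotient.mk_symm,
    Path.Homotopic.Quotient.trans_assoc]
  rw [← Path.Homotopic.Quotient.trans_assoc (Path.Homotopic.Quotient.mk β).symm]
  simp

section GP

variable {W : Type*} [NormedAddCommGroup W] [NormedSpace ℝ W]

/-- Sets whose Hausdorff dimension is smaller than the dimension of the ambient space `W`. -/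
def Null (s : Set W) : Prop := dimH s < (Module.finrank ℝ W : ENNReal)

theorem Null.union {s t : Set W} (hs : Null s) (ht : Null t) : Null (s ∪ t) := by
  rw [Null, dimH_union]; exact max_lt hs ht

theorem Null.mono {s t : Set W} (hs : Null s) (h : t ⊆ s) : Null t :=
  (dimH_mono h).trans_lt hs

/-- The apexes `c` for which the triangle spanned by `c`, `u` and `v` meets `R`. -/
def Bad (R : Set W) (u v : W) : Set W :=
  {c | ∃ y ∈ segment ℝ u v, ∃ z ∈ segment ℝ c y, z ∈ R}

/-- If `z = (1 - s) y + s c` lies in `R` for some `y` on the segment `[u, v]`, then `s ≠ 0` as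
`[u, v]` misses `R`, so that `c = s⁻¹ z - (s⁻¹ - 1) y` depends smoothly on two real parameters besides
those of `R`. -/
theorem bad_null {ι : Type*} [Countable ι] [Nonempty ι] {P : ι → Type*} [∀ j, NormedAddCommGroup (P j)]
    [∀ j, NormedSpace ℝ (P j)] [∀ j, FiniteDimensional ℝ (P j)] {R : Set W}
    (F : ∀ j, P j → W) (hF : ∀ j, ContDiff ℝ 1 (F j)) (hR : R ⊆ ⋃ j, range (F j))
    (hd : ∀ j, Module.finrank ℝ (P j) + 2 < Module.finrank ℝ W) (u v : W)
    (h : ∀ y ∈ segment ℝ u v, y ∉ R) : Null (Bad R u v) := by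
  let Φ : ∀ j, (P j × ℝ × ℝ) → W := fun j w =>
    w.2.1 • F j w.1 - (w.2.1 - 1) • ((1 - w.2.2) • u + w.2.2 • v)
  have hΦ : ∀ j, ContDiff ℝ 1 (Φ j) := fun j => by
    have := (hF j).comp (contDiff_fst (𝕜 := ℝ) (E := P j) (F := ℝ × ℝ))
    have h2 : ContDiff ℝ 1 fun w : P j × ℝ × ℝ => F j w.1 := this
    fun_prop
  have hsub : Bad R u v ⊆ ⋃ j, range (Φ j) := by
    rintro c ⟨y, hy, z, ⟨s, t, hs, ht, hst, rfl⟩, hz⟩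
    obtain ⟨j, w, hw⟩ := mem_iUnion.1 (hR hz)
    have hs0 : s ≠ 0 := by
      rintro rfl
      have : t = 1 := by linarith
      subst this
      exact h y hy (by simpa using hz)
    obtain ⟨s', t', hs', ht', hst', rfl⟩ := hy
    refine mem_iUnion.2 ⟨j, (w, s⁻¹, t'), ?_⟩
    have e1 : s' = 1 - t' := by linarith
    have e2 : t = 1 - s := by linarith
    subst e1 e2
    simp only [Φ, hw]
    rw [smul_add, smul_smul, inv_mul_cancel₀ hs0, one_smul, smul_smul]
    have : s⁻¹ * (1 - s) = s⁻¹ - 1 := by field_simp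
    rw [this]; abel
  have hpos : ∀ j, (Module.finrank ℝ (P j) + 2 : ℕ) ≤ Module.finrank ℝ W - 1 := fun j => by
    have := hd j; omega
  refine (dimH_mono hsub).trans_lt ?_
  rw [dimH_iUnion]
  obtain ⟨j0⟩ := ‹Nonempty ι›
  refine lt_of_le_of_lt (b := ((Module.finrank ℝ W - 1 : ℕ) : ENNReal)) (iSup_le fun j => ?_) ?_
  · refine (hΦ j).dimH_range_le.trans ?_
    have := hpos j
    simp only [Module.finrank_prod, Module.finrank_self]
    exact_mod_cast this
  · have := hd j0
    exact_mod_cast (by omega : Module.finrank ℝ W - 1 < Module.finrank ℝ W)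

theorem dense_compl_of_range [FiniteDimensional ℝ W] {ι : Type*} [Countable ι] [Nonempty ι] {P : ι → Type*}
    [∀ j, NormedAddCommGroup (P j)]
    [∀ j, NormedSpace ℝ (P j)] [∀ j, FiniteDimensional ℝ (P j)] {R : Set W}
    (F : ∀ j, P j → W) (hF : ∀ j, ContDiff ℝ 1 (F j)) (hR : R ⊆ ⋃ j, range (F j))
    (hd : ∀ j, Module.finrank ℝ (P j) + 2 < Module.finrank ℝ W) : Dense Rᶜ := by
  have h0 : Null R := by
    refine (dimH_mono hR).trans_lt ?_
    rw [dimH_iUnion]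
    obtain ⟨j0⟩ := ‹Nonempty ι›
    refine lt_of_le_of_lt (b := ((Module.finrank ℝ W - 1 : ℕ) : ENNReal)) (iSup_le fun j => ?_) ?_
    · refine (hF j).dimH_range_le.trans ?_
      have : Module.finrank ℝ (P j) ≤ Module.finrank ℝ W - 1 := by have := hd j; omega
      exact_mod_cast this
    · have := hd j0
      exact_mod_cast (by omega : Module.finrank ℝ W - 1 < Module.finrank ℝ W)
  exact dense_compl_of_dimH_lt_finrank h0

/-- The straight path from `a` to `b`. -/
def segPath {S : Set W} (a b : S) (h : segment ℝ (a : W) b ⊆ S) : Path a b where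
  toFun t := ⟨AffineMap.lineMap (a : W) (b : W) (t : ℝ), h (by
    rw [segment_eq_image_lineMap]; exact ⟨t, t.2, rfl⟩)⟩
  continuous_toFun := by
    refine Continuous.subtype_mk ?_ _
    simp only [AffineMap.lineMap_apply]
    fun_prop
  source' := by simp
  target' := by simp

theorem segPath_mem {S : Set W} (a b : S) (h : segment ℝ (a : W) b ⊆ S) (t : I) :
    (segPath a b h t : W) ∈ segment ℝ (a : W) b := by
  rw [segment_eq_image_lineMap]; exact ⟨t, t.2, rfl⟩

/-- For all `c` outside a null set, a given path in `B \ R` is homotopic to the broken line from its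
source to its target through `c`. For two paths with the same endpoints a common `c` exists. -/
theorem simplyConnected_of_bad [FiniteDimensional ℝ W] {R B : Set W} (hB : IsOpen B) (hBc : Convex ℝ B)
    (hBn : B.Nonempty) (hR : IsClosed R) (hRd : Dense Rᶜ)
    (hbad : ∀ u v, (∀ y ∈ segment ℝ u v, y ∉ R) → Null (Bad R u v)) :
    SimplyConnectedSpace ↥(B \ R) := by
  have pick : ∀ N : Set W, Null N → ∃ c ∈ B, c ∉ N := fun N hN => by
    obtain ⟨c, hc, hcN⟩ := (dense_compl_of_dimH_lt_finrank hN).inter_open_nonempty B hB hBn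
    exact ⟨c, hc, hcN⟩
  -- a triangle with a good apex
  have tri : ∀ {u v : W}, u ∈ B → v ∈ B → ∀ c ∈ B, c ∉ Bad R u v →
      convexHull ℝ {c, u, v} ⊆ B \ R := by
    intro u v hu hv c hc hcb z hz
    refine ⟨convexHull_min ?_ hBc hz, fun hzR => hcb ?_⟩
    · rintro _ (rfl | rfl | rfl) <;> assumption
    · rw [convexHull_insert (insert_nonempty _ _), convexHull_pair] at hz
      obtain ⟨c', rfl, y, hy, hz⟩ := mem_convexJoin.1 hz
      exact ⟨y, hy, z, hz, hzR⟩
  have seg : ∀ {u v : W}, u ∈ B → v ∈ B → ∀ c ∈ B, c ∉ Bad R u v →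
      segment ℝ u c ⊆ B \ R ∧ segment ℝ v c ⊆ B \ R := by
    intro u v hu hv c hc hcb
    have := tri hu hv c hc hcb
    constructor <;>
    · refine ((convex_convexHull ℝ _).segment_subset (subset_convexHull ℝ _ ?_)
        (subset_convexHull ℝ _ ?_)).trans this <;> simp
  have selfbad : ∀ u ∉ R, Null (Bad R u u) := fun u hu => hbad u u (by
    intro y hy; rw [segment_same] at hy; rwa [hy])
  rw [simply_connected_iff_loops_nullhomotopic]
  constructor
  · refine ⟨?_, fun a b => ?_⟩
    · obtain ⟨a, ha⟩ := hBn
      obtain ⟨c, hc, hcR⟩ := hRd.inter_open_nonempty B hB ⟨a, ha⟩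
      exact ⟨⟨c, hc, hcR⟩⟩
    · obtain ⟨c, hc, hcN⟩ := pick _ ((selfbad a a.2.2).union (selfbad b b.2.2))
      have ha := (seg a.2.1 a.2.1 c hc fun h => hcN (Or.inl h)).1
      have hb := (seg b.2.1 b.2.1 c hc fun h => hcN (Or.inr h)).1
      let c' : ↥(B \ R) := ⟨c, ha (right_mem_segment ℝ _ _)⟩
      exact ⟨(segPath a c' ha).trans (segPath b c' hb).symm⟩
  · intro x γ
    let P : ∀ {a b : ↥(B \ R)}, Path a b → Prop := fun {a b} p =>
      ∃ N : Set W, Null N ∧ ∀ c : ↥(B \ R), (c : W) ∉ N →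
        ∃ (ha : segment ℝ (a : W) c ⊆ B \ R) (hb : segment ℝ (b : W) c ⊆ B \ R),
          p.Homotopic ((segPath a c ha).trans (segPath b c hb).symm)
    obtain ⟨N, hN, H⟩ : P γ := by
      refine path_induction univ P ?_ ?_ ?_ γ fun _ => mem_univ _
      · rintro a b p q hpq ⟨N, hN, H⟩
        refine ⟨N, hN, fun c hc => ?_⟩
        obtain ⟨ha, hb, h⟩ := H c hc
        exact ⟨ha, hb, hpq.symm.trans h⟩
      · rintro a b d p q - ⟨N, hN, H⟩ ⟨N', hN', H'⟩
        refine ⟨N ∪ N', hN.union hN', fun c hc => ?_⟩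
        obtain ⟨ha, hb, h⟩ := H c fun h => hc (Or.inl h)
        obtain ⟨hb', hd, h'⟩ := H' c fun h => hc (Or.inr h)
        refine ⟨ha, hd, (h.hcomp h').trans ?_⟩
        exact cancel_middle _ _ _
      · intro z _
        obtain ⟨ε, hε, hball⟩ := Metric.isOpen_iff.1 (hB.sdiff hR) z z.2
        refine ⟨Subtype.val ⁻¹' Metric.ball (z : W) ε,
          continuous_subtype_val.continuousAt.preimage_mem_nhds (Metric.ball_mem_nhds _ hε), ?_⟩
        intro a b p _ hp
        have ha : (a : W) ∈ Metric.ball (z : W) ε := by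
          have := hp 0
          rwa [p.source] at this
        have hb : (b : W) ∈ Metric.ball (z : W) ε := by
          have := hp 1
          rwa [p.target] at this
        have hs := (convex_ball (z : W) ε).segment_subset ha hb
        refine ⟨Bad R a b, hbad _ _ fun y hy => (hball (hs hy)).2, fun c hc => ?_⟩
        obtain ⟨hac, hbc⟩ := seg a.2.1 b.2.1 c c.2.1 hc
        refine ⟨hac, hbc, (homotopic_of_convex (convex_ball (z : W) ε) hball p
          (segPath a b (hs.trans hball)) hp fun t => hs (segPath_mem _ _ _ _)).trans ?_⟩
        have ht := tri a.2.1 b.2.1 c c.2.1 hc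
        have sub : ∀ u v : W, u ∈ ({(c : W), (a : W), (b : W)} : Set W) →
            v ∈ ({(c : W), (a : W), (b : W)} : Set W) →
            segment ℝ u v ⊆ convexHull ℝ {(c : W), (a : W), (b : W)} := fun u v hu hv =>
          (convex_convexHull ℝ _).segment_subset (subset_convexHull ℝ _ hu)
            (subset_convexHull ℝ _ hv)
        refine homotopic_of_convex (convex_convexHull ℝ _) ht _ _
          (fun t => sub a b (by simp) (by simp) (segPath_mem _ _ _ _)) fun t => ?_
        rw [Path.trans_apply]
        split_ifs
        · exact sub a c (by simp) (by simp) (segPath_mem _ _ _ _)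
        · exact sub b c (by simp) (by simp) (segPath_mem _ _ hbc _)
    obtain ⟨c, hc, hcN⟩ := pick _ (hN.union (selfbad x x.2.2))
    have hx := (seg x.2.1 x.2.1 c hc fun h => hcN (Or.inr h)).1
    obtain ⟨_, _, h⟩ := H ⟨c, hx (right_mem_segment ℝ _ _)⟩ fun h => hcN (Or.inl h)
    exact h.trans (Path.Homotopic.trans_symm _)

end GP

/-! ### Nearest-point projection onto an orbit -/

section Nearest

variable {V : Type*} [NormedAddCommGroup V] [InnerProductSpace ℝ V]
  {G : Type*} [Group G] [TopologicalSpace G] [CompactSpace G] (ρ : G →* (V ≃ₗᵢ[ℝ] V))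

/-- When `g` moves `A` little, `ρ g A - A` agrees to second order with a vector `v` orthogonal to
`B - A` for every `B` that has `A` as a nearest point on the orbit of `A`. For a compact Lie group a
vector tangent to the orbit at `A` will do; stating the condition in this way avoids manifolds. -/
def TangentCond (A : V) : Prop :=
  ∃ C > 0, ∃ r > 0, ∀ g, ‖ρ g A - A‖ < r → ∃ v, ‖ρ g A - A - v‖ ≤ C * ‖ρ g A - A‖ ^ 2 ∧
    ∀ B, (∀ h, ‖B - A‖ ≤ ‖B - ρ h A‖) → inner ℝ (B - A) v = 0

theorem rho_mul (g h : G) (v : V) : ρ (g * h) v = ρ g (ρ h v) := by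
  rw [map_mul]; rfl

theorem rho_inv_apply (g : G) (v : V) : ρ g⁻¹ (ρ g v) = v := by
  rw [← rho_mul, inv_mul_cancel, map_one]; rfl

theorem rho_apply_inv (g : G) (v : V) : ρ g (ρ g⁻¹ v) = v := by
  rw [← rho_mul, mul_inv_cancel, map_one]; rfl

/-- On an invariant neighbourhood of `A` there is a continuous equivariant nearest-point projection
onto the orbit of `A`. Uniqueness of the nearest point follows from `TangentCond`: two nearby nearest
points would be at a distance bounded by a small multiple of itself. -/
theorem nearest (hρ : Continuous fun p : G × V => ρ p.1 p.2) (A : V) (hA : TangentCond ρ A) :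
    ∃ d > 0, ∃ p : V → V, ∃ N : Set V, IsOpen N ∧ Metric.ball A d ⊆ N ∧
      (∀ g, ∀ B ∈ N, ρ g B ∈ N) ∧ ContinuousOn p N ∧ (∀ B, ∃ g, p B = ρ g A) ∧
      (∀ B ∈ N, ∀ g, p (ρ g B) = ρ g (p B)) ∧ ∀ B, ‖p B - B‖ ≤ ‖B - A‖ := by
  obtain ⟨C, hC, r, hr, H⟩ := hA
  let O : Set V := range fun g => ρ g A
  have hO : IsCompact O := isCompact_range (hρ.comp (by fun_prop : Continuous fun g => (g, A)))
  have hAO : A ∈ O := ⟨1, by simp⟩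
  have hinv : ∀ g B, B ∈ O → ρ g B ∈ O := by
    rintro g _ ⟨h, rfl⟩
    exact ⟨g * h, by simp⟩
  choose p hpO hp using fun B => hO.exists_infDist_eq_dist ⟨A, hAO⟩ B
  let d := min (r / 2) (1 / (2 * C + 1))
  have hd : 0 < d := by positivity
  have hle : ∀ g B, Metric.infDist (ρ g B) O ≤ Metric.infDist B O := by
    intro g B
    rw [hp B, ← (ρ g).dist_map]
    exact Metric.infDist_le_dist_of_mem (hinv g _ (hpO B))
  have hinf : ∀ g B, Metric.infDist (ρ g B) O = Metric.infDist B O := by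
    intro g B
    refine le_antisymm (hle g B) ?_
    have := hle g⁻¹ (ρ g B)
    rwa [rho_inv_apply] at this
  have uniqA : ∀ B, ‖B - A‖ < d → (∀ z ∈ O, ‖B - A‖ ≤ ‖B - z‖) → ∀ z ∈ O, ‖B - A‖ = ‖B - z‖ →
      z = A := by
    rintro B hB hmin _ ⟨g, rfl⟩ hz
    by_contra hne
    simp only at hz hne
    have hw : 0 < ‖ρ g A - A‖ := norm_pos_iff.2 (sub_ne_zero.2 hne)
    have hlt : ‖ρ g A - A‖ < r := by
      have h1 : ρ g A - A = (B - A) - (B - ρ g A) := by abel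
      have h2 : ‖B - A‖ < r / 2 := hB.trans_le (min_le_left _ _)
      calc ‖ρ g A - A‖ = ‖(B - A) - (B - ρ g A)‖ := by rw [h1]
        _ ≤ ‖B - A‖ + ‖B - ρ g A‖ := norm_sub_le _ _
        _ < r := by rw [← hz]; linarith
    obtain ⟨v, hv, hvB⟩ := H g hlt
    have h0 := hvB B fun h => hmin _ ⟨h, rfl⟩
    have h1 : ‖ρ g A - A‖ ^ 2 = 2 * inner ℝ (B - A) (ρ g A - A) := by
      have : B - ρ g A = (B - A) - (ρ g A - A) := by abel
      have e := @norm_sub_sq_real V _ _ (B - A) (ρ g A - A)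
      rw [← this, ← hz] at e
      linarith
    have h2 : inner ℝ (B - A) (ρ g A - A) = inner ℝ (B - A) (ρ g A - A - v) := by
      rw [inner_sub_right _ _ v, h0, sub_zero]
    have h3 : inner ℝ (B - A) (ρ g A - A - v) ≤ ‖B - A‖ * (C * ‖ρ g A - A‖ ^ 2) :=
      (real_inner_le_norm _ _).trans (mul_le_mul_of_nonneg_left hv (norm_nonneg _))
    have h4 : ‖B - A‖ * (2 * C + 1) < 1 := by
      rw [← lt_div_iff₀ (by positivity)]
      exact hB.trans_le (min_le_right _ _)
    have h5 : 2 * C * ‖B - A‖ < 1 := by nlinarith [norm_nonneg (B - A)]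
    have h6 : 0 < ‖ρ g A - A‖ ^ 2 := by positivity
    nlinarith
  have uniq : ∀ B, Metric.infDist B O < d → ∀ z ∈ O, Metric.infDist B O = dist B z → z = p B := by
    rintro B hB z hz hBz
    obtain ⟨g, hg⟩ := hpO B
    simp only at hg
    have key := uniqA (ρ g⁻¹ B) ?_ ?_ (ρ g⁻¹ z) (hinv _ _ hz) ?_
    · rw [← hg, ← key, rho_apply_inv]
    all_goals
      have e : ‖ρ g⁻¹ B - A‖ = Metric.infDist B O := by
        rw [hp B, dist_eq_norm, ← hg, ← (ρ g⁻¹).norm_map (B - ρ g A), map_sub, rho_inv_apply]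
      rw [e]
    · exact hB
    · intro y hy
      rw [← hinf g⁻¹ B, ← dist_eq_norm]
      exact Metric.infDist_le_dist_of_mem hy
    · rw [hBz, dist_eq_norm, ← map_sub, LinearIsometryEquiv.norm_map]
  refine ⟨d, hd, p, {B | Metric.infDist B O < d},
    isOpen_lt (Metric.continuous_infDist_pt _) continuous_const, ?_, ?_, ?_, ?_, ?_, ?_⟩
  · intro B hB
    exact (Metric.infDist_le_dist_of_mem hAO).trans_lt hB
  · intro g B hB
    simpa [hinf] using hB
  · intro B hB
    refine ContinuousAt.continuousWithinAt ?_
    rw [ContinuousAt, tendsto_nhds]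
    intro W hW hBW
    rcases (O \ W).eq_empty_or_nonempty with he | hne
    · refine Filter.mem_of_superset Filter.univ_mem fun B' _ => ?_
      by_contra h
      have : p B' ∈ O \ W := ⟨hpO B', h⟩
      rw [he] at this
      exact this
    · have hK : IsCompact (O \ W) := hO.diff hW
      obtain ⟨z, hz, hz'⟩ := hK.exists_infDist_eq_dist hne B
      have hlt : Metric.infDist B O < Metric.infDist B (O \ W) := by
        refine lt_of_le_of_ne ?_ fun he => ?_
        · rw [hz']; exact Metric.infDist_le_dist_of_mem hz.1
        · exact hz.2 (by rw [uniq B hB z hz.1 (he.trans hz')]; exact hBW)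
      filter_upwards [(isOpen_lt (Metric.continuous_infDist_pt _)
        (Metric.continuous_infDist_pt _)).mem_nhds hlt] with B' hB'
      by_contra h
      have h1 := Metric.infDist_le_dist_of_mem (x := B') (show p B' ∈ O \ W from ⟨hpO B', h⟩)
      rw [← hp B'] at h1
      exact absurd hB' (not_lt.2 h1)
  · intro B
    obtain ⟨g, hg⟩ := hpO B
    exact ⟨g, hg.symm⟩
  · intro B hB g
    refine (uniq (ρ g B) (by rwa [hinf]) _ (hinv g _ (hpO B)) ?_).symm
    rw [hinf, hp B, LinearIsometryEquiv.dist_map]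
  · intro B
    rw [← dist_eq_norm, ← dist_eq_norm, dist_comm, ← hp B]
    exact Metric.infDist_le_dist_of_mem hAO

/-- The straight-line homotopy from the identity to the nearest-point projection onto the orbit of
`A` is equivariant, so it descends to a contraction of a neighbourhood of `q A`. -/
theorem lc_at (hρ : Continuous fun p : G × V => ρ p.1 p.2) (A : V) (hA : TangentCond ρ A)
    {X : Type*} [TopologicalSpace X] (q : V → X) (qc : Continuous q) (qo : IsOpenMap q)
    (qe : ∀ v w, q v = q w ↔ ∃ g, ρ g v = w) : ∀ Z ∈ 𝓝 (q A), ∃ U ∈ 𝓝 (q A), ∃ c : X × ℝ → X,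
    ContinuousOn c (U ×ˢ Icc 0 1) ∧
    ∀ u ∈ U, c (u, 0) = u ∧ c (u, 1) = q A ∧ ∀ t ∈ Icc (0 : ℝ) 1, c (u, t) ∈ Z := by
  obtain ⟨d, hd, p, N, hN, hNb, hNg, pc, pO, pg, pd⟩ := nearest ρ hρ A hA
  intro Z hZ
  obtain ⟨ε, hε, hball⟩ := Metric.mem_nhds_iff.1 (qc.continuousAt.preimage_mem_nhds hZ)
  let δ := min (ε / 2) d
  have hδ : 0 < δ := by positivity
  let s : X → V := Function.invFunOn q N
  have hs : ∀ B ∈ N, s (q B) ∈ N ∧ q (s (q B)) = q B := fun B hB =>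
    ⟨Function.invFunOn_mem ⟨B, hB, rfl⟩, Function.invFunOn_eq ⟨B, hB, rfl⟩⟩
  let c' : V × ℝ → V := fun z => (1 - z.2) • z.1 + z.2 • p z.1
  let c : X × ℝ → X := fun z => q (c' (s z.1, z.2))
  have cq : ∀ B ∈ N, ∀ t, c (q B, t) = q (c' (B, t)) := by
    intro B hB t
    obtain ⟨g, hg⟩ := (qe _ _).1 (hs B hB).2
    refine (qe _ _).2 ⟨g, ?_⟩
    simp only [c', map_add, map_smul]
    rw [← pg _ (hs B hB).1, hg]
  refine ⟨q '' Metric.ball A δ, (qo.image_mem_nhds (Metric.ball_mem_nhds A hδ)), c, ?_, ?_⟩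
  · rintro ⟨_, t⟩ ⟨⟨B, hB, rfl⟩, -⟩
    have hBN : B ∈ N := hNb (Metric.ball_subset_ball (min_le_right _ _) hB)
    refine ContinuousAt.continuousWithinAt ?_
    have ho : IsOpenMap (Prod.map q (id : ℝ → ℝ)) := qo.prodMap IsOpenMap.id
    have h1 := ho.nhds_le (B, t)
    have hc' : ContinuousAt c' (B, t) := by
      have : ContinuousAt (fun z : V × ℝ => p z.1) (B, t) :=
        ContinuousAt.comp (f := Prod.fst) (g := p) (x := (B, t))
          (pc.continuousAt (hN.mem_nhds hBN)) continuousAt_fst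
      exact ((continuousAt_const.sub continuousAt_snd).smul continuousAt_fst).add
        (continuousAt_snd.smul this)
    have h2 : Filter.Tendsto (c ∘ Prod.map q (id : ℝ → ℝ)) (𝓝 (B, t)) (𝓝 (c (q B, t))) := by
      rw [cq B hBN]
      refine Filter.Tendsto.congr' ?_ (qc.continuousAt.comp hc').tendsto
      filter_upwards [continuousAt_fst.preimage_mem_nhds (hN.mem_nhds hBN)] with z hz
      exact (cq z.1 hz z.2).symm
    exact (Filter.tendsto_map'_iff.2 h2).mono_left h1
  · rintro _ ⟨B, hB, rfl⟩
    have hBN : B ∈ N := hNb (Metric.ball_subset_ball (min_le_right _ _) hB)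
    refine ⟨?_, ?_, fun t ht => ?_⟩
    · rw [cq B hBN]; simp [c']
    · rw [cq B hBN]
      obtain ⟨g, hg⟩ := pO B
      simp only [c', sub_self, zero_smul, one_smul, zero_add]
      exact ((qe _ _).2 ⟨g, hg.symm⟩).symm
    · rw [cq B hBN]
      refine hball ?_
      have hBA : ‖B - A‖ < ε / 2 := by
        rw [← dist_eq_norm]; exact lt_of_lt_of_le hB (min_le_left _ _)
      rw [Metric.mem_ball, dist_eq_norm]
      have e : c' (B, t) - A = (B - A) + t • (p B - B) := by
        simp only [c', sub_smul, smul_sub, one_smul]; abel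
      rw [e]
      have h1 : ‖t • (p B - B)‖ ≤ ‖B - A‖ := by
        rw [norm_smul, Real.norm_eq_abs, abs_of_nonneg ht.1]
        have := pd B
        nlinarith [norm_nonneg (p B - B), ht.2]
      linarith [norm_add_le (B - A) (t • (p B - B))]

end Nearest

/-! ### Local fillings in a quotient by a group action -/

section Lifting

theorem HIn.homotopic {X : Type*} [TopologicalSpace X] {W : Set X} {a b : W} (p q : Path a b)
    (h : HIn W (fun t => (p t : X)) (fun t => (q t : X))) : p.Homotopic q := by
  obtain ⟨F, hF, h0, h1, hs, ht, hW⟩ := h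
  refine ⟨⟨⟨⟨fun z => ⟨F z, hW z⟩, by fun_prop⟩, fun t => ?_, fun t => ?_⟩, ?_⟩⟩
  · exact Subtype.ext (h0 t)
  · exact Subtype.ext (h1 t)
  · rintro t x (rfl | rfl)
    · exact Subtype.ext (hs t)
    · refine Subtype.ext ((ht t).trans ?_)
      simp

theorem hIn_of_homotopic {X : Type*} [TopologicalSpace X] {W : Set X} {a b : W} {p q : Path a b}
    (h : p.Homotopic q) : HIn W (fun t => (p t : X)) (fun t => (q t : X)) := by
  obtain ⟨H⟩ := h
  refine ⟨fun z => (H z : X), continuous_subtype_val.comp H.continuous, fun t => ?_, fun t => ?_,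
    fun t => ?_, fun t => ?_, fun z => (H z).2⟩ <;> simp

theorem HIn.mono {X : Type*} [TopologicalSpace X] {W W' : Set X} {p q : I → X}
    (h : HIn W p q) (hW : W ⊆ W') : HIn W' p q := by
  obtain ⟨F, h1, h2, h3, h4, h5, h6⟩ := h
  exact ⟨F, h1, h2, h3, h4, h5, fun z => hW (h6 z)⟩

theorem const_trans {W : Type*} [TopologicalSpace W] {a b c : W} (α : Path a b)
    (h : ∀ t, α t = a) (p : Path b c) :
    (α.trans p).Homotopic (p.cast (by rw [← α.target, h]) rfl) := by
  obtain rfl : b = a := by rw [← α.target, h]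
  obtain rfl : α = Path.refl b := by ext t; exact h t
  exact Path.Homotopic.refl_trans p

theorem trans_const {W : Type*} [TopologicalSpace W] {a b c : W} (α : Path b c)
    (h : ∀ t, α t = b) (p : Path a b) :
    (p.trans α).Homotopic (p.cast rfl (by rw [← α.target, h])) := by
  obtain rfl : c = b := by rw [← α.target, h]
  obtain rfl : α = Path.refl c := by ext t; exact h t
  exact Path.Homotopic.trans_refl p

variable {V : Type*} [NormedAddCommGroup V] [InnerProductSpace ℝ V]
  {G : Type*} [Group G] (ρ : G →* (V ≃ₗᵢ[ℝ] V))

/-- Two points near `A` on a common orbit are joined by a path in that orbit that stays near `A`. -/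
def OrbCond (A : V) : Prop := ∀ ε > 0, ∃ δ > 0, ∀ B g, ‖B - A‖ < δ → ‖ρ g B - A‖ < δ →
  ∃ γ : I → V, Continuous γ ∧ γ 0 = B ∧ γ 1 = ρ g B ∧ ∀ t, (∃ h, γ t = ρ h B) ∧ ‖γ t - A‖ < ε

variable {X : Type*} [TopologicalSpace X] {q : V → X} (qc : Continuous q) (qo : IsOpenMap q)
  (qe : ∀ v w, q v = q w ↔ ∃ g, ρ g v = w) {Y : Set X} (hY : IsOpen Y)

omit [InnerProductSpace ℝ V] in
include qc in
theorem lf0_at (hd : Dense (q ⁻¹' Y)) (A : V) : ∀ Z ∈ 𝓝 (q A), (Z ∩ Y).Nonempty := by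
  intro Z hZ
  obtain ⟨v, hvY, hv⟩ := hd.inter_nhds_nonempty (qc.continuousAt.preimage_mem_nhds hZ)
  exact ⟨q v, hv, hvY⟩

omit [InnerProductSpace ℝ V] in
include qc qo in
theorem lf1_at (A : V) (gp : ∀ ε > 0, SimplyConnectedSpace ↥(Metric.ball A ε \ (q ⁻¹' Y)ᶜ)) :
    ∀ Z ∈ 𝓝 (q A), ∃ U ∈ 𝓝 (q A), ∀ x ∈ U ∩ Y, ∀ y ∈ U ∩ Y, JoinedIn (Z ∩ Y) x y := by
  intro Z hZ
  obtain ⟨ε, hε, hb⟩ := Metric.mem_nhds_iff.1 (qc.continuousAt.preimage_mem_nhds hZ)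
  refine ⟨q '' Metric.ball A ε, qo.image_mem_nhds (Metric.ball_mem_nhds A hε), ?_⟩
  rintro _ ⟨⟨v, hv, rfl⟩, hvY⟩ _ ⟨⟨w, hw, rfl⟩, hwY⟩
  have := gp ε hε
  let e : ↥(Metric.ball A ε \ (q ⁻¹' Y)ᶜ) := ⟨v, hv, fun h => h hvY⟩
  let e' : ↥(Metric.ball A ε \ (q ⁻¹' Y)ᶜ) := ⟨w, hw, fun h => h hwY⟩
  let γ := PathConnectedSpace.somePath e e'
  exact ⟨γ.map (f := fun v => q v) (qc.comp continuous_subtype_val), fun t =>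
    ⟨hb (γ t).2.1, not_not.1 (γ t).2.2⟩⟩

include qc qo qe hY in
/-- Every path in `Y` near `q A` is homotopic in `Z ∩ Y` to the image of a path upstairs whose
endpoints are prescribed lifts: short paths are compared with images of paths by the local fillings of
`X`, and lifts of consecutive pieces are joined along orbits. Two paths upstairs with common endpoints
are homotopic by simple connectivity. -/
theorem lf2_at (A : V) (gp : ∀ ε > 0, SimplyConnectedSpace ↥(Metric.ball A ε \ (q ⁻¹' Y)ᶜ))
    (orb : OrbCond ρ A) (hLF : LF (univ : Set X) 2) :
    ∀ Z ∈ 𝓝 (q A), ∃ U ∈ 𝓝 (q A), ∀ p p' : I → X, Continuous p → Continuous p' → p 0 = p' 0 →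
      p 1 = p' 1 → (∀ t, p t ∈ U ∩ Y) → (∀ t, p' t ∈ U ∩ Y) → HIn (Z ∩ Y) p p' := by
  intro Z hZ
  obtain ⟨ε, hε, hb⟩ := Metric.mem_nhds_iff.1 (qc.continuousAt.preimage_mem_nhds hZ)
  obtain ⟨δ', hδ', orb⟩ := orb ε hε
  obtain ⟨δ, hδ, hδε, hδδ⟩ : ∃ δ > 0, δ ≤ ε ∧ δ ≤ δ' :=
    ⟨min ε δ', by positivity, min_le_left _ _, min_le_right _ _⟩
  have := gp ε hε
  set Ω : Set V := Metric.ball A ε \ (q ⁻¹' Y)ᶜ with hΩ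
  have Ωo : IsOpen Ω := Metric.isOpen_ball.sdiff (hY.preimage qc).isClosed_compl
  have hδs : Metric.ball A δ ⊆ Metric.ball A ε := Metric.ball_subset_ball hδε
  let W : Set X := q '' Metric.ball A ε ∩ Y
  have Wo : IsOpen W := (qo _ Metric.isOpen_ball).inter hY
  have hWZ : W ⊆ Z ∩ Y := by
    rintro _ ⟨⟨v, hv, rfl⟩, h⟩
    exact ⟨hb hv, h⟩
  let f : Ω → W := fun e => ⟨q e, ⟨e, e.2.1, rfl⟩, not_not.1 e.2.2⟩
  have fc : Continuous f := (qc.comp continuous_subtype_val).subtype_mk _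
  let N : Set Ω := {e | (e : V) ∈ Metric.ball A δ}
  let S : Set W := f '' N
  have orbp : ∀ e e' : Ω, e ∈ N → e' ∈ N → f e = f e' → ∃ α : Path e e', ∀ t, f (α t) = f e := by
    intro e e' he he' hf
    obtain ⟨g, hg⟩ := (qe _ _).1 (congrArg Subtype.val hf)
    have he1 : ‖(e : V) - A‖ < δ' := (mem_ball_iff_norm.1 he).trans_le hδδ
    have he2 : ‖ρ g (e : V) - A‖ < δ' := by
      rw [hg]; exact (mem_ball_iff_norm.1 he').trans_le hδδ
    obtain ⟨γ, γc, γ0, γ1, hγ⟩ := orb e g he1 he2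
    have hq : ∀ t, q (γ t) = q e := by
      intro t
      obtain ⟨h, hh⟩ := (hγ t).1
      exact ((qe _ _).2 ⟨h, hh.symm⟩).symm
    have hmem : ∀ t, γ t ∈ Ω := fun t => ⟨mem_ball_iff_norm.2 (hγ t).2, fun h => h (by
      show q (γ t) ∈ Y
      rw [hq]; exact (f e).2.2)⟩
    exact ⟨⟨⟨fun t => ⟨γ t, hmem t⟩, γc.subtype_mk _⟩, Subtype.ext γ0, Subtype.ext (γ1.trans hg)⟩,
      fun t => Subtype.ext (hq t)⟩
  let P : ∀ {a b : W}, Path a b → Prop := fun {a b} γ => ∀ e e' : Ω, e ∈ N → e' ∈ N →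
    ∀ (he : f e = a) (he' : f e' = b), ∃ β : Path e e',
      ((β.map fc).cast he.symm he'.symm).Homotopic γ
  have main : ∀ {a b : W} (γ : Path a b), (∀ t, γ t ∈ S) → P γ := by
    intro a b γ hγ
    refine path_induction S P ?_ ?_ ?_ γ hγ
    · intro a b p q h hp e e' he he' h1 h2
      obtain ⟨β, hβ⟩ := hp e e' he he' h1 h2
      exact ⟨β, hβ.trans h⟩
    · rintro a b c p p' ⟨m, hm, rfl⟩ hp hp' e e' he he' rfl rfl
      obtain ⟨β, hβ⟩ := hp e m he hm rfl rfl
      obtain ⟨β', hβ'⟩ := hp' m e' hm he' rfl rfl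
      refine ⟨β.trans β', ?_⟩
      rw [Path.cast_rfl_rfl] at hβ hβ' ⊢
      rw [Path.map_trans]
      exact hβ.hcomp hβ'
    · rintro _ ⟨z, hz, rfl⟩
      obtain ⟨U₁, hU₁, H⟩ := hLF.hin (q z) W (Wo.mem_nhds (f z).2)
      have hO : (q ⁻¹' U₁ ∩ (Ω ∩ Metric.ball A δ)) ∈ 𝓝 (z : V) :=
        Filter.inter_mem (qc.continuousAt.preimage_mem_nhds hU₁)
          ((Ωo.inter Metric.isOpen_ball).mem_nhds ⟨z.2, hz⟩)
      obtain ⟨r, hr, hrb⟩ := Metric.mem_nhds_iff.1 hO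
      refine ⟨Subtype.val ⁻¹' (q '' Metric.ball (z : V) r),
        continuous_subtype_val.continuousAt.preimage_mem_nhds
          (qo.image_mem_nhds (Metric.ball_mem_nhds _ hr)), ?_⟩
      intro a b p _ hp e e' he he' hea heb
      obtain ⟨x, hx, hxa⟩ := hp 0
      obtain ⟨y, hy, hyb⟩ := hp 1
      rw [p.source] at hxa
      rw [p.target] at hyb
      let x' : Ω := ⟨x, (hrb hx).2.1⟩
      let y' : Ω := ⟨y, (hrb hy).2.1⟩
      obtain ⟨α, hα⟩ := orbp e x' he (hrb hx).2.2 (Subtype.ext (by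
        rw [hea]; exact hxa.symm))
      obtain ⟨α', hα'⟩ := orbp y' e' (hrb hy).2.2 he' (Subtype.ext (by
        rw [heb]; exact hyb))
      have hsb : segment ℝ x y ⊆ Metric.ball (z : V) r := (convex_ball _ _).segment_subset hx hy
      have hsΩ : segment ℝ (x' : V) y' ⊆ Ω := fun w hw => (hrb (hsb hw)).2.1
      subst hea heb
      refine ⟨(α.trans (segPath x' y' hsΩ)).trans α', ?_⟩
      rw [Path.cast_rfl_rfl, Path.map_trans, Path.map_trans]
      refine ((const_trans _ hα _).hcomp (Path.Homotopic.refl _)).trans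
        ((trans_const _ (fun t => ?_) _).trans (HIn.homotopic _ _ ?_))
      · exact hα' t
      · have hU : ∀ t, q (segPath x' y' hsΩ t) ∈ U₁ := fun t => (hrb (hsb (segPath_mem x' y' hsΩ t))).1
        refine H _ _ (by fun_prop) (by fun_prop) ?_ ?_ hU ?_
        · simp
        · simp
        · intro t
          obtain ⟨w, hw, hwt⟩ := hp t
          rw [← hwt]
          exact (hrb hw).1
  refine ⟨q '' Metric.ball A δ, qo.image_mem_nhds (Metric.ball_mem_nhds A hδ), ?_⟩
  intro p p' hp hp' h0 h1 hpU hpU'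
  have lift : ∀ x ∈ q '' Metric.ball A δ ∩ Y, ∃ e : Ω, e ∈ N ∧ q e = x := by
    rintro _ ⟨⟨v, hv, rfl⟩, hvY⟩
    exact ⟨⟨v, hδs hv, fun h => h hvY⟩, hv, rfl⟩
  have hW : ∀ x ∈ q '' Metric.ball A δ ∩ Y, x ∈ W := fun x hx => ⟨image_mono hδs hx.1, hx.2⟩
  obtain ⟨e, he, hea⟩ := lift _ (hpU 0)
  obtain ⟨e', he', heb⟩ := lift _ (hpU 1)
  let γ : Path (f e) (f e') := ⟨⟨fun t => ⟨p t, hW _ (hpU t)⟩, by fun_prop⟩, Subtype.ext hea.symm,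
    Subtype.ext heb.symm⟩
  let γ' : Path (f e) (f e') := ⟨⟨fun t => ⟨p' t, hW _ (hpU' t)⟩, by fun_prop⟩,
    Subtype.ext (h0.symm.trans hea.symm), Subtype.ext (h1.symm.trans heb.symm)⟩
  have inS : ∀ x : W, (x : X) ∈ q '' Metric.ball A δ ∩ Y → x ∈ S := by
    intro x hx
    obtain ⟨c, hc, hcx⟩ := lift _ hx
    exact ⟨c, hc, Subtype.ext hcx⟩
  obtain ⟨β, hβ⟩ := main γ (fun t => inS _ (hpU t)) e e' he he' rfl rfl
  obtain ⟨β', hβ'⟩ := main γ' (fun t => inS _ (hpU' t)) e e' he he' rfl rfl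
  have hh : β.Homotopic β' := SimplyConnectedSpace.paths_homotopic β β'
  exact (hIn_of_homotopic (hβ.symm.trans ((hh.map ⟨f, fc⟩).trans hβ'))).mono hWZ

end Lifting

theorem LF.of_dense {X : Type*} [TopologicalSpace X] {Y : Set X}
    (h : ∀ x, ∀ Z ∈ 𝓝 x, (Z ∩ Y).Nonempty) : LF Y 0 := by
  intro x V hV
  obtain ⟨y, hy⟩ := h x V hV
  refine ⟨univ, Filter.univ_mem, fun g _ _ => ⟨fun _ => y, continuous_const, ?_, fun _ => hy⟩⟩
  rintro z ⟨j, _⟩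
  exact j.elim0

theorem LF.of_joinedIn {X : Type*} [TopologicalSpace X] {Y : Set X}
    (h : ∀ x, ∀ Z ∈ 𝓝 x, ∃ U ∈ 𝓝 x, ∀ y ∈ U ∩ Y, ∀ z ∈ U ∩ Y, JoinedIn (Z ∩ Y) y z) :
    LF Y 1 := by
  intro x V hV
  obtain ⟨U, hU, H⟩ := h x V hV
  refine ⟨U, hU, fun g _ hg => ?_⟩
  obtain ⟨γ, hγ⟩ := H _ (hg (x := fun _ => 0) ⟨0, Or.inl rfl⟩) _
    (hg (x := fun _ => 1) ⟨0, Or.inr rfl⟩)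
  refine ⟨fun z => γ (z 0), by fun_prop, ?_, fun z => hγ _⟩
  rintro z ⟨j, hj⟩
  obtain rfl : j = 0 := Subsingleton.elim _ _
  have hz : ∀ c, z 0 = c → z = fun _ => c := by
    intro c hc
    ext j
    obtain rfl : j = 0 := Subsingleton.elim _ _
    rw [hc]
  rcases hj with hj | hj
  · simp only [hz _ hj, γ.source]
  · simp only [hz _ hj, γ.target]

/-! ### Skew-Hermitian matrices -/

section Mat

open Matrix
open scoped Matrix.Norms.Frobenius

/-- `n × n` complex matrices. -/
abbrev Mt (n : ℕ) : Type := Matrix (Fin n) (Fin n) ℂ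

variable {n r : ℕ}

/-- The real inner product `Re tr (Aᴴ B)`, whose norm is the Frobenius norm. -/
noncomputable instance instInnerMt : InnerProductSpace ℝ (Mt n) where
  inner A B := (trace (Aᴴ * B)).re
  norm_sq_eq_re_inner A := by
    rw [frobenius_norm_def, ← Real.rpow_natCast, ← Real.rpow_mul (by positivity)]
    norm_num
    simp only [trace, diag_apply, mul_apply, conjTranspose_apply, Complex.re_sum]
    rw [Finset.sum_comm]
    refine Finset.sum_congr rfl fun i _ => Finset.sum_congr rfl fun j _ => ?_
    rw [← Complex.normSq_eq_norm_sq, Complex.normSq_apply]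
    simp
  conj_inner_symm A B := by
    simp only [conj_trivial]
    rw [← conjTranspose_conjTranspose A, ← conjTranspose_mul, trace_conjTranspose,
      conjTranspose_conjTranspose]
    simp
  add_left A B C := by simp [add_mul]
  smul_left A B c := by simp

theorem inner_def (A B : Mt n) : inner ℝ A B = (trace (Aᴴ * B)).re := rfl

/-- The real vector space of skew-Hermitian matrices, the Lie algebra of `U(n)`. -/
def sk (n : ℕ) : Submodule ℝ (Mt n) where
  carrier := {X | Xᴴ = -X}
  add_mem' {a b} ha hb := by
    simp only [mem_ofPred_eq] at *
    rw [conjTranspose_add, ha, hb]; abel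
  zero_mem' := by simp
  smul_mem' c a ha := by
    simp only [mem_ofPred_eq] at *
    rw [conjTranspose_smul, ha]; simp

theorem mem_sk {X : Mt n} : X ∈ sk n ↔ Xᴴ = -X := Iff.rfl

theorem sk_conj (X : sk n) : (X : Mt n)ᴴ = -X := X.2

/-- The Euclidean space of `r`-tuples of skew-Hermitian matrices. -/
abbrev Tu (n r : ℕ) : Type := PiLp 2 fun _ : Fin r => sk n

instance compactUn : CompactSpace (Un n) := by
  refine isCompact_iff_compactSpace.1 (Metric.isCompact_of_isClosed_isBounded ?_ ?_)
  · have : (unitaryGroup (Fin n) ℂ : Set (Mt n)) = {A | star A * A = 1} ∩ {A | A * star A = 1} := by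
      ext A; exact Unitary.mem_iff
    rw [this]
    exact (isClosed_eq (by fun_prop) (by fun_prop)).inter (isClosed_eq (by fun_prop) (by fun_prop))
  · refine (Metric.isBounded_iff_subset_closedBall 0).2 ⟨‖(1 : Mt n)‖, fun A hA => ?_⟩
    rw [mem_closedBall_zero_iff]
    have : ‖A‖ ^ 2 = ‖(1 : Mt n)‖ ^ 2 := by
      rw [← real_inner_self_eq_norm_sq, ← real_inner_self_eq_norm_sq, inner_def, inner_def,
        ← star_eq_conjTranspose, (Unitary.mem_iff.1 hA).1]
      simp
    nlinarith [norm_nonneg A, norm_nonneg (1 : Mt n)]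

end Mat

/-! ### The Cayley transform -/

section Cay

open Matrix
open scoped Matrix.Norms.Frobenius

variable {n r : ℕ}

theorem un_mul_star (g : Un n) : (g : Mt n) * (g : Mt n)ᴴ = 1 := (Unitary.mem_iff.1 g.2).2
theorem un_star_mul (g : Un n) : (g : Mt n)ᴴ * (g : Mt n) = 1 := (Unitary.mem_iff.1 g.2).1

theorem un_inv (g : Un n) : ((g⁻¹ : Un n) : Mt n) = (g : Mt n)ᴴ := rfl

theorem inner_conj (g : Un n) (A B : Mt n) :
    inner ℝ ((g : Mt n) * A * (g : Mt n)ᴴ) ((g : Mt n) * B * (g : Mt n)ᴴ) = inner ℝ A B := by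
  rw [inner_def, inner_def]
  congr 1
  calc trace (((g : Mt n) * A * (g : Mt n)ᴴ)ᴴ * ((g : Mt n) * B * (g : Mt n)ᴴ))
      = trace ((g : Mt n) * (Aᴴ * ((g : Mt n)ᴴ * (g : Mt n)) * B * (g : Mt n)ᴴ)) := by
        simp only [conjTranspose_mul, conjTranspose_conjTranspose, Matrix.mul_assoc]
    _ = trace (Aᴴ * ((g : Mt n)ᴴ * (g : Mt n)) * B * ((g : Mt n)ᴴ * (g : Mt n))) := by
        rw [trace_mul_comm]; simp only [Matrix.mul_assoc]
    _ = trace (Aᴴ * B) := by rw [un_star_mul]; simp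

theorem norm_conj (g : Un n) (A : Mt n) : ‖(g : Mt n) * A * (g : Mt n)ᴴ‖ = ‖A‖ := by
  rw [← sq_eq_sq₀ (norm_nonneg _) (norm_nonneg _), ← real_inner_self_eq_norm_sq, inner_conj,
    real_inner_self_eq_norm_sq]

/-- Conjugation `X ↦ g X gᴴ` by a unitary matrix, on skew-Hermitian matrices. -/
def cj (g : Un n) : sk n →ₗ[ℝ] sk n where
  toFun X := ⟨(g : Mt n) * X * (g : Mt n)ᴴ, by
    rw [mem_sk]
    simp [conjTranspose_mul, sk_conj, Matrix.mul_assoc]⟩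
  map_add' X Y := Subtype.ext (by simp [mul_add, add_mul])
  map_smul' c X := Subtype.ext (by simp)

theorem cj_apply (g : Un n) (X : sk n) : (cj g X : Mt n) = (g : Mt n) * X * (g : Mt n)ᴴ := rfl

theorem cj_mul (g h : Un n) (X : sk n) : cj (g * h) X = cj g (cj h X) := by
  refine Subtype.ext ?_
  simp [cj_apply, conjTranspose_mul, Matrix.mul_assoc]

theorem cj_one (X : sk n) : cj 1 X = X := by
  refine Subtype.ext ?_
  simp [cj_apply]

/-- Conjugation by a unitary matrix as a linear isometry of the skew-Hermitian matrices. -/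
noncomputable def cjIso (g : Un n) : sk n ≃ₗᵢ[ℝ] sk n where
  toLinearEquiv := LinearEquiv.ofLinearMap (cj g) (cj g⁻¹)
    (LinearMap.ext fun X => by
      rw [LinearMap.comp_apply, ← cj_mul, mul_inv_cancel, cj_one, LinearMap.id_apply])
    (LinearMap.ext fun X => by
      rw [LinearMap.comp_apply, ← cj_mul, inv_mul_cancel, cj_one, LinearMap.id_apply])
  norm_map' := fun X => norm_conj g X

theorem cjIso_apply (g : Un n) (X : sk n) : cjIso g X = cj g X := rfl

/-- The conjugation action on skew-Hermitian matrices. -/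
noncomputable def rhoS : Un n →* (sk n ≃ₗᵢ[ℝ] sk n) where
  toFun := cjIso
  map_one' := LinearIsometryEquiv.ext fun X => by
    rw [cjIso_apply, cj_one, LinearIsometryEquiv.coe_one, id]
  map_mul' g h := LinearIsometryEquiv.ext fun X => by
    rw [LinearIsometryEquiv.coe_mul, Function.comp_apply, cjIso_apply, cjIso_apply, cjIso_apply,
      cj_mul]

theorem rhoS_apply (g : Un n) (X : sk n) : (rhoS g X : Mt n) = (g : Mt n) * X * (g : Mt n)ᴴ := rfl

/-- The diagonal conjugation action on tuples of skew-Hermitian matrices. -/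
noncomputable def rho : Un n →* (Tu n r ≃ₗᵢ[ℝ] Tu n r) where
  toFun g := LinearIsometryEquiv.piLpCongrRight 2 fun _ => rhoS g
  map_one' := LinearIsometryEquiv.ext fun X => by
    ext i : 1
    simp only [LinearIsometryEquiv.piLpCongrRight_apply, map_one]; rfl
  map_mul' g h := LinearIsometryEquiv.ext fun X => by
    ext i : 1
    simp only [LinearIsometryEquiv.piLpCongrRight_apply, map_mul]; rfl

theorem rho_apply (g : Un n) (x : Tu n r) (i : Fin r) : rho g x i = rhoS g (x i) := rfl

theorem rho_continuous : Continuous fun p : Un n × Tu n r => rho p.1 p.2 := by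
  refine (PiLp.continuous_toLp 2 _).comp (continuous_pi fun i => ?_)
  refine Continuous.subtype_mk (f := fun p : Un n × Tu n r => (p.1 : Mt n) * (p.2 i : Mt n) * (p.1 : Mt n)ᴴ) ?_ _
  fun_prop

theorem mul_inv' {A : Mt n} (h : IsUnit A) : A * A⁻¹ = 1 :=
  mul_nonsing_inv A ((isUnit_iff_isUnit_det A).1 h)

theorem inv_mul' {A : Mt n} (h : IsUnit A) : A⁻¹ * A = 1 :=
  nonsing_inv_mul A ((isUnit_iff_isUnit_det A).1 h)

theorem comm_inv {M A : Mt n} (h : IsUnit A) (hc : M * A = A * M) : M * A⁻¹ = A⁻¹ * M := by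
  calc M * A⁻¹ = A⁻¹ * (A * M) * A⁻¹ := by rw [← Matrix.mul_assoc, inv_mul' h, Matrix.one_mul]
    _ = A⁻¹ * M * (A * A⁻¹) := by rw [← hc]; simp only [Matrix.mul_assoc]
    _ = A⁻¹ * M := by rw [mul_inv' h, Matrix.mul_one]

open scoped ComplexOrder in
theorem isUnit_one_sub (X : sk n) : IsUnit (1 - (X : Mt n)) := by
  have h : (1 - (X : Mt n))ᴴ * (1 - (X : Mt n)) = 1 + (X : Mt n)ᴴ * (X : Mt n) := by
    rw [conjTranspose_sub, sk_conj, conjTranspose_one]; noncomm_ring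
  have h2 : IsUnit ((1 - (X : Mt n))ᴴ * (1 - (X : Mt n))) := by
    rw [h]
    exact (PosDef.one.add_posSemidef (posSemidef_conjTranspose_mul_self _)).isUnit
  exact isUnit_of_mul_isUnit_right h2

theorem isUnit_one_add (X : sk n) : IsUnit (1 + (X : Mt n)) := by
  have := isUnit_one_sub (-X)
  simpa using this

theorem continuous_inv_of {T : Type*} [TopologicalSpace T] {f : T → Mt n} {t : T}
    (hf : ContinuousAt f t) (h : IsUnit (f t)) : ContinuousAt (fun s => (f s)⁻¹) t := by
  obtain ⟨u, hu⟩ := h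
  have := NormedRing.inverse_continuousAt u
  rw [hu] at this
  simp_rw [nonsing_inv_eq_ringInverse]
  exact ContinuousAt.comp (f := f) this hf

/-- The Cayley transform `X ↦ (1 + X)(1 - X)⁻¹`, written as `2 (1 - X)⁻¹ - 1`. -/
noncomputable def cay (X : sk n) : Un n := ⟨(2 : ℂ) • (1 - (X : Mt n))⁻¹ - 1, by
  have h1 := isUnit_one_sub X
  have h2 := isUnit_one_add X
  have hP : ((1 - (X : Mt n))⁻¹)ᴴ = (1 + (X : Mt n))⁻¹ := by
    rw [conjTranspose_nonsing_inv, conjTranspose_sub, sk_conj, conjTranspose_one, sub_neg_eq_add]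
  set P := (1 - (X : Mt n))⁻¹
  set Q := (1 + (X : Mt n))⁻¹
  have e1 : Q + P = (2 : ℂ) • (Q * P) := by
    calc Q + P = Q * ((1 - (X : Mt n)) * P) + (Q * (1 + (X : Mt n))) * P := by
          rw [mul_inv' h1, inv_mul' h2, Matrix.mul_one, Matrix.one_mul]
      _ = Q * P + Q * P := by noncomm_ring
      _ = _ := by rw [two_smul]
  have e : star ((2 : ℂ) • P - 1) * ((2 : ℂ) • P - 1) = 1 := by
    rw [star_eq_conjTranspose, conjTranspose_sub, conjTranspose_smul, hP, conjTranspose_one]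
    have : star (2 : ℂ) = 2 := by simp
    rw [this]
    have e2 : ((2 : ℂ) • Q - 1) * ((2 : ℂ) • P - 1) = (2 : ℂ) • ((2 : ℂ) • (Q * P)) -
        (2 : ℂ) • (Q + P) + 1 := by
      simp only [sub_mul, mul_sub, smul_mul_assoc, mul_smul_comm, mul_one, one_mul, smul_add]
      module
    rw [e2, e1, sub_self, zero_add]
  exact Unitary.mem_iff.2 ⟨e, mul_eq_one_comm.1 e⟩⟩

theorem cay_coe (X : sk n) : (cay X : Mt n) = (2 : ℂ) • (1 - (X : Mt n))⁻¹ - 1 := rfl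

theorem cay_continuous : Continuous (cay : sk n → Un n) := by
  refine Continuous.subtype_mk ?_ _
  refine Continuous.sub (Continuous.const_smul (c := (2 : ℂ)) (g := fun X : sk n => (1 - (X : Mt n))⁻¹) ?_) continuous_const
  exact continuous_iff_continuousAt.2 fun X => continuous_inv_of (by fun_prop) (isUnit_one_sub X)

theorem one_add_cay (X : sk n) : 1 + (cay X : Mt n) = (2 : ℂ) • (1 - (X : Mt n))⁻¹ := by
  rw [cay_coe]; abel

theorem isUnit_one_add_cay (X : sk n) : IsUnit (1 + (cay X : Mt n)) := by
  rw [one_add_cay]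
  refine IsUnit.of_mul_eq_one ((2 : ℂ)⁻¹ • (1 - (X : Mt n))) ?_
  rw [smul_mul_smul_comm, inv_mul' (isUnit_one_sub X)]; simp

theorem one_add_cay_inv (X : sk n) : (1 + (cay X : Mt n))⁻¹ = (2 : ℂ)⁻¹ • (1 - (X : Mt n)) := by
  refine inv_eq_right_inv ?_
  rw [one_add_cay, smul_mul_smul_comm, inv_mul' (isUnit_one_sub X)]; simp

/-- The inverse Cayley transform, `1 - 2 (1 + k)⁻¹` when `1 + k` is invertible. Taking the
skew-Hermitian part makes it total; its values at other `k` carry no meaning. -/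
noncomputable def cayi (k : Un n) : sk n :=
  ⟨(2 : ℂ)⁻¹ • ((1 - (2 : ℂ) • (1 + (k : Mt n))⁻¹) - (1 - (2 : ℂ) • (1 + (k : Mt n))⁻¹)ᴴ), by
    rw [mem_sk, conjTranspose_smul, conjTranspose_sub, conjTranspose_conjTranspose]
    have : star ((2 : ℂ)⁻¹) = 2⁻¹ := by simp
    rw [this, ← smul_neg, neg_sub]⟩

theorem cayi_coe {k : Un n} (h : IsUnit (1 + (k : Mt n))) :
    (cayi k : Mt n) = 1 - (2 : ℂ) • (1 + (k : Mt n))⁻¹ := by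
  have h' : IsUnit (1 + (k : Mt n))ᴴ := by
    have := h.star
    rwa [star_eq_conjTranspose] at this
  have e : (1 + (k : Mt n))⁻¹ + ((1 + (k : Mt n))⁻¹)ᴴ = 1 := by
    rw [conjTranspose_nonsing_inv]
    set R := (1 + (k : Mt n))⁻¹
    set S := ((1 + (k : Mt n))ᴴ)⁻¹
    calc R + S = R * ((1 + (k : Mt n))ᴴ * S) + (R * (1 + (k : Mt n))) * S := by
          rw [mul_inv' h', inv_mul' h, Matrix.mul_one, Matrix.one_mul]
      _ = R * ((1 + (k : Mt n))ᴴ + (1 + (k : Mt n))) * S := by noncomm_ring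
      _ = R * ((1 + (k : Mt n)) * (1 + (k : Mt n))ᴴ) * S := by
          congr 2
          rw [conjTranspose_add, conjTranspose_one, add_mul, mul_add, mul_add, un_mul_star]
          simp only [one_mul, mul_one]
          abel
      _ = (R * (1 + (k : Mt n))) * ((1 + (k : Mt n))ᴴ * S) := by noncomm_ring
      _ = 1 := by rw [mul_inv' h', inv_mul' h, Matrix.mul_one]
  have e2 := eq_sub_of_add_eq' e
  change (2 : ℂ)⁻¹ • ((1 - (2 : ℂ) • (1 + (k : Mt n))⁻¹) - (1 - (2 : ℂ) • (1 + (k : Mt n))⁻¹)ᴴ) = _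
  rw [conjTranspose_sub, conjTranspose_smul, e2, conjTranspose_one]
  have : star (2 : ℂ) = 2 := by simp
  rw [this]
  module

theorem cayi_cay (X : sk n) : cayi (cay X) = X := by
  refine Subtype.ext ?_
  rw [cayi_coe (isUnit_one_add_cay X), one_add_cay_inv]
  module

theorem cay_cayi {k : Un n} (h : IsUnit (1 + (k : Mt n))) : cay (cayi k) = k := by
  refine Subtype.ext ?_
  rw [cay_coe, cayi_coe h]
  have : (1 - (1 - (2 : ℂ) • (1 + (k : Mt n))⁻¹))⁻¹ = (2 : ℂ)⁻¹ • (1 + (k : Mt n)) := by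
    refine inv_eq_right_inv ?_
    rw [sub_sub_cancel, smul_mul_smul_comm, inv_mul' h]; simp
  rw [this]
  module

theorem cayi_continuousAt {k : Un n} (h : IsUnit (1 + (k : Mt n))) : ContinuousAt cayi k := by
  have : ContinuousAt (fun k : Un n => (1 + (k : Mt n))⁻¹) k := continuous_inv_of (by fun_prop) h
  refine Topology.IsInducing.subtypeVal.continuousAt_iff.2 ?_
  have h1 : ContinuousAt (fun k : Un n => 1 - (2 : ℂ) • (1 + (k : Mt n))⁻¹) k :=
    continuousAt_const.sub (ContinuousAt.const_smul this (2 : ℂ))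
  exact ContinuousAt.const_smul (h1.sub h1.star) (2 : ℂ)⁻¹

theorem cay_conj (g : Un n) (X : sk n) : cay (rhoS g X) = g * cay X * g⁻¹ := by
  refine Subtype.ext ?_
  have hg : (g : Mt n)⁻¹ = (g : Mt n)ᴴ := inv_eq_left_inv (un_star_mul g)
  have hg' : ((g : Mt n)ᴴ)⁻¹ = (g : Mt n) := inv_eq_left_inv (un_mul_star g)
  have e : 1 - (g : Mt n) * X * (g : Mt n)ᴴ = (g : Mt n) * (1 - (X : Mt n)) * (g : Mt n)ᴴ := by
    rw [mul_sub, sub_mul, mul_one, un_mul_star]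
  change _ = (g : Mt n) * (cay X : Mt n) * (g : Mt n)ᴴ
  rw [cay_coe, cay_coe, rhoS_apply, e, Matrix.mul_inv_rev, Matrix.mul_inv_rev, hg, hg', mul_sub, sub_mul, mul_one,
    un_mul_star]
  simp [Matrix.mul_assoc]

theorem cay_zero : cay (0 : sk n) = 1 := by
  refine Subtype.ext ?_
  rw [cay_coe]
  simp
  module

theorem comm_cay {M : Mt n} {X : sk n} (h : M * X = X * M) : M * cay X = cay X * M := by
  have : M * (1 - (X : Mt n)) = (1 - (X : Mt n)) * M := by rw [mul_sub, sub_mul, h]; simp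
  have := comm_inv (isUnit_one_sub X) this
  rw [cay_coe, mul_sub, sub_mul, mul_smul_comm, this]; simp

theorem comm_cayi {M : Mt n} {k : Un n} (hk : IsUnit (1 + (k : Mt n))) (h : M * k = k * M) :
    M * cayi k = cayi k * M := by
  have : M * (1 + (k : Mt n)) = (1 + (k : Mt n)) * M := by rw [mul_add, add_mul, h]; simp
  have := comm_inv hk this
  rw [cayi_coe hk, mul_sub, sub_mul, mul_smul_comm, this]; simp

theorem isOpen_isUnit_one_add : IsOpen {k : Un n | IsUnit (1 + (k : Mt n))} :=
  Units.isOpen.preimage (f := fun k : Un n => 1 + (k : Mt n)) (by fun_prop)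

end Cay

/-! ### Reducible tuples and Cayley charts -/

section Irr

open Matrix
open scoped Matrix.Norms.Frobenius

variable {n r : ℕ}

/-- A nontrivial orthogonal projection. -/
def NProj (P : Mt n) : Prop := P * P = P ∧ Pᴴ = P ∧ P ≠ 0 ∧ P ≠ 1

/-- A tuple of matrices that commutes with a nontrivial orthogonal projection. For unitary or
skew-Hermitian tuples this is reducibility. -/
def Red (x : Fin r → Mt n) : Prop := ∃ P : Mt n, NProj P ∧ ∀ i, P * x i = x i * P

/-- A nonzero proper subspace is the range of a nontrivial orthogonal projection. -/
theorem exists_nproj (p : Submodule ℂ (Fin n → ℂ)) (h0 : p ≠ ⊥) (h1 : p ≠ ⊤) :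
    ∃ P : Mt n, NProj P ∧ (∀ v, P *ᵥ v ∈ p) ∧ ∀ v ∈ p, P *ᵥ v = v := by
  let e := (WithLp.linearEquiv 2 ℂ (Fin n → ℂ))
  let p' : Submodule ℂ (EuclideanSpace ℂ (Fin n)) := p.comap e.toLinearMap
  let T := toEuclideanCLM (𝕜 := ℂ) (n := Fin n)
  let P : Mt n := T.symm p'.starProjection
  have hP : T P = p'.starProjection := T.apply_symm_apply _
  have hP2 : ∀ v, WithLp.toLp 2 (P *ᵥ v) = p'.starProjection (WithLp.toLp 2 v) := fun v => by
    rw [← hP]; exact (toEuclideanCLM_toLp _ _).symm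
  have hs0 : IsStarProjection p'.starProjection := isStarProjection_starProjection
  have hs1 : P * P = P := by
    rw [← map_mul, hs0.isIdempotentElem.eq]
  have hs2 : star P = P := T.injective (by
    change T (star P) = T P
    rw [map_star T, hP, hs0.isSelfAdjoint.star_eq])
  have hm : ∀ v, P *ᵥ v ∈ p := fun v => by
    have := p'.starProjection_apply_mem (WithLp.toLp 2 v)
    rw [← hP2] at this
    exact this
  have hi : ∀ v ∈ p, P *ᵥ v = v := fun v hv => by
    have : p'.starProjection (WithLp.toLp 2 v) = WithLp.toLp 2 v :=
      Submodule.starProjection_eq_self_iff.2 hv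
    rw [← hP2] at this
    exact WithLp.toLp_injective 2 this
  refine ⟨P, ⟨hs1, hs2, ?_, ?_⟩, hm, hi⟩
  · intro h
    refine h0 ((Submodule.eq_bot_iff _).2 fun v hv => ?_)
    rw [← hi v hv, h, zero_mulVec]
  · intro h
    refine h1 (Submodule.eq_top_iff'.2 fun v => ?_)
    have := hm v
    rwa [h, one_mulVec] at this

open scoped ComplexOrder in
/-- A unitary matrix preserving the range of an orthogonal projection commutes with it. -/
theorem comm_of_invariant {P : Mt n} (hP : P * P = P) (hPs : Pᴴ = P) (k : Un n)
    (h : P * k * P = k * P) : P * k = k * P := by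
  have h' : P * (k : Mt n)ᴴ * P = P * (k : Mt n)ᴴ := by
    have := congrArg conjTranspose h
    simpa [conjTranspose_mul, hPs, Matrix.mul_assoc] using this
  set N := P * (k : Mt n) - k * P with hN
  have e : N * Nᴴ = P - k * P * (k : Mt n)ᴴ := by
    rw [hN, conjTranspose_sub, conjTranspose_mul, conjTranspose_mul, hPs]
    calc (P * (k : Mt n) - k * P) * ((k : Mt n)ᴴ * P - P * (k : Mt n)ᴴ)
        = P * ((k : Mt n) * (k : Mt n)ᴴ) * P - (P * k * P) * (k : Mt n)ᴴ -
          k * (P * (k : Mt n)ᴴ * P) + k * (P * P) * (k : Mt n)ᴴ := by noncomm_ring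
      _ = _ := by rw [h, h', un_mul_star, hP]; simp [hP, Matrix.mul_assoc]
  have e2 : (N * Nᴴ).trace = 0 := by
    rw [e, trace_sub, trace_mul_comm (_ * P), ← Matrix.mul_assoc, un_star_mul, Matrix.one_mul,
      sub_self]
  exact sub_eq_zero.1 (trace_mul_conjTranspose_self_eq_zero_iff.1 e2)

theorem irr_iff (A : Fin r → Un n) :
    IsIrreducibleTupleU A ↔ ¬ Red (fun i => (A i : Mt n)) := by
  constructor
  · rintro h ⟨P, ⟨h1, -, h3, h4⟩, hc⟩
    have hinv : ∀ i, ∀ v ∈ LinearMap.range P.mulVecLin,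
        (A i : Mt n).mulVec v ∈ LinearMap.range P.mulVecLin := by
      rintro i v ⟨w, rfl⟩
      refine ⟨(A i : Mt n) *ᵥ w, ?_⟩
      simp only [mulVecLin_apply, mulVec_mulVec]
      rw [hc i]
    rcases h (LinearMap.range P.mulVecLin) hinv with h0 | h0
    · rw [LinearMap.range_eq_bot] at h0
      exact h3 (mulVec_injective (funext fun v => by
        have := LinearMap.congr_fun h0 v
        simpa using this))
    · refine h4 ?_
      rw [LinearMap.range_eq_top] at h0
      have hu : IsUnit P := mulVec_surjective_iff_isUnit.1 h0
      exact hu.mul_left_cancel (by rw [h1, mul_one])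
  · intro h p hp
    by_contra! hne
    obtain ⟨P, hP, hm, hi⟩ := exists_nproj p hne.1 hne.2
    refine h ⟨P, hP, fun i => comm_of_invariant hP.1 hP.2.1 (A i) ?_⟩
    refine mulVec_injective (funext fun v => ?_)
    rw [Matrix.mul_assoc, ← mulVec_mulVec, ← mulVec_mulVec]
    exact hi _ (hp i _ (hm v))

theorem red_conj (g : Un n) {x : Fin r → Mt n} (h : Red x) :
    Red (fun i => (g : Mt n) * x i * (g : Mt n)ᴴ) := by
  obtain ⟨P, ⟨h1, h2, h3, h4⟩, hc⟩ := h
  have key : ∀ a b : Mt n, ((g : Mt n) * a * (g : Mt n)ᴴ) * ((g : Mt n) * b * (g : Mt n)ᴴ) =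
      (g : Mt n) * (a * b) * (g : Mt n)ᴴ := fun a b => by
    calc _ = (g : Mt n) * a * ((g : Mt n)ᴴ * (g : Mt n)) * b * (g : Mt n)ᴴ := by noncomm_ring
      _ = _ := by rw [un_star_mul]; noncomm_ring
  have inv : ∀ a : Mt n, (g : Mt n)ᴴ * ((g : Mt n) * a * (g : Mt n)ᴴ) * (g : Mt n) = a := fun a => by
    calc _ = ((g : Mt n)ᴴ * (g : Mt n)) * a * ((g : Mt n)ᴴ * (g : Mt n)) := by noncomm_ring
      _ = _ := by rw [un_star_mul]; simp
  refine ⟨(g : Mt n) * P * (g : Mt n)ᴴ, ⟨?_, ?_, ?_, ?_⟩, fun i => ?_⟩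
  · rw [key, h1]
  · simp [conjTranspose_mul, h2, Matrix.mul_assoc]
  · intro h
    exact h3 (by rw [← inv P, h]; simp)
  · intro h
    exact h4 (by rw [← inv P, h]; simp [un_star_mul])
  · rw [key, key, hc]

/-- The quotient map onto the character variety. -/
def quo (n r : ℕ) : (Fin r → Un n) → CharVarU n r :=
  Quotient.mk (MulAction.orbitRel (ConjAct (Un n)) (Fin r → Un n))

theorem quo_eq (k l : Fin r → Un n) :
    quo n r k = quo n r l ↔ ∃ g : Un n, ∀ i, g * k i * g⁻¹ = l i := by
  unfold quo
  rw [eq_comm, Quotient.eq, MulAction.orbitRel_apply]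
  constructor
  · rintro ⟨g, hg⟩
    refine ⟨ConjAct.ofConjAct g, fun i => ?_⟩
    rw [← ConjAct.smul_def]; exact congrFun hg i
  · rintro ⟨g, hg⟩
    refine ⟨ConjAct.toConjAct g, funext fun i => ?_⟩
    rw [← hg i]; rfl

theorem quo_open : IsOpenQuotientMap (quo n r) := MulAction.isOpenQuotientMap_quotientMk

theorem quo_mem (k : Fin r → Un n) :
    quo n r k ∈ irrLocusU n r ↔ ¬ Red (fun i => (k i : Mt n)) := by
  constructor
  · rintro ⟨A, hA, hk⟩ hr
    obtain ⟨g, hg⟩ := (quo_eq k A).1 hk.symm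
    refine (irr_iff A).1 hA ?_
    have := red_conj g hr
    convert this using 2 with i
    rw [← hg i]; rfl
  · intro h
    exact ⟨k, (irr_iff k).2 h, rfl⟩

/-- Nontrivial projections form a closed set because nonzero projections have norm at least `1`. -/
theorem nproj_compact : IsCompact {P : Mt n | NProj P} := by
  have e : {P : Mt n | NProj P} =
      {P | P * P = P} ∩ {P | Pᴴ = P} ∩ {P | 1 ≤ ‖P‖} ∩ {P | 1 ≤ ‖1 - P‖} := by
    have key : ∀ P : Mt n, P * P = P → (P ≠ 0 ↔ 1 ≤ ‖P‖) := fun P h => by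
      constructor
      · intro h0
        have h1 : ‖P‖ ≤ ‖P‖ * ‖P‖ := by
          conv_lhs => rw [← h]
          exact norm_mul_le _ _
        have : 0 < ‖P‖ := norm_pos_iff.2 h0
        nlinarith
      · rintro h1 rfl
        rw [norm_zero] at h1; linarith
    ext P
    simp only [NProj, mem_inter_iff, mem_ofPred_eq]
    constructor
    · rintro ⟨h1, h2, h3, h4⟩
      exact ⟨⟨⟨h1, h2⟩, (key P h1).1 h3⟩, (key (1 - P) (by
        rw [sub_mul, mul_sub, mul_sub, h1]; simp)).1 (sub_ne_zero.2 (Ne.symm h4))⟩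
    · rintro ⟨⟨⟨h1, h2⟩, h3⟩, h4⟩
      refine ⟨h1, h2, (key P h1).2 h3, fun h => ?_⟩
      rw [h, sub_self, norm_zero] at h4; linarith
  rw [e]
  refine Metric.isCompact_of_isClosed_isBounded ?_ ?_
  · refine ((IsClosed.inter ?_ ?_).inter ?_).inter ?_
    · exact isClosed_eq (by fun_prop) (by fun_prop)
    · exact isClosed_eq (by fun_prop) (by fun_prop)
    · exact isClosed_le (by fun_prop) (by fun_prop)
    · exact isClosed_le (by fun_prop) (by fun_prop)
  · refine (Metric.isBounded_iff_subset_closedBall 0).2 ⟨‖(1 : Mt n)‖, fun P hP => ?_⟩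
    rw [mem_closedBall_zero_iff]
    obtain ⟨⟨⟨h1, h2⟩, -⟩, -⟩ := hP
    simp only [mem_ofPred_eq] at h1 h2
    have h3 : inner ℝ P (1 - P) = 0 := by
      rw [inner_def, h2, mul_sub, h1]; simp
    have := norm_add_sq_real P (1 - P)
    rw [h3, add_sub_cancel] at this
    nlinarith [norm_nonneg P, norm_nonneg (1 : Mt n), sq_nonneg ‖1 - P‖]

theorem red_closed : IsClosed {x : Fin r → Mt n | Red x} := by
  have : CompactSpace {P : Mt n | NProj P} := isCompact_iff_compactSpace.1 nproj_compact
  have hc : IsClosed {p : {P : Mt n | NProj P} × (Fin r → Mt n) |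
      ∀ i, (p.1 : Mt n) * p.2 i = p.2 i * p.1} := by
    rw [ofPred_forall]
    exact isClosed_iInter fun i => isClosed_eq (by fun_prop) (by fun_prop)
  convert isClosedMap_snd_of_compactSpace _ hc using 1
  ext x
  constructor
  · rintro ⟨P, hP, h⟩
    exact ⟨(⟨P, hP⟩, x), h, rfl⟩
  · rintro ⟨⟨P, y⟩, h, rfl⟩
    exact ⟨P, P.2, h⟩

theorem irrLocus_open : IsOpen (irrLocusU n r) := by
  rw [← quo_open.isQuotientMap.isOpen_preimage]
  have : quo n r ⁻¹' irrLocusU n r =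
      (fun k : Fin r → Un n => fun i => (k i : Mt n)) ⁻¹' {x : Fin r → Mt n | Red x}ᶜ := by
    ext k
    exact quo_mem k
  rw [this]
  exact red_closed.isOpen_compl.preimage (by fun_prop)

instance charVar_compact : CompactSpace (CharVarU n r) :=
  Quotient.compactSpace

instance charVar_t2 : T2Space (CharVarU n r) := by
  rw [t2Space_iff_of_isOpenQuotientMap (quo_open (n := n) (r := r))]
  have hc : IsClosed {p : Un n × ((Fin r → Un n) × (Fin r → Un n)) |
      ∀ i, p.1 * p.2.1 i * p.1⁻¹ = p.2.2 i} := by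
    rw [ofPred_forall]
    exact isClosed_iInter fun i => isClosed_eq (by fun_prop) (by fun_prop)
  convert isClosedMap_snd_of_compactSpace _ hc using 1
  ext p
  simp only [mem_ofPred_eq, quo_eq]
  constructor
  · rintro ⟨g, h⟩
    exact ⟨(g, p), h, rfl⟩
  · rintro ⟨⟨g, y⟩, h, rfl⟩
    exact ⟨g, h⟩

instance charVar_sc : SecondCountableTopology (CharVarU n r) := by
  have : SecondCountableTopology (Mt n) := by
    exact inferInstanceAs (SecondCountableTopology ((i : Fin n) → (j : Fin n) → ℂ))
  have : SecondCountableTopology (Un n) :=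
    TopologicalSpace.Subtype.secondCountableTopology _
  exact quo_open.isQuotientMap.secondCountableTopology quo_open.isOpenMap

end Irr

section Chart

open Matrix
open scoped Matrix.Norms.Frobenius

variable {n r : ℕ}

/-- The scalar unitary matrix `c`. -/
noncomputable def scal (c : Circle) : Un n := ⟨(c : ℂ) • 1, by
  have h : star ((c : ℂ) • (1 : Mt n)) * ((c : ℂ) • (1 : Mt n)) = 1 := by
    rw [star_smul, star_one, smul_mul_smul_comm, mul_one]
    have : star (c : ℂ) * c = 1 := by
      rw [Complex.star_def, ← Complex.normSq_eq_conj_mul_self]; simp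
    rw [this, one_smul]
  exact Unitary.mem_iff.2 ⟨h, mul_eq_one_comm.1 h⟩⟩

theorem scal_coe (c : Circle) : ((scal c : Un n) : Mt n) = (c : ℂ) • 1 := rfl

theorem scal_mul_coe (c : Circle) (k : Un n) : ((scal c * k : Un n) : Mt n) = (c : ℂ) • (k : Mt n) := by
  change (c : ℂ) • (1 : Mt n) * (k : Mt n) = _
  simp

theorem scal_comm (c : Circle) (k : Un n) : scal c * k = k * scal c := by
  refine Subtype.ext ?_
  change (c : ℂ) • (1 : Mt n) * (k : Mt n) = (k : Mt n) * (c : ℂ) • (1 : Mt n)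
  simp

/-- Some scalar rotation of a unitary matrix lies in the domain of the inverse Cayley transform. -/
theorem exists_scal (k : Un n) : ∃ c : Circle, IsUnit (1 + ((scal c * k : Un n) : Mt n)) := by
  have hinf : Infinite Circle := by
    have : Infinite (Ioc (-Real.pi) Real.pi) :=
      (Set.Ioc_infinite (by linarith [Real.pi_pos])).to_subtype
    exact Infinite.of_injective _ Circle.argEquiv.symm.injective
  have hne : (k : Mt n).charpoly ≠ 0 := (charpoly_monic _).ne_zero
  have hfin : {c : Circle | ((k : Mt n).charpoly.eval (-(c⁻¹ : Circle) : ℂ)) = 0}.Finite := by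
    have h1 : {z : ℂ | (k : Mt n).charpoly.IsRoot z}.Finite :=
      Polynomial.finite_setOfPred_isRoot hne
    refine h1.preimage (f := fun c : Circle => (-(c⁻¹ : Circle) : ℂ)) ?_
    intro a _ b _ h
    have := Circle.coe_injective (neg_injective h)
    exact inv_injective this
  obtain ⟨c, hc⟩ := hfin.exists_notMem
  refine ⟨c, ?_⟩
  rw [mem_ofPred_eq, eval_charpoly] at hc
  rw [scal_mul_coe, isUnit_iff_isUnit_det, isUnit_iff_ne_zero]
  intro h
  refine hc ?_
  have : scalar (Fin n) (-(c⁻¹ : Circle) : ℂ) - (k : Mt n) =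
      (-(c⁻¹ : Circle) : ℂ) • (1 + (c : ℂ) • (k : Mt n)) := by
    rw [smul_add, smul_smul, scalar_apply, ← smul_one_eq_diagonal]
    have : (-(c⁻¹ : Circle) : ℂ) * c = -1 := by simp
    rw [this]; simp [sub_eq_add_neg]
  rw [this, det_smul, h, mul_zero]

/-- The Cayley chart of `U(n)^r` centred at the tuple of scalar matrices `(c i)⁻¹`. -/
noncomputable def chart (c : Fin r → Circle) (x : Tu n r) : Fin r → Un n :=
  fun i => (scal (c i))⁻¹ * cay (x i)

theorem chart_continuous (c : Fin r → Circle) : Continuous (chart c : Tu n r → _) := by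
  refine continuous_pi fun i => continuous_const.mul (cay_continuous.comp ?_)
  fun_prop

theorem exists_chart (k : Fin r → Un n) : ∃ (c : Fin r → Circle) (x : Tu n r), chart c x = k := by
  choose c hc using fun i => exists_scal (k i)
  refine ⟨c, WithLp.toLp 2 fun i => cayi (scal (c i) * k i), funext fun i => ?_⟩
  change (scal (c i))⁻¹ * cay (cayi (scal (c i) * k i)) = k i
  rw [cay_cayi (hc i), inv_mul_cancel_left]

theorem chart_open (c : Fin r → Circle) : IsOpenMap (chart c : Tu n r → _) := by
  intro s hs
  let U : Set (Fin r → Un n) := {k | ∀ i, IsUnit (1 + ((scal (c i) * k i : Un n) : Mt n))}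
  let Φ : (Fin r → Un n) → Tu n r := fun k => WithLp.toLp 2 fun i => cayi (scal (c i) * k i)
  have hU : IsOpen U := by
    have : U = ⋂ i, {k | IsUnit (1 + ((scal (c i) * k i : Un n) : Mt n))} := by
      ext k; simp [U]
    rw [this]
    exact isOpen_iInter_of_finite fun i => isOpen_isUnit_one_add.preimage
      (f := fun k : Fin r → Un n => scal (c i) * k i) (by fun_prop)
  have hΦ : ContinuousOn Φ U := fun k hk => by
    refine ContinuousAt.continuousWithinAt ?_
    refine (PiLp.continuous_toLp 2 _).continuousAt.comp (continuousAt_pi.2 fun i => ?_)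
    exact ContinuousAt.comp (f := fun k : Fin r → Un n => scal (c i) * k i)
      (cayi_continuousAt (hk i)) (Continuous.continuousAt (by fun_prop))
  have : chart c '' s = U ∩ Φ ⁻¹' s := by
    ext k
    constructor
    · rintro ⟨x, hx, rfl⟩
      have e : ∀ i, scal (c i) * chart c x i = cay (x i) := fun i => mul_inv_cancel_left _ _
      refine ⟨fun i => ?_, ?_⟩
      · rw [e]; exact isUnit_one_add_cay _
      · have : Φ (chart c x) = x := by
          ext i : 1
          change cayi (scal (c i) * chart c x i) = x i
          rw [e, cayi_cay]
        rw [mem_preimage, this]; exact hx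
    · rintro ⟨hk, hs⟩
      refine ⟨_, hs, funext fun i => ?_⟩
      change (scal (c i))⁻¹ * cay (cayi (scal (c i) * k i)) = k i
      rw [cay_cayi (hk i), inv_mul_cancel_left]
  rw [this]
  exact hΦ.isOpen_inter_preimage hU hs

/-- The Cayley chart followed by the quotient map. -/
noncomputable def qc (c : Fin r → Circle) (x : Tu n r) : CharVarU n r := quo n r (chart c x)

theorem qc_continuous (c : Fin r → Circle) : Continuous (qc c : Tu n r → _) :=
  quo_open.continuous.comp (chart_continuous c)

theorem qc_open (c : Fin r → Circle) : IsOpenMap (qc c : Tu n r → _) :=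
  quo_open.isOpenMap.comp (chart_open c)

theorem qc_eq (c : Fin r → Circle) (v w : Tu n r) : qc c v = qc c w ↔ ∃ g, rho g v = w := by
  unfold qc
  rw [quo_eq]
  refine exists_congr fun g => ?_
  have e : ∀ i, g * chart c v i * g⁻¹ = (scal (c i))⁻¹ * cay (rho g v i) := fun i => by
    have hc : Commute (scal (c i) : Un n)⁻¹ g := Commute.inv_left (scal_comm (c i) g)
    rw [rho_apply, cay_conj, chart, ← mul_assoc, ← hc.eq]
    simp only [mul_assoc]
  constructor
  · intro h
    ext i : 1
    have := h i
    rw [e, chart] at this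
    have := congrArg cayi (mul_left_cancel this)
    rwa [cayi_cay, cayi_cay] at this
  · rintro rfl i
    rw [e, chart]

theorem qc_mem (c : Fin r → Circle) (x : Tu n r) :
    qc c x ∈ irrLocusU n r ↔ ¬ Red (fun i => (x i : Mt n)) := by
  unfold qc
  rw [quo_mem]
  refine not_congr (exists_congr fun P => and_congr_right fun _ => forall_congr' fun i => ?_)
  have e : scal (c i) * chart c x i = cay (x i) := mul_inv_cancel_left _ _
  have e1 : (c i : ℂ) • (chart c x i : Mt n) = cay (x i) := by rw [← e, scal_mul_coe]
  have e2 : P * (chart c x i : Mt n) = (chart c x i : Mt n) * P ↔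
      P * (cay (x i) : Mt n) = cay (x i) * P := by
    rw [← e1, mul_smul_comm, smul_mul_assoc]
    exact (smul_right_inj (Circle.coe_ne_zero _)).symm
  rw [e2]
  constructor
  · intro h
    have := comm_cayi (isUnit_one_add_cay (x i)) h
    rwa [cayi_cay] at this
  · exact comm_cay

end Chart

/-! ### The reducible locus has codimension at least three -/

section Gp

open Matrix
open scoped Matrix.Norms.Frobenius

variable {n r : ℕ}

/-- There is a set `N` of columns of `Θ` that is linearly independent and spans all columns. -/
theorem exists_columns (Θ : Mt n) : ∃ N : Finset (Fin n),
    (∀ j, ∃ w : Fin n → ℂ, (∀ i ∉ N, w i = 0) ∧ Θ *ᵥ w = Θ *ᵥ Pi.single j 1) ∧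
    ∀ w : Fin n → ℂ, (∀ i ∉ N, w i = 0) → Θ *ᵥ w = 0 → w = 0 := by
  obtain ⟨κ, a, ha, hs, hi⟩ := exists_linearIndependent' ℂ
    (fun j : Fin n => Θ *ᵥ (Pi.single j 1 : Fin n → ℂ))
  have : Finite κ := Finite.of_injective a ha
  have : Fintype κ := Fintype.ofFinite κ
  refine ⟨Finset.univ.image a, fun j => ?_, fun w hw h0 => ?_⟩
  · have hj : Θ *ᵥ (Pi.single j 1 : Fin n → ℂ) ∈
        Submodule.span ℂ (range ((fun j : Fin n => Θ *ᵥ (Pi.single j 1 : Fin n → ℂ)) ∘ a)) := by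
      rw [hs]; exact Submodule.subset_span ⟨j, rfl⟩
    obtain ⟨c, hc⟩ := (Submodule.mem_span_range_iff_exists_fun ℂ).1 hj
    refine ⟨∑ k, c k • Pi.single (a k) 1, fun i hi => ?_, ?_⟩
    · rw [Finset.sum_apply]
      refine Finset.sum_eq_zero fun k _ => ?_
      have : i ≠ a k := fun h => hi (h ▸ Finset.mem_image_of_mem a (Finset.mem_univ k))
      simp [Pi.single_eq_of_ne this]
    · rw [mulVec_sum, ← hc]
      refine Finset.sum_congr rfl fun k _ => ?_
      rw [mulVec_smul]; rfl
  · have e : w = ∑ k, w (a k) • Pi.single (a k) 1 := by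
      have h1 : w = ∑ j, w j • (Pi.single j 1 : Fin n → ℂ) := by
        rw [← Finset.univ_sum_single w]
        refine Finset.sum_congr rfl fun j _ => ?_
        ext i
        simp [Pi.single_apply]
      conv_lhs => rw [h1]
      rw [← Finset.sum_subset (Finset.subset_univ (Finset.univ.image a)) fun j _ hj => by
        rw [hw j hj, zero_smul], Finset.sum_image fun x _ y _ h => ha h]
    have h2 : ∀ k, w (a k) = 0 := by
      refine Fintype.linearIndependent_iff.1 hi (fun k => w (a k)) ?_
      rw [e, mulVec_sum] at h0
      rw [← h0]
      refine Finset.sum_congr rfl fun k _ => ?_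
      rw [mulVec_smul]; rfl
    rw [e]
    exact Finset.sum_eq_zero fun k _ => by rw [h2, zero_smul]

/-- The coordinate projection attached to a set of indices. -/
noncomputable def cpr (S : Finset (Fin n)) : Mt n := diagonal fun i => if i ∈ S then 1 else 0

theorem cpr_mul (S : Finset (Fin n)) (M : Mt n) (i j : Fin n) :
    (cpr S * M) i j = if i ∈ S then M i j else 0 := by
  rw [cpr, diagonal_mul]; split_ifs <;> simp

theorem mul_cpr (S : Finset (Fin n)) (M : Mt n) (i j : Fin n) :
    (M * cpr S) i j = if j ∈ S then M i j else 0 := by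
  rw [cpr, mul_diagonal]; split_ifs <;> simp

theorem cpr_star (S : Finset (Fin n)) : (cpr S)ᴴ = cpr S := by
  rw [cpr, diagonal_conjTranspose]
  congr 1
  ext i
  simp only [Pi.star_apply]
  split_ifs <;> simp

/-- The range of a nontrivial projection `P` is the graph of a linear map `T` over the coordinate
subspace of `S`; then `1 + T - Tᴴ` intertwines `P` and the projection onto that subspace. -/
theorem exists_graph {P : Mt n} (hP : NProj P) : ∃ (S : Finset (Fin n)) (T : Mt n),
    S.Nonempty ∧ S ≠ Finset.univ ∧ (∀ i j, ¬ (i ∉ S ∧ j ∈ S) → T i j = 0) ∧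
    P * (1 + (T - Tᴴ)) = (1 + (T - Tᴴ)) * cpr S := by
  obtain ⟨h1, h2, h3, h4⟩ := hP
  obtain ⟨N, hN, hk⟩ := exists_columns (1 - P)
  choose w hw hw2 using hN
  let C : Mt n := Matrix.of fun i j => w j i
  have hCs : ∀ j, C *ᵥ Pi.single j 1 = w j := fun j => by
    ext i; simp [C]
  have hC : (1 - P) * C = 1 - P := by
    refine ext_of_mulVec_single fun j => ?_
    rw [← mulVec_mulVec, hCs, hw2]
  have hCN : ∀ i j, i ∉ N → C i j = 0 := fun i j hi => hw j i hi
  have hCd : ∀ j ∈ N, w j = Pi.single j 1 := fun j hj => by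
    refine sub_eq_zero.1 (hk _ (fun i hi => ?_) ?_)
    · have : i ≠ j := fun h => hi (h ▸ hj)
      simp [hw j i hi, Pi.single_eq_of_ne this]
    · rw [mulVec_sub, hw2, sub_self]
  have hCP : C * P = 0 := by
    refine ext_of_mulVec_single fun j => ?_
    rw [← mulVec_mulVec, zero_mulVec]
    refine hk _ (fun i hi => ?_) ?_
    · have : C i = 0 := funext fun l => hCN i l hi
      rw [mulVec, this, zero_dotProduct]
    · rw [mulVec_mulVec, mulVec_mulVec, hC, sub_mul, one_mul, h1, sub_self,
        zero_mulVec]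
  set J : Mt n := 1 - C with hJ
  have hPJ : P * J = J := by
    have : (1 - P) * J = 0 := by rw [hJ, mul_sub, hC, mul_one, sub_self]
    rw [sub_mul, one_mul, sub_eq_zero] at this
    exact this.symm
  have hJP : J * P = P := by rw [hJ, sub_mul, hCP, one_mul, sub_zero]
  have hJe : ∀ i j, J i j = if j ∈ N then 0 else if i ∈ N then - C i j else (1 : Mt n) i j :=
      fun i j => by
    rw [hJ, Matrix.sub_apply]
    split_ifs with hj hi
    · have : C i j = (Pi.single j 1 : Fin n → ℂ) i := by rw [← hCd j hj]; rfl
      rw [this, one_apply, Pi.single_apply]; simp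
    · have hij : i ≠ j := fun h => hj (h ▸ hi)
      rw [one_apply_ne hij, zero_sub]
    · rw [hCN i j hi, sub_zero]
  have hQJ : cpr Nᶜ * J = cpr Nᶜ := by
    ext i j
    rw [cpr_mul, hJe, cpr, diagonal_apply]
    by_cases hi : i ∈ N <;> by_cases hj : j ∈ N <;> simp [hi, hj, one_apply]
    rintro rfl; exact hi hj
  have hJQ : J * cpr Nᶜ = J := by
    ext i j
    rw [mul_cpr, hJe]
    by_cases hj : j ∈ N <;> simp [hj]
  have hT : ∀ i j, ¬ (i ∉ Nᶜ ∧ j ∈ Nᶜ) → (J - cpr Nᶜ) i j = 0 := fun i j h => by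
    rw [Matrix.sub_apply, hJe, cpr, diagonal_apply]
    simp only [Finset.mem_compl, not_and, not_not] at h ⊢
    by_cases hi : i ∈ N <;> by_cases hj : j ∈ N <;> simp [hi, hj, one_apply] at h ⊢
    rintro rfl; exact hi hj
  refine ⟨Nᶜ, J - cpr Nᶜ, ?_, ?_, hT, ?_⟩
  · by_contra hne
    rw [Finset.not_nonempty_iff_eq_empty] at hne
    refine h3 ?_
    have : J = 0 := by
      rw [← hJQ, hne]
      ext i j
      rw [mul_cpr]; simp
    rw [← hJP, this, zero_mul]
  · intro hu
    refine h4 ?_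
    have : C = 0 := by
      ext i j
      refine hCN i j fun hi => ?_
      have := Finset.mem_univ i
      rw [← hu, Finset.mem_compl] at this
      exact this hi
    rw [this, mul_zero] at hC
    exact (sub_eq_zero.1 hC.symm).symm
  · have e : (J - cpr Nᶜ) - (J - cpr Nᶜ)ᴴ = J - Jᴴ := by
      rw [conjTranspose_sub, cpr_star]; abel
    have e1 : P * Jᴴ = P := by
      have := congrArg conjTranspose hJP
      rwa [conjTranspose_mul, h2] at this
    have e2 : Jᴴ * cpr Nᶜ = cpr Nᶜ := by
      have := congrArg conjTranspose hQJ
      rwa [conjTranspose_mul, cpr_star] at this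
    rw [e, mul_add, mul_sub, e1, hPJ, add_mul, sub_mul, e2, hJQ]; simp

/-- The skew-Hermitian part of a matrix. -/
noncomputable def skp : Mt n →ₗ[ℝ] sk n where
  toFun X := ⟨(2 : ℂ)⁻¹ • (X - Xᴴ), by
    rw [mem_sk, conjTranspose_smul, conjTranspose_sub, conjTranspose_conjTranspose]
    have : star ((2 : ℂ)⁻¹) = 2⁻¹ := by simp
    rw [this, ← smul_neg, neg_sub]⟩
  map_add' X Y := Subtype.ext (by
    change (2 : ℂ)⁻¹ • (X + Y - (X + Y)ᴴ) = (2 : ℂ)⁻¹ • (X - Xᴴ) + (2 : ℂ)⁻¹ • (Y - Yᴴ)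
    rw [conjTranspose_add]; module)
  map_smul' c X := Subtype.ext (by
    change (2 : ℂ)⁻¹ • (c • X - (c • X)ᴴ) = c • ((2 : ℂ)⁻¹ • (X - Xᴴ))
    rw [conjTranspose_smul, star_trivial, ← smul_sub, smul_comm])

theorem skp_coe (X : Mt n) : (skp X : Mt n) = (2 : ℂ)⁻¹ • (X - Xᴴ) := rfl

theorem skp_of_mem {X : Mt n} (h : X ∈ sk n) : (skp X : Mt n) = X := by
  rw [skp_coe, mem_sk.1 h]; module

/-- Real matrices as skew-Hermitian matrices: `M ↦ (M - Mᵀ)/2 + i(M + Mᵀ)/2`. -/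
noncomputable def toSk : (Fin n → Fin n → ℝ) →ₗ[ℝ] sk n where
  toFun M := ⟨Matrix.of fun i j => (⟨(M i j - M j i) / 2, (M i j + M j i) / 2⟩ : ℂ), by
    rw [mem_sk]
    ext i j
    refine Complex.ext ?_ ?_ <;> simp <;> ring⟩
  map_add' X Y := Subtype.ext (by
    ext i j
    refine Complex.ext ?_ ?_ <;> (simp; ring))
  map_smul' c X := Subtype.ext (by
    ext i j
    refine Complex.ext ?_ ?_ <;> simp <;> ring)

theorem toSk_coe (M : Fin n → Fin n → ℝ) (i j : Fin n) :
    (toSk M : Mt n) i j = ⟨(M i j - M j i) / 2, (M i j + M j i) / 2⟩ := rfl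

theorem toSk_reim (D : sk n) :
    toSk (fun i j => ((D : Mt n) i j).re + ((D : Mt n) i j).im) = D := by
  refine Subtype.ext ?_
  ext i j
  have h : (D : Mt n) j i = - star ((D : Mt n) i j) := by
    have := congrFun (congrFun (sk_conj D) j) i
    rw [conjTranspose_apply, Matrix.neg_apply] at this
    rw [this, neg_neg]
  rw [toSk_coe, h]
  refine Complex.ext ?_ ?_ <;> simp <;> ring

theorem toSk_injective : Function.Injective (toSk : (Fin n → Fin n → ℝ) →ₗ[ℝ] sk n) := by
  intro M M' h
  ext i j
  have := congrArg (fun D : sk n => ((D : Mt n) i j).re + ((D : Mt n) i j).im) h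
  simp only [toSk_coe] at this
  linarith

theorem finrank_tu : r * (n * n) ≤ Module.finrank ℝ (Tu n r) := by
  let L : (Fin r → Fin n → Fin n → ℝ) →ₗ[ℝ] Tu n r :=
    (WithLp.linearEquiv 2 ℝ (Fin r → sk n)).symm.toLinearMap ∘ₗ
      LinearMap.pi fun i => toSk ∘ₗ LinearMap.proj i
  have hL : Function.Injective L := fun x y h => funext fun i => toSk_injective (by
    have := congrArg (fun z : Tu n r => z i) h
    exact this)
  have := LinearMap.finrank_le_finrank_of_injective hL
  simpa [Module.finrank_pi_fintype] using this

/-- Indices of the off-diagonal block. -/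
abbrev Off (S : Finset (Fin n)) : Type := {p : Fin n × Fin n // p.1 ∉ S ∧ p.2 ∈ S}

/-- Indices of the two diagonal blocks. -/
abbrev Dia (S : Finset (Fin n)) : Type := {p : Fin n × Fin n // p.1 ∈ S ↔ p.2 ∈ S}

/-- The matrix `T` supported on the off-diagonal block. -/
noncomputable def offT (S : Finset (Fin n)) : (Off S → ℂ) →ₗ[ℝ] Mt n where
  toFun t := Matrix.of fun i j => if h : i ∉ S ∧ j ∈ S then t ⟨(i, j), h⟩ else 0
  map_add' s t := by
    ext i j
    simp only [of_apply, Matrix.add_apply]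
    split_ifs <;> simp
  map_smul' c t := by
    ext i j
    simp only [of_apply, Matrix.smul_apply]
    split_ifs <;> simp

/-- The skew-Hermitian matrix `T - Tᴴ`. -/
noncomputable def offL (S : Finset (Fin n)) : (Off S → ℂ) →ₗ[ℝ] Mt n where
  toFun t := offT S t - (offT S t)ᴴ
  map_add' s t := by rw [map_add, conjTranspose_add]; abel
  map_smul' c t := by rw [map_smul, conjTranspose_smul, star_trivial, ← smul_sub]; rfl

/-- Block diagonal skew-Hermitian matrices. -/
noncomputable def diaL (S : Finset (Fin n)) : (Dia S → ℝ) →ₗ[ℝ] Mt n :=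
  (sk n).subtype ∘ₗ toSk ∘ₗ
    { toFun := fun d i j => if h : i ∈ S ↔ j ∈ S then d ⟨(i, j), h⟩ else 0
      map_add' := fun s t => by
        ext i j
        simp only [Pi.add_apply]
        split_ifs <;> simp
      map_smul' := fun c t => by
        ext i j
        simp only [Pi.smul_apply]
        split_ifs <;> simp }

/-- Parameters for tuples commuting with a projection whose range is a graph over the coordinate
subspace of `S`. -/
abbrev Par (r : ℕ) (S : Finset (Fin n)) : Type := (Off S → ℂ) × (Fin r → Dia S → ℝ)

/-- The parametrization of reducible tuples by `K D Kᴴ` with `K = 1 + T - Tᴴ` and `D` block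
diagonal. These matrices are skew-Hermitian, so `skp` only changes the codomain. -/
noncomputable def parF (S : Finset (Fin n)) (p : Par r S) : Tu n r :=
  WithLp.toLp 2 fun i => skp ((1 + offL S p.1) * diaL S (p.2 i) * (1 - offL S p.1))

theorem parF_contDiff (S : Finset (Fin n)) : ContDiff ℝ 1 (parF S : Par r S → Tu n r) := by
  refine PiLp.contDiff_toLp.comp (contDiff_pi.2 fun i => ?_)
  refine (LinearMap.toContinuousLinearMap (skp : Mt n →ₗ[ℝ] sk n)).contDiff.comp ?_
  have h1 : ContDiff ℝ 1 fun p : Par r S => offL S p.1 :=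
    (LinearMap.toContinuousLinearMap (offL S)).contDiff.comp contDiff_fst
  have h2 : ContDiff ℝ 1 fun p : Par r S => diaL S (p.2 i) :=
    (LinearMap.toContinuousLinearMap (diaL S)).contDiff.comp
      ((contDiff_apply ℝ (Dia S → ℝ) i).comp contDiff_snd)
  exact ((contDiff_const.add h1).mul h2).mul (contDiff_const.sub h1)

/-- Index sets of proper nonzero coordinate subspaces. -/
abbrev PS (n : ℕ) : Type := {S : Finset (Fin n) // S.Nonempty ∧ S ≠ Finset.univ}

theorem red_subset : {x : Tu n r | Red (fun i => (x i : Mt n))} ⊆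
    ⋃ S : PS n, range (parF S.1 : Par r S.1 → Tu n r) := by
  rintro x ⟨P, hP, hc⟩
  obtain ⟨S, T, hS1, hS2, hT, hPK⟩ := exists_graph hP
  refine mem_iUnion.2 ⟨⟨S, hS1, hS2⟩, ?_⟩
  have hsk : T - Tᴴ ∈ sk n := by rw [mem_sk, conjTranspose_sub, conjTranspose_conjTranspose, neg_sub]
  have hKu : IsUnit (1 + (T - Tᴴ)) := isUnit_one_add ⟨_, hsk⟩
  have hKs : (1 + (T - Tᴴ))ᴴ = 1 - (T - Tᴴ) := by
    rw [conjTranspose_add, conjTranspose_one, mem_sk.1 hsk, ← sub_eq_add_neg]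
  set K : Mt n := 1 + (T - Tᴴ) with hK
  have hKu' : IsUnit Kᴴ := by
    have := hKu.star
    rwa [star_eq_conjTranspose] at this
  let D : Fin r → Mt n := fun i => K⁻¹ * x i * (K⁻¹)ᴴ
  have hDs : ∀ i, D i ∈ sk n := fun i => by
    rw [mem_sk]
    simp only [D, conjTranspose_mul, conjTranspose_conjTranspose, sk_conj, Matrix.mul_assoc]
    simp
  have hx : ∀ i, K * D i * Kᴴ = x i := fun i => by
    calc K * D i * Kᴴ = (K * K⁻¹) * x i * ((K⁻¹)ᴴ * Kᴴ) := by simp only [D, Matrix.mul_assoc]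
      _ = x i := by rw [← conjTranspose_mul, mul_inv' hKu, conjTranspose_one]; simp
  have e1 : cpr S * K⁻¹ = K⁻¹ * P := by
    calc cpr S * K⁻¹ = (K⁻¹ * K) * cpr S * K⁻¹ := by rw [inv_mul' hKu, one_mul]
      _ = K⁻¹ * (P * K) * K⁻¹ := by rw [hPK]; simp only [Matrix.mul_assoc]
      _ = K⁻¹ * P * (K * K⁻¹) := by simp only [Matrix.mul_assoc]
      _ = _ := by rw [mul_inv' hKu, mul_one]
  have e2 : P * (K⁻¹)ᴴ = (K⁻¹)ᴴ * cpr S := by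
    have := congrArg conjTranspose e1
    rw [conjTranspose_mul, conjTranspose_mul, cpr_star, hP.2.1] at this
    exact this.symm
  have hDQ : ∀ i, cpr S * D i = D i * cpr S := fun i => by
    calc cpr S * D i = (cpr S * K⁻¹) * x i * (K⁻¹)ᴴ := by simp only [D, Matrix.mul_assoc]
      _ = K⁻¹ * (P * x i) * (K⁻¹)ᴴ := by rw [e1]; simp only [Matrix.mul_assoc]
      _ = K⁻¹ * x i * (P * (K⁻¹)ᴴ) := by rw [hc]; simp only [Matrix.mul_assoc]
      _ = _ := by rw [e2]; simp only [D, Matrix.mul_assoc]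
  have hD0 : ∀ i a b, ¬ (a ∈ S ↔ b ∈ S) → D i a b = 0 := fun i a b h => by
    have := congrFun (congrFun (hDQ i) a) b
    rw [cpr_mul, mul_cpr] at this
    by_cases ha : a ∈ S <;> by_cases hb : b ∈ S <;> simp [ha, hb] at h this
    · exact this
    · exact this.symm
  refine ⟨(fun p => T p.1.1 p.1.2, fun i p => (D i p.1.1 p.1.2).re + (D i p.1.1 p.1.2).im), ?_⟩
  ext i : 1
  have f1 : offT S (fun p => T p.1.1 p.1.2) = T := by
    ext a b
    change (if h : a ∉ S ∧ b ∈ S then T a b else 0) = T a b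
    split_ifs with h
    · rfl
    · exact (hT a b h).symm
  have f2 : offL S (fun p => T p.1.1 p.1.2) = T - Tᴴ := by
    change offT S _ - (offT S _)ᴴ = _
    rw [f1]
  have f3 : diaL S (fun p => (D i p.1.1 p.1.2).re + (D i p.1.1 p.1.2).im) = D i := by
    refine Eq.trans ?_ (congrArg Subtype.val (toSk_reim ⟨D i, hDs i⟩))
    refine congrArg (fun M => ((toSk M : sk n) : Mt n)) ?_
    ext a b
    change (if h : a ∈ S ↔ b ∈ S then (D i a b).re + (D i a b).im else 0) = _
    split_ifs with h
    · rfl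
    · simp [hD0 i a b h]
  refine Subtype.ext ?_
  change (skp ((1 + offL S _) * diaL S _ * (1 - offL S _)) : Mt n) = x i
  rw [f2, f3, ← hKs, hx, skp_of_mem (x i).2]

/-- With `a = |S|` and `b = n - a`, the dimension `2ab + r(a² + b²)` of the parameter space is
`2(r - 1)ab ≥ 2(r - 1)(n - 1) ≥ 4` less than `r n²`. -/
theorem par_finrank (hnr : 2 ≤ (r - 1) * (n - 1)) (S : PS n) :
    Module.finrank ℝ (Par r S.1) + 2 < Module.finrank ℝ (Tu n r) := by
  obtain ⟨S, h1, h2⟩ := S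
  refine lt_of_lt_of_le ?_ finrank_tu
  have ha : 1 ≤ S.card := h1.card_pos
  have hb : 1 ≤ Sᶜ.card := by
    rw [Nat.one_le_iff_ne_zero, Ne, Finset.card_eq_zero]
    intro h
    exact h2 (by rwa [Finset.compl_eq_empty_iff] at h)
  have hab : S.card + Sᶜ.card = n := by rw [Finset.card_add_card_compl, Fintype.card_fin]
  have c1 : Fintype.card (Off S) = S.card * Sᶜ.card := by
    rw [Fintype.card_subtype, mul_comm, ← Finset.card_product]
    congr 1
    ext p; simp
  have c2 : Fintype.card (Dia S) = S.card * S.card + Sᶜ.card * Sᶜ.card := by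
    rw [Fintype.card_subtype, ← Finset.card_product, ← Finset.card_product,
      ← Finset.card_union_of_disjoint]
    · congr 1
      ext p
      simp only [Finset.mem_filter, Finset.mem_univ, true_and, Finset.mem_union,
        Finset.mem_product, Finset.mem_compl]
      tauto
    · rw [Finset.disjoint_left]
      intro p
      simp only [Finset.mem_product, Finset.mem_compl]
      tauto
  have c3 : Module.finrank ℝ (Par r S) = Fintype.card (Off S) * 2 + r * Fintype.card (Dia S) := by
    rw [Module.finrank_prod, Module.finrank_pi_fintype, Module.finrank_pi_fintype]
    simp [Complex.finrank_real_complex]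
  rw [c3, c1, c2]
  generalize S.card = a at *
  generalize Sᶜ.card = b at *
  subst hab
  obtain ⟨a, rfl⟩ := Nat.exists_eq_add_of_le' ha
  obtain ⟨b, rfl⟩ := Nat.exists_eq_add_of_le' hb
  rcases r with _ | r
  · simp at hnr
  · have e : a + 1 + (b + 1) - 1 = a + b + 1 := by omega
    rw [e, Nat.add_sub_cancel] at hnr
    have h3 : 2 ≤ r * ((a + 1) * (b + 1)) :=
      hnr.trans (Nat.mul_le_mul_left _ (by nlinarith))
    nlinarith

theorem redTu_closed : IsClosed {x : Tu n r | Red (fun i => (x i : Mt n))} :=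
  red_closed.preimage (f := fun x : Tu n r => fun i => (x i : Mt n)) (by fun_prop)

theorem ps_nonempty (hnr : 2 ≤ (r - 1) * (n - 1)) : Nonempty (PS n) := by
  have hn : 2 ≤ n := by
    by_contra h
    have : n - 1 = 0 := by omega
    rw [this] at hnr; omega
  refine ⟨⟨{⟨0, by omega⟩}, Finset.singleton_nonempty _, fun h => ?_⟩⟩
  have := congrArg Finset.card h
  rw [Finset.card_singleton, Finset.card_univ, Fintype.card_fin] at this
  omega

theorem irr_dense (hnr : 2 ≤ (r - 1) * (n - 1)) :
    Dense {x : Tu n r | Red (fun i => (x i : Mt n))}ᶜ := by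
  have := ps_nonempty hnr
  exact dense_compl_of_range (fun S : PS n => (parF S.1 : Par r S.1 → Tu n r))
    (fun S => parF_contDiff S.1) red_subset (par_finrank hnr)

/-- A ball minus the reducible tuples is simply connected, as the latter have codimension at least
three. -/
theorem ball_simplyConnected (hnr : 2 ≤ (r - 1) * (n - 1)) (A : Tu n r) (ε : ℝ) (hε : 0 < ε) :
    SimplyConnectedSpace ↥(Metric.ball A ε \ {x : Tu n r | Red (fun i => (x i : Mt n))}) := by
  have := ps_nonempty hnr
  exact simplyConnected_of_bad Metric.isOpen_ball (convex_ball A ε) ⟨A, Metric.mem_ball_self hε⟩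
    redTu_closed (irr_dense hnr) fun u v h =>
      bad_null (fun S : PS n => (parF S.1 : Par r S.1 → Tu n r))
        (fun S => parF_contDiff S.1) red_subset (par_finrank hnr) u v h

end Gp

/-! ### Orbits near a point -/

section Orb

open Matrix
open scoped Matrix.Norms.Frobenius

variable {n r : ℕ}

instance tuAddGroup : IsTopologicalAddGroup (Tu n r) :=
  SeminormedAddCommGroup.toIsTopologicalAddGroup

theorem fix_iff (g : Un n) (A : Tu n r) :
    rho g A = A ↔ ∀ i, (g : Mt n) * (A i : Mt n) = A i * g := by
  have e : ∀ i, rho g A i = A i ↔ (g : Mt n) * (A i : Mt n) = A i * g := fun i => by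
    rw [rho_apply, Subtype.ext_iff, rhoS_apply]
    constructor
    · intro h
      conv_rhs => rw [← h]
      rw [Matrix.mul_assoc, un_star_mul, mul_one]
    · intro h
      rw [h, Matrix.mul_assoc, un_mul_star, mul_one]
  constructor
  · intro h i
    exact (e i).1 (congrArg (fun x : Tu n r => x i) h)
  · intro h
    ext i : 1
    exact (e i).2 (h i)

theorem rho_scal (c : Circle) (A : Tu n r) : rho (scal c : Un n) A = A := by
  rw [fix_iff]
  intro i
  rw [scal_coe]; simp

theorem rho_cont_left (A : Tu n r) : Continuous fun g : Un n => rho g A :=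
  Continuous.along_fst rho_continuous

theorem rho_norm_cont (A : Tu n r) : Continuous fun g : Un n => ‖rho g A - A‖ := by
  have h : Continuous fun g : Un n => rho g A - A := (rho_cont_left A).sub continuous_const
  exact continuous_norm.comp h

/-- Elements moving `A` little are close to the stabilizer of `A`. -/
theorem near_stab (A : Tu n r) {N : Set (Un n)} (hN : N ∈ 𝓝 (1 : Un n)) :
    ∃ δ > 0, ∀ g : Un n, ‖rho g A - A‖ < δ → ∃ k ∈ N, ∃ u, rho u A = A ∧ g = k * u := by
  let U : Set (Un n) := ⋃ u ∈ {u : Un n | rho u A = A}, (fun g => g * u⁻¹) ⁻¹' interior N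
  have hU : IsOpen U := isOpen_biUnion fun u _ =>
    isOpen_interior.preimage (by fun_prop)
  have hpos : ∀ g ∈ Uᶜ, 0 < ‖rho g A - A‖ := fun g hg => by
    rw [norm_pos_iff, sub_ne_zero]
    intro h
    refine hg (mem_biUnion (x := g) h ?_)
    rw [mem_preimage, mul_inv_cancel]
    exact mem_interior_iff_mem_nhds.2 hN
  obtain ⟨δ, hδ, h⟩ := hU.isClosed_compl.isCompact.exists_forall_le'
    (f := fun g : Un n => ‖rho g A - A‖)
    (rho_norm_cont A).continuousOn hpos
  refine ⟨δ, hδ, fun g hg => ?_⟩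
  have hgU : g ∈ U := by
    by_contra hg'
    exact absurd (h g hg') (not_le.2 hg)
  obtain ⟨u, hu, hgu⟩ := mem_iUnion₂.1 hgU
  exact ⟨g * u⁻¹, interior_subset hgu, u, hu, by simp⟩

theorem cay_comm_path {A : Tu n r} {X : sk n} (hX : ∀ i, (X : Mt n) * (A i : Mt n) = A i * X) (t : ℝ) :
    rho (cay (t • X)) A = A := by
  rw [fix_iff]
  intro i
  refine (comm_cay ?_).symm
  change (A i : Mt n) * (t • (X : Mt n)) = (t • (X : Mt n)) * A i
  rw [mul_smul_comm, smul_mul_assoc, hX]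

/-- The group element relating two points near `A` is `k u` with `u` fixing `A` and `k` near `1`,
and both factors are joined to the identity along Cayley transforms of lines. For `u` this stays in
the stabilizer of `A`, which acts by isometries fixing `A`. -/
theorem orbCond (A : Tu n r) : OrbCond rho A := by
  intro ε hε
  have hc1 : ContinuousAt (fun Y : sk n => ‖rho (cay Y) A - A‖) 0 :=
    ((rho_norm_cont A).comp cay_continuous).continuousAt
  have h0 : ‖rho (cay (0 : sk n)) A - A‖ = 0 := by rw [cay_zero, map_one]; simp
  obtain ⟨η, hη, hball⟩ := Metric.eventually_nhds_iff_ball.1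
    (hc1.eventually_lt continuousAt_const (by rw [h0]; exact half_pos hε : _ < ε / 2))
  have hu1 : IsUnit (1 + ((1 : Un n) : Mt n)) := by
    have := isUnit_one_add_cay (0 : sk n)
    rwa [cay_zero] at this
  have hc0 : cayi (1 : Un n) = 0 := by rw [← cay_zero, cayi_cay]
  have hN : {k : Un n | IsUnit (1 + (k : Mt n)) ∧ cayi k ∈ Metric.ball (0 : sk n) η} ∈
      𝓝 (1 : Un n) := by
    refine Filter.inter_mem (isOpen_isUnit_one_add.mem_nhds hu1) ?_
    exact cayi_continuousAt hu1 (by rw [hc0]; exact Metric.ball_mem_nhds _ hη)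
  obtain ⟨δ, hδ, hst⟩ := near_stab A hN
  refine ⟨min (δ / 2) (ε / 2), lt_min (half_pos hδ) (half_pos hε), fun B g hB hgB => ?_⟩
  have hgA : ‖rho g A - A‖ < δ := by
    have e : rho g A - A = (rho g B - A) - rho g (B - A) := by rw [map_sub]; abel
    rw [e]
    refine (norm_sub_le _ _).trans_lt ?_
    rw [LinearIsometryEquiv.norm_map]
    linarith [lt_min_iff.1 hB, lt_min_iff.1 hgB, (lt_min_iff.1 hB).1, (lt_min_iff.1 hgB).1]
  obtain ⟨k, ⟨hk1, hk2⟩, u, hu, rfl⟩ := hst g hgA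
  have hBε : ‖B - A‖ < ε / 2 := (lt_min_iff.1 hB).2
  set W : Set (Tu n r) := {w | (∃ h, w = rho h B) ∧ ‖w - A‖ < ε}
  have hfix : ∀ h : Un n, rho h A = A → ∀ C, ‖rho h C - A‖ = ‖C - A‖ := fun h hh C => by
    conv_lhs => rw [← hh]
    rw [← map_sub, LinearIsometryEquiv.norm_map]
  -- rotate by a scalar to bring `u` into the domain of the inverse Cayley transform
  obtain ⟨c, hc⟩ := exists_scal u
  have hX : ∀ i, (cayi (scal c * u) : Mt n) * (A i : Mt n) =
      (A i : Mt n) * (cayi (scal c * u) : Mt n) := fun i => by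
    refine (comm_cayi hc ?_).symm
    have h := (fix_iff u A).1 hu i
    rw [scal_mul_coe, mul_smul_comm, smul_mul_assoc, h]
  have p1 : JoinedIn W B (rho u B) := by
    refine ⟨⟨⟨fun t => rho (cay ((t : ℝ) • cayi (scal c * u))) B, ?_⟩, ?_, ?_⟩, fun t => ⟨⟨_, rfl⟩, ?_⟩⟩
    · refine (rho_cont_left B).comp (cay_continuous.comp ?_)
      fun_prop
    · simp [cay_zero]
    · simp only [Icc.coe_one, one_smul]
      rw [cay_cayi hc, map_mul]
      exact rho_scal c _
    · change ‖rho (cay ((t : ℝ) • cayi (scal c * u))) B - A‖ < ε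
      rw [hfix _ (cay_comm_path hX t)]
      linarith
  have p2 : JoinedIn W (rho u B) (rho (k * u) B) := by
    refine ⟨⟨⟨fun t => rho (cay ((t : ℝ) • cayi k)) (rho u B), ?_⟩, ?_, ?_⟩, fun t => ⟨⟨cay ((t : ℝ) • cayi k) * u, ?_⟩, ?_⟩⟩
    · refine (rho_cont_left _).comp (cay_continuous.comp ?_)
      fun_prop
    · simp [cay_zero]
    · simp only [Icc.coe_one, one_smul]
      rw [cay_cayi hk1, map_mul]; rfl
    · have e : rho (cay ((t : ℝ) • cayi k) * u) B = rho (cay ((t : ℝ) • cayi k)) (rho u B) := by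
        rw [map_mul]; rfl
      exact e.symm
    · change ‖rho (cay ((t : ℝ) • cayi k)) (rho u B) - A‖ < ε
      set h := cay ((t : ℝ) • cayi k) with hh
      have e : rho h (rho u B) - A = rho h (rho u B - A) + (rho h A - A) := by rw [map_sub]; abel
      have h2 : ‖rho h A - A‖ < ε / 2 := by
        refine hball _ ?_
        rw [mem_ball_zero_iff] at hk2 ⊢
        rw [norm_smul, Real.norm_of_nonneg t.2.1]
        exact lt_of_le_of_lt (mul_le_of_le_one_left (norm_nonneg _) t.2.2) hk2
      rw [e]
      refine (norm_add_le _ _).trans_lt ?_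
      rw [LinearIsometryEquiv.norm_map, hfix u hu]
      linarith
  obtain ⟨γ, hγ⟩ := p1.trans p2
  exact ⟨γ, γ.continuous, γ.source, γ.target, fun t => hγ t⟩

end Orb

/-! ### Tangent directions to orbits -/

section Tan

open Matrix
open scoped Matrix.Norms.Frobenius

variable {n r : ℕ}

/-- The first-order condition at an extremum, for a function written as `t * w t`. -/
theorem crit {w : ℝ → ℝ} (hw : ContinuousAt w 0) (h : ∀ t, t * w t ≤ 0) : w 0 = 0 := by
  by_contra hne
  rcases lt_or_gt_of_ne hne with h0 | h0
  · have h1 : ∀ᶠ t in 𝓝[<] (0 : ℝ), w t < 0 ∧ t < 0 :=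
      ((hw.eventually_lt continuousAt_const h0).filter_mono nhdsWithin_le_nhds).and
        self_mem_nhdsWithin
    obtain ⟨t, h2, h3⟩ := h1.exists
    nlinarith [h t, mul_pos_of_neg_of_neg h3 h2]
  · have h1 : ∀ᶠ t in 𝓝[>] (0 : ℝ), 0 < w t ∧ 0 < t :=
      ((continuousAt_const.eventually_lt hw h0).filter_mono nhdsWithin_le_nhds).and
        self_mem_nhdsWithin
    obtain ⟨t, h2, h3⟩ := h1.exists
    nlinarith [h t, mul_pos h3 h2]

/-- First order expansion of the Cayley transform along a line. -/
theorem cay_expand (ζ : sk n) : ∃ W : ℝ → Mt n, ContinuousAt W 0 ∧ W 0 = (2 : ℝ) • (ζ : Mt n) ∧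
    ∀ t : ℝ, (cay (t • ζ) : Mt n) = 1 + t • W t := by
  refine ⟨fun t => (2 : ℝ) • ((ζ : Mt n) * (1 - t • (ζ : Mt n))⁻¹), ?_, ?_, fun t => ?_⟩
  · have h : ContinuousAt (fun t : ℝ => (1 - t • (ζ : Mt n))⁻¹) 0 := by
      refine continuous_inv_of (Continuous.continuousAt (by fun_prop)) ?_
      simp
    exact ContinuousAt.const_smul (c := (2 : ℝ)) (continuousAt_const.mul h)
  · simp
  · have hu := isUnit_one_sub (t • ζ)
    have h1 : (1 - t • (ζ : Mt n)) * (1 - t • (ζ : Mt n))⁻¹ = 1 := mul_inv' hu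
    have h2 : (1 - t • (ζ : Mt n))⁻¹ = 1 + t • ((ζ : Mt n) * (1 - t • (ζ : Mt n))⁻¹) := by
      rw [Matrix.sub_mul, Matrix.one_mul, smul_mul_assoc, sub_eq_iff_eq_add] at h1
      exact h1
    rw [cay_coe]
    change (2 : ℂ) • (1 - t • (ζ : Mt n))⁻¹ - 1 = _
    have h3 : (2 : ℂ) • (1 - t • (ζ : Mt n))⁻¹ = (1 - t • (ζ : Mt n))⁻¹ + (1 - t • (ζ : Mt n))⁻¹ := two_smul _ _
    have h4 : (2 : ℝ) • ((ζ : Mt n) * (1 - t • (ζ : Mt n))⁻¹) =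
        (ζ : Mt n) * (1 - t • (ζ : Mt n))⁻¹ + (ζ : Mt n) * (1 - t • (ζ : Mt n))⁻¹ := two_smul _ _
    simp only [h4, smul_add]
    rw [h3]
    generalize t • ((ζ : Mt n) * (1 - t • (ζ : Mt n))⁻¹) = Q at h2 ⊢
    rw [h2]
    abel

theorem norm_mul_un (X : Mt n) (g : Un n) : ‖X * (g : Mt n)‖ = ‖X‖ := by
  rw [← sq_eq_sq₀ (norm_nonneg _) (norm_nonneg _), ← real_inner_self_eq_norm_sq,
    ← real_inner_self_eq_norm_sq, inner_def, inner_def, conjTranspose_mul, Matrix.mul_assoc,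
    trace_mul_comm, Matrix.mul_assoc, Matrix.mul_assoc, un_mul_star, Matrix.mul_one]

theorem inner_le_of_norm {E : Type*} [NormedAddCommGroup E] [InnerProductSpace ℝ E] {k a b : E}
    (hab : ‖a‖ = ‖b‖) (h : ‖k - a‖ ≤ ‖k - b‖) : inner ℝ k b ≤ inner ℝ k a := by
  have h1 := norm_sub_sq_real k a
  have h2 := norm_sub_sq_real k b
  rw [hab] at h1
  nlinarith [pow_le_pow_left₀ (norm_nonneg _) h 2]

theorem un_norm (g : Un n) : ‖(g : Mt n)‖ = ‖(1 : Mt n)‖ := by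
  rw [← Matrix.one_mul (g : Mt n), norm_mul_un]

/-- If `1` is the point nearest to `k` on the Cayley curve in direction `ζ`, then `k` is orthogonal
to `ζ`. -/
theorem stab_crit {k : Un n} {ζ : sk n}
    (h : ∀ t : ℝ, ‖(k : Mt n) - 1‖ ≤ ‖(k : Mt n) - cay (t • ζ)‖) :
    inner ℝ (k : Mt n) (ζ : Mt n) = 0 := by
  obtain ⟨W, hW, hW0, hc⟩ := cay_expand ζ
  have h1 : inner ℝ (k : Mt n) (W 0) = 0 := by
    refine crit (w := fun t => inner ℝ (k : Mt n) (W t)) (ContinuousAt.inner (𝕜 := ℝ) continuousAt_const hW) fun t => ?_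
    have h2 := inner_le_of_norm (un_norm (cay (t • ζ))).symm (h t)
    rw [hc, inner_add_right, real_inner_smul_right] at h2
    linarith
  rw [hW0, real_inner_smul_right] at h1
  linarith

theorem inner_star (A B : Mt n) : inner ℝ Aᴴ B = inner ℝ A Bᴴ := by
  rw [inner_def, inner_def, conjTranspose_conjTranspose, ← conjTranspose_mul, trace_conjTranspose,
    trace_mul_comm]
  simp

theorem inner_skp (k : Mt n) (ζ : sk n) : inner ℝ (skp k) ζ = inner ℝ k (ζ : Mt n) := by
  have h : inner ℝ kᴴ (ζ : Mt n) = - inner ℝ k (ζ : Mt n) := by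
    rw [inner_star, sk_conj, inner_neg_right]
  change inner ℝ (skp k : Mt n) (ζ : Mt n) = _
  have e : (skp k : Mt n) = (2 : ℝ)⁻¹ • (k - kᴴ) := by
    rw [skp_coe, ← Complex.coe_smul]; norm_num
  rw [e, real_inner_smul_left, inner_sub_left, h]
  ring

/-- The infinitesimal conjugation action at `A`: `X ↦ (X Aᵢ - Aᵢ X)ᵢ`. -/
noncomputable def ad (A : Tu n r) : sk n →ₗ[ℝ] Tu n r where
  toFun X := WithLp.toLp 2 fun i => ⟨(X : Mt n) * (A i : Mt n) - (A i : Mt n) * (X : Mt n), by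
    rw [mem_sk, conjTranspose_sub, conjTranspose_mul, conjTranspose_mul, sk_conj, sk_conj]
    noncomm_ring⟩
  map_add' X Y := by
    ext i : 2
    change ((X : Mt n) + Y) * (A i : Mt n) - (A i : Mt n) * ((X : Mt n) + Y) =
      ((X : Mt n) * (A i : Mt n) - (A i : Mt n) * (X : Mt n)) +
      ((Y : Mt n) * (A i : Mt n) - (A i : Mt n) * (Y : Mt n))
    noncomm_ring
  map_smul' c X := by
    ext i : 2
    change (c • (X : Mt n)) * (A i : Mt n) - (A i : Mt n) * (c • (X : Mt n)) =
      c • ((X : Mt n) * (A i : Mt n) - (A i : Mt n) * (X : Mt n))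
    rw [smul_mul_assoc, mul_smul_comm, smul_sub]

theorem ad_apply (A : Tu n r) (X : sk n) (i : Fin r) :
    (ad A X i : Mt n) = (X : Mt n) * (A i : Mt n) - (A i : Mt n) * (X : Mt n) := rfl

theorem inner_tu (x y : Tu n r) : inner ℝ x y = ∑ i, inner ℝ (x i : Mt n) (y i : Mt n) :=
  PiLp.inner_apply x y

/-- If no point of the orbit of `A` is closer to `B` than `A` is, then `B` is orthogonal to the
infinitesimal orbit directions at `A`. So is `A`, since the orbit lies on a sphere. -/
theorem inner_ad {A B : Tu n r} (hB : ∀ h : Un n, ‖B - A‖ ≤ ‖B - rho h A‖) (ζ : sk n) :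
    inner ℝ B (ad A ζ) = 0 := by
  obtain ⟨W, hW, hW0, hc⟩ := cay_expand ζ
  let w : ℝ → ℝ := fun t => ∑ i, inner ℝ (B i : Mt n)
    (W t * (A i : Mt n) + (A i : Mt n) * (W t)ᴴ + t • (W t * (A i : Mt n) * (W t)ᴴ))
  have hw : ContinuousAt w 0 := by
    refine tendsto_finsetSum _ fun i _ => ?_
    have hW' : ContinuousAt (fun t => (W t)ᴴ) 0 := hW.star
    have h1 : ContinuousAt (fun t => W t * (A i : Mt n)) 0 := hW.mul continuousAt_const
    have h2 : ContinuousAt (fun t => (A i : Mt n) * (W t)ᴴ) 0 := continuousAt_const.mul hW'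
    have h3 : ContinuousAt (fun t : ℝ => t • (W t * (A i : Mt n) * (W t)ᴴ)) 0 :=
      ContinuousAt.smul continuousAt_id (h1.mul hW')
    exact ContinuousAt.inner (𝕜 := ℝ) continuousAt_const ((h1.add h2).add h3)
  have h0 : w 0 = 0 := by
    refine crit hw fun t => ?_
    have h1 := inner_le_of_norm ((rho (cay (t • ζ))).norm_map A).symm (hB (cay (t • ζ)))
    have h2 : inner ℝ B (rho (cay (t • ζ)) A) = inner ℝ B A + t * w t := by
      rw [inner_tu, inner_tu, Finset.mul_sum, ← Finset.sum_add_distrib]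
      refine Finset.sum_congr rfl fun i _ => ?_
      rw [rho_apply, rhoS_apply, hc, ← real_inner_smul_right, ← inner_add_right]
      congr 1
      rw [conjTranspose_add, conjTranspose_one, conjTranspose_smul, star_trivial]
      simp only [Matrix.add_mul, Matrix.mul_add, Matrix.one_mul, Matrix.mul_one, smul_add,
        smul_mul_assoc, mul_smul_comm, Matrix.mul_assoc]
      abel
    linarith
  have h2 : w 0 = 2 * inner ℝ B (ad A ζ) := by
    rw [inner_tu, Finset.mul_sum]
    refine Finset.sum_congr rfl fun i _ => ?_
    rw [ad_apply, hW0, conjTranspose_smul, sk_conj, star_trivial, ← real_inner_smul_right, zero_smul, add_zero,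
      smul_mul_assoc, mul_smul_comm, ← smul_add, Matrix.mul_neg, ← sub_eq_add_neg]
  linarith

/-- A linear map is bounded below on the orthogonal complement of its kernel. -/
theorem ker_bound {E F : Type*} [NormedAddCommGroup E] [InnerProductSpace ℝ E]
    [FiniteDimensional ℝ E] [NormedAddCommGroup F] [NormedSpace ℝ F] (f : E →ₗ[ℝ] F) :
    ∃ c > 0, ∀ s : E, (∀ z, f z = 0 → inner ℝ s z = 0) → ‖s‖ ≤ c * ‖f s‖ := by
  have hk : LinearMap.ker (f.domRestrict (LinearMap.ker f)ᗮ) = ⊥ := by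
    rw [LinearMap.ker_eq_bot']
    rintro ⟨s, hs⟩ h
    have h1 : s ∈ LinearMap.ker f := h
    have h2 := hs s h1
    exact Subtype.ext (inner_self_eq_zero.1 h2)
  obtain ⟨K, hK, h⟩ := LinearMap.exists_antilipschitzWith _ hk
  refine ⟨K, hK, fun s hs => ?_⟩
  have hs' : s ∈ (LinearMap.ker f)ᗮ := fun z hz => by
    rw [real_inner_comm]; exact hs z hz
  have := h.le_mul_dist ⟨s, hs'⟩ 0
  rw [dist_zero_right, map_zero, dist_zero_right] at this
  exact this

theorem tu_norm_le {x : Tu n r} {b : ℝ} (hb : 0 ≤ b) (h : ∀ i, ‖(x i : Mt n)‖ ≤ b) :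
    ‖x‖ ≤ r * b := by
  have h1 : ‖x‖ ^ 2 ≤ r * b ^ 2 := by
    rw [PiLp.norm_sq_eq_of_L2]
    refine (Finset.sum_le_card_nsmul _ _ (b ^ 2) fun i _ => ?_).trans ?_
    · exact pow_le_pow_left₀ (norm_nonneg _) (h i) 2
    · simp
  have h2 : (r : ℝ) ≤ r ^ 2 := by exact_mod_cast Nat.le_self_pow two_ne_zero r
  refine le_of_sq_le_sq ?_ (by positivity)
  nlinarith [mul_le_mul_of_nonneg_right h2 (sq_nonneg b)]

theorem tu_le_norm (x : Tu n r) (i : Fin r) : ‖(x i : Mt n)‖ ≤ ‖x‖ := PiLp.norm_apply_le x i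

set_option maxHeartbeats 1000000 in
/-- Orbits are uniformly second-order close to their infinitesimal directions: writing
`g = k u` with `u` the element of the stabilizer of `A` nearest to `g`, the skew-Hermitian part
of `k` is orthogonal to the Lie algebra of the stabilizer, hence controlled by `rho g A - A`. -/
theorem tangentCond (A : Tu n r) : TangentCond rho A := by
  obtain ⟨c, hc, hker⟩ := ker_bound (ad A)
  set K : ℝ := ‖A‖ with hK
  have hK0 : 0 ≤ K := norm_nonneg _
  clear_value K
  have hr0 : (0 : ℝ) ≤ r := Nat.cast_nonneg r
  set η₀ : ℝ := 1 / (2 * (c * r * K + 1)) with hη₀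
  have hη₀0 : 0 < η₀ := by positivity
  have hη₀1 : (c * r * K + 1) * η₀ = 1 / 2 := by
    rw [hη₀]; field_simp
  clear_value η₀
  have hN : {k : Un n | ‖(k : Mt n) - 1‖ < η₀} ∈ 𝓝 (1 : Un n) := by
    refine IsOpen.mem_nhds (isOpen_lt (by fun_prop) continuous_const) ?_
    simpa using hη₀0
  obtain ⟨δ, hδ, hst⟩ := near_stab A hN
  refine ⟨3 * r * K * (2 * c * r) ^ 2 + 1, by positivity, δ, hδ, fun g hg => ?_⟩
  obtain ⟨k₁, hk₁, u, hu, hgu⟩ := hst g hg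
  -- `u₀` is the element of the stabilizer of `A` nearest to `g`, and `g = k * u₀`
  have hcl : IsCompact {u : Un n | rho u A = A} :=
    (isClosed_eq (rho_cont_left A) continuous_const).isCompact
  obtain ⟨u₀, hu₀, hmin⟩ := hcl.exists_isMinOn ⟨u, hu⟩
    (f := fun u : Un n => ‖(g : Mt n) - u‖) (Continuous.continuousOn (by fun_prop))
  obtain ⟨k, rfl⟩ : ∃ k, g = k * u₀ := ⟨g * u₀⁻¹, by simp⟩
  have hfac : ∀ v w : Un n, ‖((v * u₀ : Un n) : Mt n) - ((w * u₀ : Un n) : Mt n)‖ =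
      ‖(v : Mt n) - w‖ := fun v w => by
    change ‖(v : Mt n) * (u₀ : Mt n) - (w : Mt n) * (u₀ : Mt n)‖ = _
    rw [← Matrix.sub_mul, norm_mul_un]
  have hmin' : ∀ w : Un n, rho w A = A → ‖(k : Mt n) - 1‖ ≤ ‖(k : Mt n) - w‖ := fun w hw => by
    have h1 : rho (w * u₀) A = A := by
      rw [rho_mul]
      exact (congrArg (rho w) hu₀).trans hw
    have h2 : ‖((k * u₀ : Un n) : Mt n) - u₀‖ ≤ ‖((k * u₀ : Un n) : Mt n) - (w * u₀ : Un n)‖ :=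
      hmin h1
    have h3 := hfac k 1
    rw [one_mul] at h3
    rw [hfac, h3] at h2
    exact h2
  set η : Mt n := (k : Mt n) - 1 with hη
  have hη1 : ‖η‖ < η₀ := by
    have h2 : ‖((k * u₀ : Un n) : Mt n) - u₀‖ ≤ ‖((k * u₀ : Un n) : Mt n) - u‖ := hmin hu
    have h3 := hfac k 1
    rw [one_mul] at h3
    rw [h3, hgu] at h2
    refine lt_of_le_of_lt (h2.trans_eq ?_) hk₁
    change ‖(k₁ : Mt n) * (u : Mt n) - (u : Mt n)‖ = _
    rw [← norm_mul_un ((k₁ : Mt n) - 1) u, Matrix.sub_mul, Matrix.one_mul]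
  have hgA : rho (k * u₀) A = rho k A := by
    rw [rho_mul]
    exact congrArg (rho k) hu₀
  rw [hgA]
  set D : ℝ := ‖rho k A - A‖ with hD
  have hD0 : 0 ≤ D := norm_nonneg _
  set s : sk n := skp (k : Mt n) with hs
  set κ : Mt n := (2 : ℝ)⁻¹ • (η * ηᴴ) with hκ
  clear_value κ s D η
  have hkη : (k : Mt n) = 1 + η := by rw [hη]; abel
  have hkH : (k : Mt n)ᴴ = 1 + ηᴴ := by rw [hkη, conjTranspose_add, conjTranspose_one]
  have hrel : η + ηᴴ + η * ηᴴ = 0 := by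
    have h1 := un_mul_star k
    rw [hkH, hkη, Matrix.add_mul, Matrix.mul_add, Matrix.one_mul, Matrix.one_mul, Matrix.mul_add,
      Matrix.mul_one] at h1
    have h2 : (1 : Mt n) + (η + ηᴴ + η * ηᴴ) = 1 + 0 := by
      rw [add_zero]
      exact Eq.trans (by abel) h1
    exact add_left_cancel h2
  have hsη : η = (s : Mt n) - κ := by
    have e : (s : Mt n) = (2 : ℝ)⁻¹ • (η - ηᴴ) := by
      rw [hs, skp_coe, hkH, hkη, ← Complex.coe_smul]
      norm_num
    have h1 : η * ηᴴ = - (η + ηᴴ) := by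
      rw [eq_neg_iff_add_eq_zero, ← hrel]; abel
    rw [e, hκ, h1]
    module
  have hκn : ‖κ‖ ≤ ‖η‖ ^ 2 / 2 := by
    rw [hκ, norm_smul]
    have h1 := frobenius_norm_mul η ηᴴ
    rw [frobenius_norm_conjTranspose] at h1
    norm_num
    nlinarith
  have hA : ∀ i, ‖(A i : Mt n)‖ ≤ K := fun i =>
    (tu_le_norm A i).trans_eq hK.symm
  have hbr : ∀ (X : Mt n) i, ‖X * (A i : Mt n) - (A i : Mt n) * X‖ ≤ 2 * K * ‖X‖ := fun X i => by
    refine (norm_sub_le _ _).trans ?_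
    nlinarith [frobenius_norm_mul X (A i : Mt n), frobenius_norm_mul (A i : Mt n) X,
      mul_le_mul_of_nonneg_left (hA i) (norm_nonneg X)]
  have hd : ∀ i, ((rho k A - A) i : Mt n) = (η * (A i : Mt n) - (A i : Mt n) * η) * (k : Mt n)ᴴ :=
    fun i => by
    change (k : Mt n) * (A i : Mt n) * (k : Mt n)ᴴ - (A i : Mt n) = _
    have h1 : (A i : Mt n) = (A i : Mt n) * ((k : Mt n) * (k : Mt n)ᴴ) := by
      rw [un_mul_star, Matrix.mul_one]
    nth_rewrite 2 [h1]
    rw [← Matrix.mul_assoc, ← Matrix.sub_mul]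
    congr 1
    rw [hkη]
    noncomm_ring
  have hdn : ∀ i, ‖η * (A i : Mt n) - (A i : Mt n) * η‖ ≤ D := fun i => by
    have h1 := tu_le_norm (rho k A - A) i
    rw [hd, ← un_inv, norm_mul_un] at h1
    exact h1.trans_eq hD.symm
  have hadi : ∀ i, ‖(ad A s i : Mt n)‖ ≤ D + K * ‖η‖ ^ 2 := fun i => by
    have h1 : (ad A s i : Mt n) = (η * (A i : Mt n) - (A i : Mt n) * η) +
        (κ * (A i : Mt n) - (A i : Mt n) * κ) := by
      rw [ad_apply]
      have : (s : Mt n) = η + κ := by rw [hsη]; abel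
      rw [this]
      noncomm_ring
    rw [h1]
    refine (norm_add_le _ _).trans ?_
    nlinarith [hdn i, hbr κ i, mul_le_mul_of_nonneg_left hκn hK0]
  have horth : ∀ z : sk n, ad A z = 0 → inner ℝ s z = 0 := fun z hz => by
    rw [hs, inner_skp]
    refine stab_crit fun t => hη ▸ hmin' _ (cay_comm_path (fun i => ?_) t)
    have h1 : (ad A z i : Mt n) = 0 := by rw [hz]; rfl
    rwa [ad_apply, sub_eq_zero] at h1
  have hb : 0 ≤ D + K * ‖η‖ ^ 2 := add_nonneg hD0 (mul_nonneg hK0 (sq_nonneg _))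
  have hsn : ‖s‖ ≤ c * (r * (D + K * ‖η‖ ^ 2)) :=
    (hker s horth).trans (mul_le_mul_of_nonneg_left (tu_norm_le hb hadi) hc.le)
  have hηD : ‖η‖ ≤ 2 * c * r * D := by
    have h1 : ‖η‖ ≤ ‖s‖ + ‖κ‖ := by
      conv_lhs => rw [hsη]
      exact norm_sub_le _ _
    have h2 : (c * r * K + 1) * ‖η‖ ≤ 1 / 2 :=
      (mul_le_mul_of_nonneg_left hη1.le (by positivity)).trans_eq hη₀1
    have h3 := mul_le_mul_of_nonneg_right h2 (norm_nonneg η)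
    nlinarith [sq_nonneg ‖η‖]
  refine ⟨ad A s, ?_, fun B hB => ?_⟩
  · have h1 : ∀ i, ‖((rho k A - A - ad A s) i : Mt n)‖ ≤ 3 * K * ‖η‖ ^ 2 := fun i => by
      have h2 : ((rho k A - A - ad A s) i : Mt n) =
          (η * (A i : Mt n) - (A i : Mt n) * η) * ηᴴ - (κ * (A i : Mt n) - (A i : Mt n) * κ) := by
        change ((rho k A - A) i : Mt n) - (ad A s i : Mt n) = _
        rw [hd, ad_apply, hkH]
        have : (s : Mt n) = η + κ := by rw [hsη]; abel
        rw [this]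
        noncomm_ring
      rw [h2]
      refine (norm_sub_le _ _).trans ?_
      have h3 := frobenius_norm_mul (η * (A i : Mt n) - (A i : Mt n) * η) ηᴴ
      rw [frobenius_norm_conjTranspose] at h3
      nlinarith [hbr κ i, mul_le_mul_of_nonneg_left hκn hK0,
        mul_le_mul_of_nonneg_right (hbr η i) (norm_nonneg η)]
    refine (tu_norm_le (by positivity) h1).trans ?_
    have h2 := pow_le_pow_left₀ (norm_nonneg η) hηD 2
    have h3 : r * (3 * K * ‖η‖ ^ 2) ≤ r * (3 * K * (2 * c * r * D) ^ 2) := by gcongr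
    nlinarith [sq_nonneg D]
  · rw [inner_sub_left, inner_ad hB s, inner_ad (B := A) (fun h => by simp) s, sub_zero]

end Tan

/-! ### The irreducible locus -/

section Fin

open Matrix
open scoped Matrix.Norms.Frobenius

variable {n r : ℕ}

/-- The charts cover the character variety. -/
theorem exists_qc (x : CharVarU n r) : ∃ (c : Fin r → Circle) (A : Tu n r), qc c A = x := by
  obtain ⟨k, rfl⟩ := quo_open.surjective x
  obtain ⟨c, A, rfl⟩ := exists_chart k
  exact ⟨c, A, rfl⟩

theorem charVar_lc : LC (CharVarU n r) := by
  intro x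
  obtain ⟨c, A, rfl⟩ := exists_qc x
  exact lc_at (V := Tu n r) (G := Un n) rho rho_continuous A (tangentCond A) (qc c) (qc_continuous c) (qc_open c) (qc_eq c)

theorem qc_preimage (c : Fin r → Circle) :
    (qc c ⁻¹' irrLocusU n r : Set (Tu n r)) = {x | Red (fun i => (x i : Mt n))}ᶜ :=
  Set.ext fun x => qc_mem c x

theorem irr_lf (hnr : 2 ≤ (r - 1) * (n - 1)) (k : ℕ) (hk : k ≤ 2) : LF (irrLocusU n r) k := by
  have gp : ∀ (c : Fin r → Circle) (A : Tu n r), ∀ ε > 0,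
      SimplyConnectedSpace ↥(Metric.ball A ε \ (qc c ⁻¹' irrLocusU n r)ᶜ) := fun c A ε hε => by
    rw [qc_preimage, compl_compl]
    exact ball_simplyConnected hnr A ε hε
  interval_cases k
  · refine LF.of_dense fun x => ?_
    obtain ⟨c, A, rfl⟩ := exists_qc x
    exact lf0_at (qc_continuous c) (by rw [qc_preimage]; exact irr_dense hnr) A
  · refine LF.of_joinedIn fun x => ?_
    obtain ⟨c, A, rfl⟩ := exists_qc x
    exact lf1_at (qc_continuous c) (qc_open c) A (gp c A)
  · refine LF.of_hin fun x => ?_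
    obtain ⟨c, A, rfl⟩ := exists_qc x
    exact lf2_at (V := Tu n r) (G := Un n) rho (qc_continuous c) (qc_open c) (qc_eq c) irrLocus_open A (gp c A) (orbCond A)
      (charVar_lc.lf 2)

end Fin

end UCV

/-- Suppose `(r−1)(n−1) ≥ 2`.  Then the inclusion `X_r(U(n))^{irr} ↪ X_r(U(n))` is a
`2`-connected map: it induces a bijection on path components, an isomorphism on fundamental
groups at every basepoint in the irreducible locus, and a surjection on second homotopy
groups at every such basepoint. -/
theorem irrInclusion_unitary_two_connected (n r : ℕ) (h : 2 ≤ (r - 1) * (n - 1)) :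
    Function.Bijective (ZerothHomotopy.map (irrInclusionU n r)) ∧
    (∀ a : ↥(irrLocusU n r),
      Function.Bijective (HomotopyGroup.map (Fin 1) (irrInclusionU n r) a)) ∧
    (∀ a : ↥(irrLocusU n r),
      Function.Surjective (HomotopyGroup.map (Fin 2) (irrInclusionU n r) a)) := by
  exact UCV.two_connected (fun k _ => UCV.charVar_lc.lf k) (fun k hk => UCV.irr_lf h k hk)
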